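/- arXiv:0812.1318 — 14 statements merged into one kernel-verified Lean document; each statement's English description precedes it below -/
import Mathlib

section
/- Fix an integer k ≥ 0 and set k̄ = k+2. For all (a,c), (a',c'), (α,γ) ∈ Q_k (with c, c', γ represented by integers), the Verlinde sum N_{ac;a'c'}^{αγ} := Σ_{(d,f)∈Q_k} S_{a,c;d,f}·S_{a',c';d,f}·conj(S_{α,γ;d,f}) / S_{0,0;d,f} satisfies: (i) if [a+c]·[a'+c'] = 0 then N_{ac;a'c'}^{αγ} = N^{su2}(α; a,a')·δ(c+c' ≡ γ mod 2k̄); (ii) if [a+c]·[a'+c'] = 1 then N_{ac;a'c'}^{αγ} = N^{su2}(k−α; a,a')·δ(c+c' ≡ γ+k̄ mod 2k̄). Here δ(cond) = 1 if the condition holds and 0 otherwise. -/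
/-- Parity `[x] ∈ {0,1}` of an integer. -/
def par (x : ℤ) : ℤ := x % 2

/-- The level-`k` su(2) S-matrix. -/
noncomputable def Ssu2 (k : ℕ) (a a' : ℤ) : ℂ :=
  ((Real.sqrt (2 / ((k : ℝ) + 2)) *
      Real.sin (Real.pi * ((a : ℝ) + 1) * ((a' : ℝ) + 1) / ((k : ℝ) + 2)) : ℝ) : ℂ)

/-- The level-`l` u(1) S-matrix. -/
noncomputable def Su1 (l : ℕ) (c c' : ℤ) : ℂ :=
  ((1 / Real.sqrt (2 * (l : ℝ)) : ℝ) : ℂ) *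
    Complex.exp (-(Real.pi : ℂ) * Complex.I * (c : ℂ) * (c' : ℂ) / (l : ℂ))

/-- The N=2 minimal model S-matrix at level `k`. -/
noncomputable def Smin (k : ℕ) (a c a' c' : ℤ) : ℂ :=
  2 * Ssu2 k a a' * Su1 2 (par (a + c)) (par (a' + c')) *
    (starRingEnd ℂ) (Su1 (k + 2) c c')

/-- The su(2) level-`k` fusion number `N^{su2}(l; a, a')`, as a complex number. -/
noncomputable def Nsu2 (k : ℕ) (l a a' : ℤ) : ℂ :=
  if |a - a'| ≤ l ∧ l ≤ min (a + a') (2 * (k : ℤ) - a - a') ∧ (a + a' + l) % 2 = 0 then 1 else 0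

/-- Unnormalised sine kernel. -/
noncomputable def sn (k : ℕ) (m n : ℤ) : ℝ := Real.sin (Real.pi * m * n / ((k : ℝ) + 2))

/-- Unnormalised exponential kernel. -/
noncomputable def ek (k : ℕ) (j n : ℤ) : ℂ :=
  Complex.exp ((Real.pi : ℂ) * Complex.I * (j : ℂ) * (n : ℂ) / ((k : ℂ) + 2))

/-- Phase. -/
noncomputable def ph (p e : ℤ) : ℂ := if p = 1 ∧ e = 1 then -Complex.I else 1

lemma kne (k : ℕ) : ((k : ℂ) + 2) ≠ 0 := by
  have : ((k + 2 : ℕ) : ℂ) ≠ 0 := by exact_mod_cast (by omega : k + 2 ≠ 0)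
  simpa using this

lemma knr (k : ℕ) : ((k : ℝ) + 2) ≠ 0 := by positivity

lemma ek_sum (k : ℕ) (j : ℤ) :
    ∑ f ∈ Finset.range (2 * (k + 2)), ek k j (f : ℤ)
      = if (2 * ((k : ℤ) + 2)) ∣ j then 2 * ((k : ℂ) + 2) else 0 := by
  have hk := kne k
  have hpi : (Real.pi : ℂ) ≠ 0 := by exact_mod_cast Real.pi_ne_zero
  have h1 : ∀ f : ℕ, ek k j (f : ℤ) = (ek k j 1) ^ f := by
    intro f
    unfold ek
    rw [← Complex.exp_nat_mul]
    congr 1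
    push_cast
    ring
  have h2 : (ek k j 1) ^ (2 * (k + 2)) = 1 := by
    unfold ek
    rw [← Complex.exp_nat_mul, Complex.exp_eq_one_iff]
    refine ⟨j, ?_⟩
    push_cast
    field_simp
  have h3 : ek k j 1 = 1 ↔ (2 * ((k : ℤ) + 2)) ∣ j := by
    unfold ek
    rw [Complex.exp_eq_one_iff]
    constructor
    · rintro ⟨n, hn⟩
      refine ⟨n, ?_⟩
      have : (j : ℂ) = 2 * ((k : ℂ) + 2) * n := by
        field_simp at hn
        push_cast at hn
        linear_combination hn
      exact_mod_cast this
    · rintro ⟨n, rfl⟩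
      refine ⟨n, ?_⟩
      push_cast
      field_simp
  simp_rw [h1]
  split_ifs with h
  · rw [h3.2 h]; simp
  · rw [geom_sum_eq (fun e => h (h3.1 e)), h2]; simp

lemma sn_ek (k : ℕ) (m l n : ℤ) :
    ((sn k m n * sn k l n : ℝ) : ℂ)
      = (ek k (m - l) n + ek k (l - m) n - ek k (m + l) n - ek k (-(m + l)) n) / 4 := by
  have e : ∀ x y : ℂ, Complex.sin x * Complex.sin y =
      (Complex.exp ((x - y) * Complex.I) + Complex.exp ((y - x) * Complex.I)
        - Complex.exp ((x + y) * Complex.I) - Complex.exp (-(x + y) * Complex.I)) / 4 := by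
    intro x y
    simp only [Complex.sin, add_mul, neg_mul, neg_add, Complex.exp_add, sub_eq_add_neg]
    linear_combination ((Complex.exp (-(x * Complex.I)) - Complex.exp (x * Complex.I)) *
      (Complex.exp (-(y * Complex.I)) - Complex.exp (y * Complex.I)) / 4) * Complex.I_sq
  unfold sn ek
  push_cast
  rw [e]
  congr 1
  congr 1
  · congr 1
    · congr 1 <;> · congr 1; ring
    · congr 1; ring
  · congr 1; ring

lemma full_sum (k : ℕ) (m l : ℤ) :
    ∑ n ∈ Finset.range (2 * (k + 2)), sn k m (n : ℤ) * sn k l (n : ℤ)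
      = ((k : ℝ) + 2) * ((if (2 * ((k : ℤ) + 2)) ∣ m - l then 1 else 0)
          - (if (2 * ((k : ℤ) + 2)) ∣ m + l then 1 else 0)) := by
  have h1 : (2 * ((k : ℤ) + 2)) ∣ l - m ↔ (2 * ((k : ℤ) + 2)) ∣ m - l := dvd_sub_comm
  have h : ((∑ n ∈ Finset.range (2 * (k + 2)), sn k m (n : ℤ) * sn k l (n : ℤ) : ℝ) : ℂ)
      = ((((k : ℝ) + 2) * ((if (2 * ((k : ℤ) + 2)) ∣ m - l then 1 else 0)
          - (if (2 * ((k : ℤ) + 2)) ∣ m + l then 1 else 0)) : ℝ) : ℂ) := by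
    rw [Complex.ofReal_sum]
    simp_rw [sn_ek]
    rw [← Finset.sum_div, Finset.sum_sub_distrib, Finset.sum_sub_distrib, Finset.sum_add_distrib]
    simp only [ek_sum, h1, dvd_neg]
    split_ifs <;> push_cast <;> ring
  exact_mod_cast h

lemma sn_zero (k : ℕ) (m : ℤ) : sn k m 0 = 0 := by simp [sn]

lemma sn_K (k : ℕ) (m : ℤ) : sn k m ((k : ℤ) + 2) = 0 := by
  unfold sn
  have := knr k
  rw [show Real.pi * (m : ℝ) * (((k : ℤ) + 2 : ℤ) : ℝ) / ((k : ℝ) + 2) = m * Real.pi by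
    push_cast; field_simp]
  exact Real.sin_int_mul_pi m

lemma sn_refl (k : ℕ) (m n : ℤ) : sn k m (2 * ((k : ℤ) + 2) - n) = - sn k m n := by
  unfold sn
  have := knr k
  rw [show Real.pi * (m : ℝ) * ((2 * ((k : ℤ) + 2) - n : ℤ) : ℝ) / ((k : ℝ) + 2)
    = m * (2 * Real.pi) - Real.pi * m * n / ((k : ℝ) + 2) by push_cast; field_simp]
  exact Real.sin_int_mul_two_pi_sub _ m

lemma half_sum (k : ℕ) (m l : ℤ) :
    ∑ d ∈ Finset.range (k + 1), sn k m ((d : ℤ) + 1) * sn k l ((d : ℤ) + 1)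
      = ((k : ℝ) + 2) / 2 * ((if (2 * ((k : ℤ) + 2)) ∣ m - l then 1 else 0)
          - (if (2 * ((k : ℤ) + 2)) ∣ m + l then 1 else 0)) := by
  have h := full_sum k m l
  rw [show 2 * (k + 2) = (k + 1 + 1) + (k + 1 + 1) by ring, Finset.sum_range_add,
    Finset.sum_range_succ' _ (k + 1), Finset.sum_range_succ' _ (k + 1)] at h
  rw [← Finset.sum_range_reflect (fun x => sn k m ((k + 1 + 1 + (x + 1) : ℕ) : ℤ) * _) (k + 1)] at h
  have e1 : ∀ d ∈ Finset.range (k + 1), sn k m ((k + 1 + 1 + (k + 1 - 1 - d + 1) : ℕ) : ℤ) *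
      sn k l ((k + 1 + 1 + (k + 1 - 1 - d + 1) : ℕ) : ℤ)
      = sn k m ((d : ℤ) + 1) * sn k l ((d : ℤ) + 1) := by
    intro d hd
    rw [Finset.mem_range] at hd
    rw [show ((k + 1 + 1 + (k + 1 - 1 - d + 1) : ℕ) : ℤ) = 2 * ((k : ℤ) + 2) - ((d : ℤ) + 1) by
      omega, sn_refl, sn_refl]
    ring
  rw [Finset.sum_congr rfl e1] at h
  have e2 : ((k + 1 + 1 + 0 : ℕ) : ℤ) = (k : ℤ) + 2 := by push_cast; ring
  rw [e2, sn_K] at h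
  simp only [Nat.cast_zero, sn_zero] at h
  push_cast at h
  linarith

lemma sn_telescope (θ x : ℝ) (n : ℕ) :
    Real.sin θ * ∑ i ∈ Finset.range n, Real.sin (x + 2 * i * θ)
      = Real.sin (n * θ) * Real.sin (x + (n - 1) * θ) := by
  have key : ∀ u v : ℝ, Real.sin u * Real.sin v = (Real.cos (u - v) - Real.cos (u + v)) / 2 := by
    intro u v; rw [Real.cos_sub, Real.cos_add]; ring
  induction n with
  | zero => simp
  | succ n ih =>
    rw [Finset.sum_range_succ, mul_add, ih, key, key, key]
    push_cast
    rw [show (n : ℝ) * θ - (x + (n - 1) * θ) = θ - x by ring,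
      show (n : ℝ) * θ + (x + (n - 1) * θ) = x + 2 * n * θ - θ by ring,
      show θ - (x + 2 * n * θ) = -(x + 2 * n * θ - θ) by ring, Real.cos_neg,
      show (n + 1 : ℝ) * θ - (x + (n + 1 - 1) * θ) = θ - x by ring,
      show (n + 1 : ℝ) * θ + (x + (n + 1 - 1) * θ) = θ + (x + 2 * n * θ) by ring]
    ring

lemma sn_one_ne (k d : ℕ) (hd : d < k + 1) : sn k 1 ((d : ℤ) + 1) ≠ 0 := by
  unfold sn
  apply ne_of_gt
  have hd' : (d : ℝ) + 1 < k + 2 := by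
    have : (d : ℝ) < ((k + 1 : ℕ) : ℝ) := by exact_mod_cast hd
    push_cast at this; linarith
  have hp := Real.pi_pos
  push_cast
  apply Real.sin_pos_of_pos_of_lt_pi
  · positivity
  · rw [div_lt_iff₀ (by positivity)]
    nlinarith

lemma ite_sum_one (n : ℕ) (P : ℕ → Prop) [DecidablePred P] (Q : Prop) [Decidable Q]
    (hu : ∀ i j, P i → P j → i = j) (hQ : Q ↔ ∃ i, i < n ∧ P i) :
    ∑ i ∈ Finset.range n, (if P i then (1 : ℝ) else 0) = if Q then 1 else 0 := by
  split_ifs with h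
  · obtain ⟨i, hi, hp⟩ := hQ.1 h
    rw [Finset.sum_eq_single i]
    · simp [hp]
    · intro b _ hb
      rw [if_neg]
      exact fun hb' => hb (hu _ _ hb' hp)
    · intro h'; exact absurd (Finset.mem_range.2 hi) h'
  · apply Finset.sum_eq_zero
    intro i hi
    rw [if_neg]
    exact fun hp => h (hQ.2 ⟨i, Finset.mem_range.1 hi, hp⟩)

lemma dvd_small (M x : ℤ) (h1 : -M < x) (h2 : x < M) : M ∣ x ↔ x = 0 := by
  constructor
  · intro h
    exact Int.eq_zero_of_abs_lt_dvd h (abs_lt.2 ⟨h1, h2⟩)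
  · rintro rfl; simp

lemma dvd_small' (M x : ℤ) (h1 : 0 < x) (h2 : x < 2 * M) : M ∣ x ↔ x = M := by
  constructor
  · intro h
    have : M ∣ x - M := (dvd_sub_self_right).2 h
    have := (dvd_small M (x - M) (by linarith) (by linarith)).1 this
    linarith
  · rintro rfl; simp

lemma su2_aux (k a a' l : ℕ) (ha : a ≤ k) (haa : a' ≤ a) (hl : l ≤ k) :
    ((∑ d ∈ Finset.range (k + 1), 2 / ((k : ℝ) + 2) * (sn k (a + 1) ((d : ℤ) + 1)
      * sn k (a' + 1) ((d : ℤ) + 1) * sn k (l + 1) ((d : ℤ) + 1) / sn k 1 ((d : ℤ) + 1)) : ℝ) : ℂ)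
      = Nsu2 k l a a' := by
  have hk := knr k
  have e : ∀ d ∈ Finset.range (k + 1), 2 / ((k : ℝ) + 2) * (sn k (a + 1) ((d : ℤ) + 1)
      * sn k (a' + 1) ((d : ℤ) + 1) * sn k (l + 1) ((d : ℤ) + 1) / sn k 1 ((d : ℤ) + 1))
      = ∑ i ∈ Finset.range (a' + 1), 2 / ((k : ℝ) + 2) *
        (sn k ((a : ℤ) - a' + 1 + 2 * i) ((d : ℤ) + 1) * sn k (l + 1) ((d : ℤ) + 1)) := by
    intro d hd
    have h0 := sn_one_ne k d (Finset.mem_range.1 hd)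
    have ht := sn_telescope (Real.pi * 1 * (d + 1) / ((k : ℝ) + 2))
      (Real.pi * (a - a' + 1) * (d + 1) / ((k : ℝ) + 2)) (a' + 1)
    have ht' : sn k 1 ((d : ℤ) + 1) * ∑ i ∈ Finset.range (a' + 1),
        sn k ((a : ℤ) - a' + 1 + 2 * i) ((d : ℤ) + 1)
        = sn k (a' + 1) ((d : ℤ) + 1) * sn k (a + 1) ((d : ℤ) + 1) := by
      unfold sn
      push_cast at ht ⊢
      convert ht using 2
      · apply Finset.sum_congr rfl
        intro i _
        congr 1; ring
      · congr 1; ring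
      · congr 1; ring
    rw [← Finset.mul_sum, ← Finset.sum_mul, mul_comm (sn k (a + 1) _), ← ht']
    field_simp
  rw [Finset.sum_congr rfl e, Finset.sum_comm]
  have e2 : ∀ i ∈ Finset.range (a' + 1), ∑ d ∈ Finset.range (k + 1), 2 / ((k : ℝ) + 2) *
        (sn k ((a : ℤ) - a' + 1 + 2 * i) ((d : ℤ) + 1) * sn k (l + 1) ((d : ℤ) + 1))
      = (if (a : ℤ) - a' + 2 * i = l then 1 else 0)
        - (if (a : ℤ) - a' + 2 * i + l = 2 * k + 2 then 1 else 0) := by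
    intro i hi
    rw [Finset.mem_range] at hi
    rw [← Finset.mul_sum, half_sum, ← mul_assoc, show 2 / ((k : ℝ) + 2) * (((k : ℝ) + 2) / 2) = 1 by
      field_simp, one_mul]
    simp only [dvd_small (2 * ((k : ℤ) + 2)) ((a : ℤ) - a' + 1 + 2 * i - (l + 1)) (by omega) (by omega),
      dvd_small' (2 * ((k : ℤ) + 2)) ((a : ℤ) - a' + 1 + 2 * i + (l + 1)) (by omega) (by omega)]
    congr 1
    · apply if_congr _ rfl rfl
      constructor <;> intro h <;> omega
    · apply if_congr _ rfl rfl
      constructor <;> intro h <;> omega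
  rw [Finset.sum_congr rfl e2, Finset.sum_sub_distrib]
  rw [ite_sum_one _ _ ((a : ℤ) - a' ≤ l ∧ l ≤ (a : ℤ) + a' ∧ ((a : ℤ) + a' + l) % 2 = 0)
      (by intros; omega) ?_,
    ite_sum_one _ _ ((a : ℤ) + a' + l ≥ 2 * k + 2 ∧ ((a : ℤ) + a' + l) % 2 = 0)
      (by intros; omega) ?_]
  · unfold Nsu2
    rw [abs_of_nonneg (by omega)]
    simp only [le_min_iff]
    split_ifs <;> first | (exfalso; omega) | simp
  · constructor
    · intro h
      exact ⟨((2 * k + 2 - l - a + a' : ℤ) / 2).toNat, by omega, by omega⟩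
    · rintro ⟨i, hi, h⟩; omega
  · constructor
    · intro h
      exact ⟨((l - a + a' : ℤ) / 2).toNat, by omega, by omega⟩
    · rintro ⟨i, hi, h⟩; omega

lemma su2_sum (k a a' l : ℕ) (ha : a ≤ k) (ha' : a' ≤ k) (hl : l ≤ k) :
    ∑ d ∈ Finset.range (k + 1), 2 / ((k : ℂ) + 2) * (sn k (a + 1) ((d : ℤ) + 1)
      * sn k (a' + 1) ((d : ℤ) + 1) * sn k (l + 1) ((d : ℤ) + 1) / sn k 1 ((d : ℤ) + 1) : ℂ)
      = Nsu2 k l a a' := by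
  rcases le_total a' a with h | h
  · rw [← su2_aux k a a' l ha h hl]
    push_cast
    rfl
  · have : Nsu2 k l a a' = Nsu2 k l a' a := by
      unfold Nsu2
      rw [abs_sub_comm, add_comm (a : ℤ) a', sub_right_comm]
    rw [this, ← su2_aux k a' a l ha' h hl]
    push_cast
    apply Finset.sum_congr rfl
    intro d _
    rw [mul_comm (sn k (a + 1) _ : ℂ)]

lemma Smin_eq (k : ℕ) (a c d f : ℤ) :
    Smin k a c d f = (Real.sqrt (2 / ((k : ℝ) + 2)) : ℝ) * ((1 / Real.sqrt (2 * ((k : ℝ) + 2)) : ℝ) : ℂ)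
      * (sn k (a + 1) (d + 1) : ℂ) * ph (par (a + c)) (par (d + f)) * ek k c f := by
  have h1 : Su1 2 (par (a + c)) (par (d + f)) = 1 / 2 * ph (par (a + c)) (par (d + f)) := by
    unfold Su1 ph
    have hs : Real.sqrt (2 * ((2 : ℕ) : ℝ)) = 2 := by
      rw [show (2 * ((2 : ℕ) : ℝ)) = 2 ^ 2 by norm_num]
      exact Real.sqrt_sq (by norm_num)
    rw [hs]
    have hp : par (a + c) = 0 ∨ par (a + c) = 1 := by unfold par; omega
    have he : par (d + f) = 0 ∨ par (d + f) = 1 := by unfold par; omega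
    have hx : Complex.exp (-((Real.pi : ℂ) * Complex.I) / 2) = -Complex.I := by
      rw [neg_div, Complex.exp_neg, show (Real.pi : ℂ) * Complex.I / 2 = Real.pi / 2 * Complex.I by ring,
        Complex.exp_pi_div_two_mul_I, Complex.inv_I]
    rcases hp with hp | hp <;> rcases he with he | he <;> rw [hp, he] <;> simp [hx]
  have h2 : (starRingEnd ℂ) (Su1 (k + 2) c f)
      = ((1 / Real.sqrt (2 * ((k : ℝ) + 2)) : ℝ) : ℂ) * ek k c f := by
    unfold Su1 ek
    rw [map_mul, Complex.conj_ofReal, ← Complex.exp_conj]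
    push_cast
    congr 2
    simp [map_ofNat]
  unfold Smin
  rw [h1, h2]
  unfold Ssu2 sn
  push_cast
  ring

lemma sn_flip (k : ℕ) (α d : ℕ) :
    (sn k ((k : ℤ) - α + 1) ((d : ℤ) + 1)) = (-1) ^ d * sn k (α + 1) ((d : ℤ) + 1) := by
  unfold sn
  have := knr k
  rw [show Real.pi * (((k : ℤ) - α + 1 : ℤ) : ℝ) * (((d : ℤ) + 1 : ℤ) : ℝ) / ((k : ℝ) + 2)
    = ((d + 1 : ℕ) : ℝ) * Real.pi - Real.pi * (((α : ℤ) + 1 : ℤ) : ℝ) * (((d : ℤ) + 1 : ℤ) : ℝ) / ((k : ℝ) + 2) by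
      push_cast; field_simp; ring, Real.sin_nat_mul_pi_sub]
  ring

lemma ek_flip (k : ℕ) (j : ℤ) (f : ℕ) : ek k (j - (k + 2)) f = (-1) ^ f * ek k j f := by
  unfold ek
  have := kne k
  rw [show (Real.pi : ℂ) * Complex.I * ((j - (k + 2) : ℤ) : ℂ) * ((f : ℤ) : ℂ) / ((k : ℂ) + 2)
    = -((f : ℕ) * (Real.pi * Complex.I)) + Real.pi * Complex.I * j * (f : ℤ) / ((k : ℂ) + 2) by
      push_cast; field_simp; ring, Complex.exp_add, Complex.exp_neg, Complex.exp_nat_mul,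
      Complex.exp_pi_mul_I, ← inv_pow]
  norm_num

/-- The relative phase. -/
noncomputable def phi (p p' q : ℤ) : ℂ := ph p 1 * ph p' 1 * (starRingEnd ℂ) (ph q 1)

lemma phase_eq (p p' q : ℤ) (d f : ℕ) :
    ph p (par ((d : ℤ) + f)) * ph p' (par ((d : ℤ) + f)) * (starRingEnd ℂ) (ph q (par ((d : ℤ) + f)))
      = (1 + phi p p' q) / 2 + (1 - phi p p' q) / 2 * ((-1) ^ d * (-1) ^ f) := by
  rw [← pow_add]
  rcases Nat.even_or_odd (d + f) with h | h
  · have : par ((d : ℤ) + f) = 0 := by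
      unfold par; have := Nat.even_iff.1 h; omega
    rw [this, h.neg_one_pow]
    simp [ph]
    ring
  · have : par ((d : ℤ) + f) = 1 := by
      unfold par; have := Nat.odd_iff.1 h; omega
    rw [this, h.neg_one_pow]
    unfold phi
    ring

lemma term_eq (k : ℕ) (a a' α d f : ℕ) (hd : d < k + 1) (hα : α ≤ k) (c c' γ : ℤ) :
    Smin k (a : ℤ) c (d : ℤ) (f : ℤ) * Smin k (a' : ℤ) c' (d : ℤ) (f : ℤ) *
          (starRingEnd ℂ) (Smin k (α : ℤ) γ (d : ℤ) (f : ℤ)) / Smin k 0 0 (d : ℤ) (f : ℤ)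
    = (1 + phi (par (a + c)) (par (a' + c')) (par (α + γ))) / 2 / (2 * ((k : ℂ) + 2)) *
      ((2 / ((k : ℂ) + 2) * (sn k (a + 1) ((d : ℤ) + 1)
        * sn k (a' + 1) ((d : ℤ) + 1) * sn k (α + 1) ((d : ℤ) + 1) / sn k 1 ((d : ℤ) + 1) : ℂ))
        * ek k (c + c' - γ) f)
    + (1 - phi (par (a + c)) (par (a' + c')) (par (α + γ))) / 2 / (2 * ((k : ℂ) + 2)) *
      ((2 / ((k : ℂ) + 2) * (sn k (a + 1) ((d : ℤ) + 1)
        * sn k (a' + 1) ((d : ℤ) + 1) * sn k (((k - α : ℕ) : ℤ) + 1) ((d : ℤ) + 1)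
          / sn k 1 ((d : ℤ) + 1) : ℂ))
        * ek k (c + c' - γ - (k + 2)) f) := by
  have hP := phase_eq (par (a + c)) (par (a' + c')) (par (α + γ)) d f
  have hE : ek k c f * ek k c' f * (starRingEnd ℂ) (ek k γ f) = ek k (c + c' - γ) f := by
    unfold ek
    rw [← Complex.exp_conj, ← Complex.exp_add, ← Complex.exp_add]
    congr 1
    simp [map_ofNat]
    ring
  have h00 : ek k 0 f = 1 := by simp [ek]
  have hp0 : ph (par (0 + 0)) (par ((d : ℤ) + f)) = 1 := by simp [ph, par]
  have hs0 : (sn k 1 ((d : ℤ) + 1) : ℂ) ≠ 0 := by exact_mod_cast sn_one_ne k d hd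
  have hr : ((Real.sqrt (2 / ((k : ℝ) + 2)) : ℝ) : ℂ) ^ 2 = 2 / ((k : ℂ) + 2) := by
    rw [← Complex.ofReal_pow, Real.sq_sqrt (by positivity)]; push_cast; rfl
  have hw : ((1 / Real.sqrt (2 * ((k : ℝ) + 2)) : ℝ) : ℂ) ^ 2 = 1 / (2 * ((k : ℂ) + 2)) := by
    rw [← Complex.ofReal_pow, div_pow, Real.sq_sqrt (by positivity)]; push_cast; ring
  have hr0 : ((Real.sqrt (2 / ((k : ℝ) + 2)) : ℝ) : ℂ) ≠ 0 := by
    have : Real.sqrt (2 / ((k : ℝ) + 2)) ≠ 0 := by positivity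
    exact_mod_cast this
  have hw0 : ((1 / Real.sqrt (2 * ((k : ℝ) + 2)) : ℝ) : ℂ) ≠ 0 := by
    have : 1 / Real.sqrt (2 * ((k : ℝ) + 2)) ≠ 0 := by positivity
    exact_mod_cast this
  rw [Smin_eq, Smin_eq, Smin_eq, Smin_eq, ek_flip, Nat.cast_sub hα, sn_flip, h00, hp0]
  simp only [map_mul, Complex.conj_ofReal, zero_add]
  generalize ((Real.sqrt (2 / ((k : ℝ) + 2)) : ℝ) : ℂ) = r at *
  generalize ((1 / Real.sqrt (2 * ((k : ℝ) + 2)) : ℝ) : ℂ) = w at *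
  rw [← hr, ← hE]
  have hw' : ∀ x : ℂ, x / (2 * ((k : ℂ) + 2)) = x * w ^ 2 := by
    intro x; rw [hw]; ring
  rw [hw', hw']
  push_cast
  rw [div_eq_iff (by simp [hr0, hw0, hs0])]
  generalize (starRingEnd ℂ) (ek k γ f) = E3
  generalize (starRingEnd ℂ) (ph _ _) = P3 at *
  have : ∀ x y : ℂ, x = y → x = y := fun _ _ h => h
  field_simp
  linear_combination (2 * sn k (a + 1) ((d : ℤ) + 1) * sn k (a' + 1) ((d : ℤ) + 1)
    * sn k (α + 1) ((d : ℤ) + 1) * ek k c f * ek k c' f * E3) * hP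

lemma final_combine (p p' q : ℤ) (hp : p = 0 ∨ p = 1) (hp' : p' = 0 ∨ p' = 1)
    (hq : q = 0 ∨ q = 1) (N1 N2 K : ℂ) (hK : K ≠ 0) (D1 D2 : Prop) [Decidable D1] [Decidable D2]
    (z1 : (p + p' + q) % 2 = 1 → D1 → N1 = 0) (z2 : (p + p' + q) % 2 = 1 → D2 → N2 = 0) :
    (1 + phi p p' q) / 2 / (2 * K) * (N1 * if D1 then 2 * K else 0) +
      (1 - phi p p' q) / 2 / (2 * K) * (N2 * if D2 then 2 * K else 0) =
    if p * p' = 0 then N1 * (if D1 then 1 else 0) else N2 * (if D2 then 1 else 0) := by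
  have h1 : (N1 * if D1 then 2 * K else 0) = 2 * K * (N1 * (if D1 then 1 else 0)) := by
    split_ifs <;> ring
  have h2 : (N2 * if D2 then 2 * K else 0) = 2 * K * (N2 * (if D2 then 1 else 0)) := by
    split_ifs <;> ring
  rw [h1, h2]
  have y1 : (p + p' + q) % 2 = 1 → N1 * (if D1 then 1 else 0) = 0 := by
    intro h
    split_ifs with hd
    · rw [z1 h hd, zero_mul]
    · rw [mul_zero]
  have y2 : (p + p' + q) % 2 = 1 → N2 * (if D2 then 1 else 0) = 0 := by
    intro h
    split_ifs with hd
    · rw [z2 h hd, zero_mul]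
    · rw [mul_zero]
  generalize N1 * (if D1 then 1 else 0) = X1 at *
  generalize N2 * (if D2 then 1 else 0) = X2 at *
  rw [show (1 + phi p p' q) / 2 / (2 * K) * (2 * K * X1) = (1 + phi p p' q) / 2 * X1 by
      field_simp,
    show (1 - phi p p' q) / 2 / (2 * K) * (2 * K * X2) = (1 - phi p p' q) / 2 * X2 by
      field_simp]
  clear h1 h2 z1 z2
  by_cases hodd : (p + p' + q) % 2 = 1
  · rw [y1 hodd, y2 hodd]; simp
  · clear y1 y2
    rcases hp with rfl | rfl <;> rcases hp' with rfl | rfl <;> rcases hq with rfl | rfl <;>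
      first | (exfalso; revert hodd; decide) | norm_num [phi, ph]

/-- the Verlinde sum for the `N=2` minimal model S-matrix factorises
into su(2) fusion numbers times u(1) delta-constraints, with a twist in the R×R case. -/
theorem verlinde_fusion (k : ℕ) (a a' α : ℕ) (ha : a ≤ k) (ha' : a' ≤ k) (hα : α ≤ k)
    (c c' γ : ℤ) :
    (∑ d ∈ Finset.range (k + 1), ∑ f ∈ Finset.range (2 * (k + 2)),
        Smin k (a : ℤ) c (d : ℤ) (f : ℤ) * Smin k (a' : ℤ) c' (d : ℤ) (f : ℤ) *
          (starRingEnd ℂ) (Smin k (α : ℤ) γ (d : ℤ) (f : ℤ)) / Smin k 0 0 (d : ℤ) (f : ℤ))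
      = if par ((a : ℤ) + c) * par ((a' : ℤ) + c') = 0 then
          Nsu2 k (α : ℤ) (a : ℤ) (a' : ℤ) *
            (if c + c' ≡ γ [ZMOD (2 * ((k : ℤ) + 2))] then 1 else 0)
        else
          Nsu2 k ((k : ℤ) - α) (a : ℤ) (a' : ℤ) *
            (if c + c' ≡ γ + ((k : ℤ) + 2) [ZMOD (2 * ((k : ℤ) + 2))] then 1 else 0) := by
  have hk := kne k
  refine (Finset.sum_congr rfl (fun d hd => Finset.sum_congr rfl
    (fun f _ => term_eq k a a' α d f (Finset.mem_range.1 hd) hα c c' γ))).trans ?_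
  simp only [Finset.sum_add_distrib, ← Finset.mul_sum, ek_sum, ← Finset.sum_mul]
  rw [Finset.mul_sum, Finset.mul_sum, su2_sum k a a' α ha ha' hα,
    su2_sum k a a' (k - α) ha ha' (by omega), Nat.cast_sub hα]
  have m1 : c + c' ≡ γ [ZMOD (2 * ((k : ℤ) + 2))] ↔ (2 * ((k : ℤ) + 2)) ∣ c + c' - γ := by
    rw [Int.modEq_iff_dvd, dvd_sub_comm]
  have m2 : c + c' ≡ γ + ((k : ℤ) + 2) [ZMOD (2 * ((k : ℤ) + 2))]
      ↔ (2 * ((k : ℤ) + 2)) ∣ c + c' - γ - (k + 2) := by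
    rw [Int.modEq_iff_dvd, dvd_sub_comm, sub_sub]
  simp only [m1, m2]
  -- vanishing for the wrong parity
  have z1 : ((a : ℤ) + c + (a' + c') + (α + γ)) % 2 = 1 → (2 * ((k : ℤ) + 2)) ∣ c + c' - γ →
      Nsu2 k α a a' = 0 := by
    rintro h ⟨n, hn⟩
    have : (2 : ℤ) ∣ c + c' - γ := ⟨(k + 2) * n, by rw [hn]; ring⟩
    unfold Nsu2
    rw [if_neg]
    rintro ⟨-, -, h3⟩
    omega
  have z2 : ((a : ℤ) + c + (a' + c') + (α + γ)) % 2 = 1 →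
      (2 * ((k : ℤ) + 2)) ∣ c + c' - γ - (k + 2) → Nsu2 k ((k : ℤ) - α) a a' = 0 := by
    rintro h ⟨n, hn⟩
    have : (2 : ℤ) ∣ c + c' - γ - (k + 2) := ⟨(k + 2) * n, by rw [hn]; ring⟩
    unfold Nsu2
    rw [if_neg]
    rintro ⟨-, -, h3⟩
    omega
  have hp : par (a + c) = 0 ∨ par (a + c) = 1 := by unfold par; omega
  have hp' : par (a' + c') = 0 ∨ par (a' + c') = 1 := by unfold par; omega
  have hq : par (α + γ) = 0 ∨ par (α + γ) = 1 := by unfold par; omega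
  have hc : ((a : ℤ) + c + (a' + c') + (α + γ)) % 2
      = (par (a + c) + par (a' + c') + par (α + γ)) % 2 := by unfold par; omega
  rw [hc] at z1 z2
  generalize Nsu2 k α a a' = N1 at *
  generalize Nsu2 k ((k : ℤ) - α) a a' = N2 at *
  generalize par (a + c) = p at *
  generalize par (a' + c') = p' at *
  generalize par (α + γ) = q at *
  exact final_combine p p' q hp hp' hq N1 N2 _ hk _ _ z1 z2
end

section
/- Fix an integer k ≥ 0, set k̄ = k+2, and fix l ∈ {0,1} and d ∈ ℤ, determining the simple current j = (J^l 0, d). Define the action of j on Q_k by j·(a,c) = (J^{l+(lk+d)(a+c)} a, c + d + (lk+d)(a+c)·k̄), where J^m a = a if m is even and J^m a = k−a if m is odd. Then for all (a,c), (a',c') ∈ Q_k (with integer representatives c, c'): S_{j·(a,c); a',c'} = exp(2πi·Q_j(a',c'))·S_{a,c;a',c'}, where Q_j(a',c') = a'·l/2 + c'·d/(2k̄) − [kl+d]·[a'+c']/4. -/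
/-- `J^m a`: the m-fold action of the su(2) simple current `J : a ↦ k - a`. -/
def Jpow (k m a : ℤ) : ℤ := if m % 2 = 0 then a else k - a

theorem aux_exp (n : ℤ) : Complex.exp ((Real.pi : ℂ) * Complex.I * (n : ℂ)) = (-1) ^ n := by
  rw [mul_comm, Complex.exp_int_mul, Complex.exp_pi_mul_I]

theorem aux_su2 (k : ℕ) (m a a' : ℤ) :
    Ssu2 k (Jpow k m a) a' =
      Complex.exp ((Real.pi : ℂ) * Complex.I * ((m * a' : ℤ) : ℂ)) * Ssu2 k a a' := by
  rw [aux_exp]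
  unfold Jpow
  split_ifs with h
  · have he : Even (m * a') := (Int.even_iff.mpr h).mul_right a'
    rw [he.neg_one_zpow, one_mul]
  · have ho : Odd m := Int.odd_iff.mpr (by omega)
    have hk : ((k : ℝ) + 2) ≠ 0 := by positivity
    have e1 : Real.pi * ((((k : ℤ) - a : ℤ) : ℝ) + 1) * ((a' : ℝ) + 1) / ((k : ℝ) + 2)
        = ((a' + 1 : ℤ) : ℝ) * Real.pi - Real.pi * ((a : ℝ) + 1) * ((a' : ℝ) + 1) / ((k : ℝ) + 2) := by
      push_cast
      field_simp
      ring
    have e2 : ((-1 : ℂ)) ^ (m * a') = (-1) ^ a' := by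
      rw [zpow_mul, ho.neg_one_zpow]
    unfold Ssu2
    rw [e1, Real.sin_int_mul_pi_sub, e2, zpow_add₀ (by norm_num)]
    push_cast
    ring

theorem aux_conj (n : ℕ) (c c' : ℤ) : (starRingEnd ℂ) (Su1 n c c') =
    ((1 / Real.sqrt (2 * (n : ℝ)) : ℝ) : ℂ) *
    Complex.exp ((Real.pi : ℂ) * Complex.I * (c : ℂ) * (c' : ℂ) / (n : ℂ)) := by
  unfold Su1
  rw [map_mul, Complex.conj_ofReal, ← Complex.exp_conj]
  simp

theorem aux_par_add (x e : ℤ) : par (x + e) = par x + par e - 2 * (par x * par e) := by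
  unfold par
  rcases Int.emod_two_eq_zero_or_one x with h | h <;>
  rcases Int.emod_two_eq_zero_or_one e with h' | h' <;> rw [h, h'] <;> omega

theorem aux_par_eq (x y : ℤ) (h : Even (x - y)) : par x = par y := by
  unfold par
  have := Int.even_iff.mp h
  omega

theorem aux_even (x y z : ℤ) : Even (x * y * z + par x * par y * par z) := by
  have hp : ∀ w : ℤ, Even (par w) ↔ Even w := by
    intro w
    unfold par
    simp only [Int.even_iff]
    omega
  simp only [Int.even_add, Int.even_mul, hp]

theorem aux_parJ (k l d a c : ℤ) :
    par (Jpow k (l + (l * k + d) * (a + c)) a + (c + d + (l * k + d) * (a + c) * (k + 2)))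
      = par ((a + c) + (k * l + d)) := by
  apply aux_par_eq
  unfold Jpow
  split_ifs with h
  · have h' := Int.even_iff.mpr h
    simp only [Int.even_add, Int.even_sub, Int.even_mul, even_two] at h' ⊢
    clear h
    generalize Even k = K, Even l = L, Even d = D, Even a = A, Even c = C at h' ⊢
    by_cases K <;> by_cases L <;> by_cases D <;> by_cases A <;>
      by_cases C <;> simp_all
  · have h' : ¬ Even (l + (l * k + d) * (a + c)) := fun h2 => h (Int.even_iff.mp h2)
    simp only [Int.even_add, Int.even_sub, Int.even_mul, even_two] at h' ⊢
    clear h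
    generalize Even k = K, Even l = L, Even d = D, Even a = A, Even c = C at h' ⊢
    by_cases K <;> by_cases L <;> by_cases D <;> by_cases A <;>
      by_cases C <;> simp_all

/-- the S-matrix transforms with a phase `exp(2πi Q_j(a',c'))` under
the action of the simple current `j = (J^l 0, d)` on the left index. -/
theorem simple_current_action_on_S (k : ℕ) (l : ℤ) (hl : l = 0 ∨ l = 1) (d : ℤ)
    (a a' : ℕ) (ha : a ≤ k) (ha' : a' ≤ k) (c c' : ℤ) :
    Smin k (Jpow (k : ℤ) (l + (l * (k : ℤ) + d) * ((a : ℤ) + c)) (a : ℤ))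
        (c + d + (l * (k : ℤ) + d) * ((a : ℤ) + c) * ((k : ℤ) + 2)) (a' : ℤ) c'
      = Complex.exp ((2 : ℂ) * (Real.pi : ℂ) * Complex.I *
          (((a' : ℂ) * (l : ℂ)) / 2 + ((c' : ℂ) * (d : ℂ)) / (2 * ((k : ℂ) + 2))
            - ((par ((k : ℤ) * l + d) : ℂ) * (par ((a' : ℤ) + c') : ℂ)) / 4))
        * Smin k (a : ℤ) c (a' : ℤ) c' := by
  have hk : ((k : ℂ) + 2) ≠ 0 := by exact_mod_cast (by omega : k + 2 ≠ 0)
  obtain ⟨n, hn⟩ := aux_even ((k : ℤ) * l + d) ((a : ℤ) + c) ((a' : ℤ) + c')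
  unfold Smin
  rw [aux_su2, aux_conj, aux_conj, aux_parJ, aux_par_add]
  unfold Su1
  set E := par ((k : ℤ) * l + d)
  set p := par ((a : ℤ) + c)
  set q := par ((a' : ℤ) + c')
  have hn' := congrArg (fun z : ℤ => (z : ℂ)) hn
  push_cast at hn' ⊢
  have key : ∀ (A B C x1 x2 x3 y1 y2 y3 : ℂ),
      Complex.exp (x1 + x2 + x3) = Complex.exp (y1 + y2 + y3) →
      2 * (Complex.exp x1 * A) * (B * Complex.exp x2) * (C * Complex.exp x3) =
      Complex.exp y1 * (2 * A * (B * Complex.exp y2) * (C * Complex.exp y3)) := by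
    intro A B C x1 x2 x3 y1 y2 y3 h
    rw [Complex.exp_add, Complex.exp_add, Complex.exp_add, Complex.exp_add] at h
    linear_combination 2 * A * B * C * h
  apply key
  rw [Complex.exp_eq_exp_iff_exists_int]
  refine ⟨n, ?_⟩
  field_simp
  linear_combination 8 * ((k : ℂ) + 2) * hn'
end

section
/- Fix an integer k ≥ 0, set k̄ = k+2, and fix l ∈ {0,1} and d ∈ ℤ, determining the simple current j = (J^l 0, d) with label (a_j, c_j) = (l·k, d). Define j·(a,c) = (J^{l+(lk+d)(a+c)} a, c + d + (lk+d)(a+c)·k̄) with the second coordinate taken as an integer, where J^m a = a if m is even and J^m a = k−a if m is odd. Then for all a ∈ {0,…,k} and all integers c: Q_j(a,c) − (h_{a_j,c_j} + h_{a,c} − h_{j·(a,c)}) ∈ ℤ, where Q_j(a,c) = a·l/2 + c·d/(2k̄) − [kl+d]·[a+c]/4. -/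
/-- The (extended) conformal weight `h_{a,c}` at level `k`. -/
noncomputable def hw (k : ℕ) (a c : ℤ) : ℝ :=
  ((a : ℝ) * ((a : ℝ) + 2) - (c : ℝ) ^ 2) / (4 * ((k : ℝ) + 2)) + (par (a + c) : ℝ) ^ 2 / 8

/-- The simple current charge `Q_j(a,c)` for `j = (J^l 0, d)`. -/
noncomputable def Qsc (k : ℕ) (l d a c : ℤ) : ℝ :=
  ((a : ℝ) * (l : ℝ)) / 2 + ((c : ℝ) * (d : ℝ)) / (2 * ((k : ℝ) + 2))
    - ((par ((k : ℤ) * l + d) : ℝ) * (par (a + c) : ℝ)) / 4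

theorem par_sq (e s : ℤ) (h0 : par e * par s = 0) :
    par (e + s) ^ 2 = par e ^ 2 + par s ^ 2 := by
  unfold par at *
  rcases Int.emod_two_eq_zero_or_one e with h | h <;>
  rcases Int.emod_two_eq_zero_or_one s with g | g <;>
  rw [h, g] at h0 <;> rw [Int.add_emod, h, g] <;> simp at h0 ⊢

/-- `Q_j(a,c)` is the monodromy charge: it agrees with
`h_{a_j,c_j} + h_{a,c} - h_{j·(a,c)}` modulo ℤ. -/
theorem charge_is_monodromy (k : ℕ) (l : ℤ) (hl : l = 0 ∨ l = 1) (d : ℤ)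
    (a : ℕ) (ha : a ≤ k) (c : ℤ) :
    ∃ m : ℤ,
      Qsc k l d (a : ℤ) c
        - (hw k (l * (k : ℤ)) d + hw k (a : ℤ) c
            - hw k (Jpow (k : ℤ) (l + (l * (k : ℤ) + d) * ((a : ℤ) + c)) (a : ℤ))
                (c + d + (l * (k : ℤ) + d) * ((a : ℤ) + c) * ((k : ℤ) + 2)))
      = (m : ℝ) := by
  have hk : (k : ℝ) + 2 ≠ 0 := by positivity
  obtain ⟨e, he⟩ : ∃ e : ℤ, e = l * (k : ℤ) + d := ⟨_, rfl⟩
  obtain ⟨s, hs⟩ : ∃ s : ℤ, s = (a : ℤ) + c := ⟨_, rfl⟩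
  have hd : d = e - l * k := by linarith
  have hc : c = s - a := by linarith
  have h1 : (k : ℤ) * l + d = e := by rw [hd]; ring
  have h2 : l * (k : ℤ) + d = e := he.symm
  have h3 : (a : ℤ) + c = s := hs.symm
  unfold Qsc hw
  rw [h1, h2, h3]
  rcases Int.even_or_odd (e * s) with hn | hn
  ·
    have hx : (par e : ℝ) * (par s : ℝ) = 0 := by
      rcases Int.even_mul.1 hn with h | h <;> simp [par, Int.even_iff.1 h]
    have hJ : Jpow k (l + e * s) a = if l = 0 then (a : ℤ) else k - a := by
      have := Int.even_iff.1 hn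
      unfold Jpow
      rcases hl with rfl | rfl
      · simp [this]
      · rw [if_neg (by omega)]; simp
    obtain ⟨m, hm⟩ := hn
    rw [hJ]
    have hp : par ((if l = 0 then (a : ℤ) else k - a) + (c + d + e * s * ((k : ℤ) + 2)))
        = par (e + s) := by
      rw [hm, show (m + m) * ((k : ℤ) + 2) = 2 * (m * (k + 2)) by ring]
      unfold par
      rcases hl with rfl | rfl <;> simp <;> omega
    have hq : (par (e + s) : ℝ) ^ 2 = (par e : ℝ) ^ 2 + (par s : ℝ) ^ 2 := by
      have : par e * par s = 0 := by exact_mod_cast hx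
      have h5 : par (e + s) ^ 2 = par e ^ 2 + par s ^ 2 := par_sq e s this
      exact_mod_cast h5
    rw [hp, hq, hx, hm, hc, hd]
    refine ⟨-m * (s - a + e - l * k) - m ^ 2 * (k + 2), ?_⟩
    rcases hl with rfl | rfl
    · simp
      field_simp
      ring
    · simp
      field_simp
      ring
  · have hes := Int.odd_mul.1 hn
    have hJ : Jpow k (l + e * s) a = if l = 0 then (k - a : ℤ) else a := by
      have := Int.odd_iff.1 hn
      unfold Jpow
      rcases hl with rfl | rfl
      · simp [this]
      · rw [if_pos (by omega)]; simp
    have pe : par e = 1 := Int.odd_iff.1 hes.1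
    have ps : par s = 1 := Int.odd_iff.1 hes.2
    obtain ⟨m, hm⟩ := hn
    rw [hJ]
    have hp : par ((if l = 0 then (k - a : ℤ) else a) + (c + d + e * s * ((k : ℤ) + 2)))
        = 0 := by
      rw [hm, show (2 * m + 1) * ((k : ℤ) + 2) = 2 * (m * (k + 2)) + k + 2 by ring]
      unfold par at *
      rcases hl with rfl | rfl <;> simp <;> omega
    rw [hp, pe, ps, hm, hc, hd]
    obtain ⟨⟨p, rfl⟩, ⟨q, rfl⟩⟩ := hes
    refine ⟨-m * (2 * q + 1 - a + (2 * p + 1) - l * k) - (m ^ 2 + m) * (k + 2) - 1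
      - (p + q + 1) + l * a, ?_⟩
    rcases hl with rfl | rfl
    · simp
      field_simp
      ring
    · simp
      field_simp
      ring
end

section
/- Fix an integer k ≥ 0 and set k̄ = k+2. On the set J = {0,1} × ℤ/(2k̄)ℤ, the binary operation (l₁,d₁) × (l₂,d₂) = (l₁ + l₂ + (l₁k+d₁)(l₂k+d₂) mod 2, d₁ + d₂ + (l₁k+d₁)(l₂k+d₂)·k̄ mod 2k̄) (computed with integer representatives d₁, d₂, and well defined independently of the choice of representatives) makes J into a commutative group with identity element (0,0), in which the inverse of (l,d) is (l + lk + d mod 2, −d + (lk+d)·k̄ mod 2k̄). Moreover this group is isomorphic to ℤ/(4k̄)ℤ if k is odd, and to ℤ/2ℤ × ℤ/(2k̄)ℤ if k is even. -/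
/-- The simple current product on `{0,1} × ℤ/(2k̄)ℤ`, computed with the canonical
integer representatives (`ZMod.val`). -/
def scMul (k : ℕ) (x y : ZMod 2 × ZMod (2 * (k + 2))) : ZMod 2 × ZMod (2 * (k + 2)) :=
  ((((x.1.val : ℤ) + (y.1.val : ℤ) +
      ((x.1.val : ℤ) * (k : ℤ) + (x.2.val : ℤ)) * ((y.1.val : ℤ) * (k : ℤ) + (y.2.val : ℤ)) :
        ℤ) : ZMod 2),
   (((x.2.val : ℤ) + (y.2.val : ℤ) +
      ((x.1.val : ℤ) * (k : ℤ) + (x.2.val : ℤ)) * ((y.1.val : ℤ) * (k : ℤ) + (y.2.val : ℤ)) *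
        ((k : ℤ) + 2) : ℤ) : ZMod (2 * (k + 2))))

/-- The claimed inverse `(l + lk + d, -d + (lk+d)·k̄)` for the simple current product. -/
def scInv (k : ℕ) (x : ZMod 2 × ZMod (2 * (k + 2))) : ZMod 2 × ZMod (2 * (k + 2)) :=
  ((((x.1.val : ℤ) + (x.1.val : ℤ) * (k : ℤ) + (x.2.val : ℤ) : ℤ) : ZMod 2),
   ((-(x.2.val : ℤ) + ((x.1.val : ℤ) * (k : ℤ) + (x.2.val : ℤ)) * ((k : ℤ) + 2) : ℤ) :
      ZMod (2 * (k + 2))))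

theorem sc_rep (k : ℕ) [NeZero (2 * (k + 2))] (x : ZMod 2 × ZMod (2 * (k + 2))) :
    x = (((x.1.val : ℤ) : ZMod 2), ((x.2.val : ℤ) : ZMod (2 * (k + 2)))) := by
  ext <;> simp

theorem sc_eq2 (a b : ℤ) : ((a : ZMod 2) = b) ↔ ∃ c, a - b = 2 * c := by
  rw [eq_comm, ZMod.intCast_eq_intCast_iff_dvd_sub]; rfl

theorem sc_eqK (k : ℕ) (a b : ℤ) :
    ((a : ZMod (2 * (k + 2))) = b) ↔ ∃ c, a - b = 2 * ((k : ℤ) + 2) * c := by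
  rw [eq_comm, ZMod.intCast_eq_intCast_iff_dvd_sub]; push_cast; rfl

theorem sc_eq4K (k : ℕ) (a b : ℤ) :
    ((a : ZMod (4 * (k + 2))) = b) ↔ ∃ c, a - b = 4 * ((k : ℤ) + 2) * c := by
  rw [eq_comm, ZMod.intCast_eq_intCast_iff_dvd_sub]; push_cast; rfl

theorem sc_wd (k : ℕ) [NeZero (2 * (k + 2))] (l₁ d₁ l₂ d₂ : ℤ) :
      scMul k ((l₁ : ZMod 2), (d₁ : ZMod (2 * (k + 2))))
          ((l₂ : ZMod 2), (d₂ : ZMod (2 * (k + 2))))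
        = (((l₁ + l₂ + (l₁ * (k : ℤ) + d₁) * (l₂ * (k : ℤ) + d₂) : ℤ) : ZMod 2),
           ((d₁ + d₂ + (l₁ * (k : ℤ) + d₁) * (l₂ * (k : ℤ) + d₂) * ((k : ℤ) + 2) : ℤ) :
              ZMod (2 * (k + 2)))) := by
  unfold scMul
  dsimp only
  have h1 : ∀ l : ℤ, ∃ c, (((l : ZMod 2).val : ℤ)) = l + 2 * c := by
    intro l
    obtain ⟨c, hc⟩ := (sc_eq2 ((l : ZMod 2).val : ℤ) l).1 (by simp)
    exact ⟨c, by linarith⟩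
  have h2 : ∀ l : ℤ, ∃ c, (((l : ZMod (2 * (k + 2))).val : ℤ)) = l + 2 * ((k : ℤ) + 2) * c := by
    intro l
    obtain ⟨c, hc⟩ := (sc_eqK k ((l : ZMod (2 * (k + 2))).val : ℤ) l).1 (by simp)
    exact ⟨c, by linarith⟩
  obtain ⟨a, ha⟩ := h1 l₁
  obtain ⟨b, hb⟩ := h1 l₂
  obtain ⟨c, hc⟩ := h2 d₁
  obtain ⟨d, hd⟩ := h2 d₂
  rw [ha, hb, hc, hd]
  have hq : ∃ w, ((l₁ + 2 * a) * (k : ℤ) + (d₁ + 2 * ((k : ℤ) + 2) * c)) *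
      ((l₂ + 2 * b) * (k : ℤ) + (d₂ + 2 * ((k : ℤ) + 2) * d)) =
      (l₁ * (k : ℤ) + d₁) * (l₂ * (k : ℤ) + d₂) + 2 * w := by
    refine ⟨(a * k + (k + 2) * c) * (l₂ * (k : ℤ) + d₂) + (b * k + (k + 2) * d) *
      (l₁ * (k : ℤ) + d₁) + 2 * (a * k + (k + 2) * c) * (b * k + (k + 2) * d), by ring⟩
  obtain ⟨w, hw⟩ := hq
  rw [hw, Prod.mk.injEq, sc_eq2, sc_eqK]
  exact ⟨⟨a + b + w, by ring⟩, ⟨c + d + w, by ring⟩⟩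

theorem sc_par (a b : ℤ) : ∃ w, 2 * (a * b) + (a + b) % 2 - a % 2 - b % 2 = 4 * w := by
  obtain ⟨s, hs⟩ : ∃ s, s = a / 2 := ⟨_, rfl⟩
  obtain ⟨t, ht⟩ : ∃ t, t = b / 2 := ⟨_, rfl⟩
  rcases Int.emod_two_eq_zero_or_one a with h | h <;>
  rcases Int.emod_two_eq_zero_or_one b with h' | h'
  · exact ⟨2 * s * t, by rw [show a = 2 * s by omega, show b = 2 * t by omega]; ring_nf; omega⟩
  · exact ⟨2 * s * t + s, by
      rw [show (a + b) % 2 = 1 by omega, h, h', show a = 2 * s by omega,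
        show b = 2 * t + 1 by omega]; ring⟩
  · exact ⟨2 * s * t + t, by
      rw [show (a + b) % 2 = 1 by omega, h, h', show a = 2 * s + 1 by omega,
        show b = 2 * t by omega]; ring⟩
  · exact ⟨2 * s * t + s + t, by
      rw [show (a + b) % 2 = 0 by omega, h, h', show a = 2 * s + 1 by omega,
        show b = 2 * t + 1 by omega]; ring⟩

theorem sc_equiv (k : ℕ) [NeZero (2 * (k + 2))] {A : Type} [AddCommGroup A] [Finite A]
    (hcard : Nat.card A ≤ 4 * (k + 2)) (E : ℤ → ℤ → A)
    (hper : ∀ l d a b : ℤ, E (l + 2 * a) (d + 2 * ((k : ℤ) + 2) * b) = E l d)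
    (hmul : ∀ l₁ d₁ l₂ d₂ : ℤ, E (l₁ + l₂ + (l₁ * (k : ℤ) + d₁) * (l₂ * (k : ℤ) + d₂))
      (d₁ + d₂ + (l₁ * (k : ℤ) + d₁) * (l₂ * (k : ℤ) + d₂) * ((k : ℤ) + 2)) =
        E l₁ d₁ + E l₂ d₂)
    (hinj : ∀ l d l' d' : ℤ, E l d = E l' d' →
      ∃ a b, l - l' = 2 * a ∧ d - d' = 2 * ((k : ℤ) + 2) * b) :
    ∃ e : (ZMod 2 × ZMod (2 * (k + 2))) ≃ A, ∀ x y, e (scMul k x y) = e x + e y := by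
  let f : (ZMod 2 × ZMod (2 * (k + 2))) → A := fun x => E (x.1.val : ℤ) (x.2.val : ℤ)
  have hf : ∀ l d : ℤ, f ((l : ZMod 2), (d : ZMod (2 * (k + 2)))) = E l d := by
    intro l d
    obtain ⟨a, ha⟩ := (sc_eq2 ((l : ZMod 2).val : ℤ) l).1 (by simp)
    obtain ⟨b, hb⟩ := (sc_eqK k ((d : ZMod (2 * (k + 2))).val : ℤ) d).1 (by simp)
    have := hper l d a b
    rw [← this]
    show E _ _ = _
    congr 1 <;> linarith
  have hi : Function.Injective f := by
    intro x y hxy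
    obtain ⟨a, b, ha, hb⟩ := hinj _ _ _ _ hxy
    rw [sc_rep k x, sc_rep k y, Prod.mk.injEq, sc_eq2, sc_eqK]
    exact ⟨⟨a, ha⟩, ⟨b, hb⟩⟩
  have hb : Function.Bijective f := by
    apply hi.bijective_of_nat_card_le
    rw [Nat.card_prod, Nat.card_zmod, Nat.card_zmod]
    omega
  refine ⟨Equiv.ofBijective f hb, fun x y => ?_⟩
  simp only [Equiv.ofBijective_apply]
  rw [sc_rep k x, sc_rep k y, sc_wd, hf, hf, hf, hmul]

theorem sc_odd (k : ℕ) [NeZero (2 * (k + 2))] (hk : Odd k) :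
    ∃ e : (ZMod 2 × ZMod (2 * (k + 2))) ≃ ZMod (4 * (k + 2)),
      ∀ x y, e (scMul k x y) = e x + e y := by
  haveI : NeZero (4 * (k + 2)) := ⟨by omega⟩
  obtain ⟨j, hj⟩ := hk
  have hj' : (k : ℤ) = 2 * j + 1 := by exact_mod_cast hj
  apply sc_equiv k (by rw [Nat.card_zmod])
    (fun l d => ((2 * d + ((l * k + d) % 2) * ((k : ℤ) + 2) : ℤ) : ZMod (4 * (k + 2))))
  · intro l d a b
    rw [sc_eq4K]
    refine ⟨b, ?_⟩
    have : ((l + 2 * a) * (k : ℤ) + (d + 2 * ((k : ℤ) + 2) * b)) % 2 = (l * k + d) % 2 := by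
      rw [show (l + 2 * a) * (k : ℤ) + (d + 2 * ((k : ℤ) + 2) * b) =
        l * k + d + 2 * (a * k + (k + 2) * b) by ring]
      omega
    rw [this]; ring
  · intro l₁ d₁ l₂ d₂
    rw [← Int.cast_add, sc_eq4K]
    obtain ⟨w, hw⟩ := sc_par (l₁ * (k : ℤ) + d₁) (l₂ * (k : ℤ) + d₂)
    refine ⟨w, ?_⟩
    have : ((l₁ + l₂ + (l₁ * (k : ℤ) + d₁) * (l₂ * (k : ℤ) + d₂)) * (k : ℤ) +
        (d₁ + d₂ + (l₁ * (k : ℤ) + d₁) * (l₂ * (k : ℤ) + d₂) * ((k : ℤ) + 2))) % 2 =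
        ((l₁ * (k : ℤ) + d₁) + (l₂ * (k : ℤ) + d₂)) % 2 := by
      rw [show (l₁ + l₂ + (l₁ * (k : ℤ) + d₁) * (l₂ * (k : ℤ) + d₂)) * (k : ℤ) +
        (d₁ + d₂ + (l₁ * (k : ℤ) + d₁) * (l₂ * (k : ℤ) + d₂) * ((k : ℤ) + 2)) =
        ((l₁ * (k : ℤ) + d₁) + (l₂ * (k : ℤ) + d₂)) +
          2 * ((l₁ * (k : ℤ) + d₁) * (l₂ * (k : ℤ) + d₂) * (k + 1)) by ring]
      omega
    rw [this]
    linear_combination ((k : ℤ) + 2) * hw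
  · intro l d l' d' h
    rw [sc_eq4K] at h
    obtain ⟨c, hc⟩ := h
    have hp : (l * (k : ℤ) + d) % 2 = (l' * (k : ℤ) + d') % 2 := by
      rcases Int.emod_two_eq_zero_or_one (l * (k : ℤ) + d) with h | h <;>
      rcases Int.emod_two_eq_zero_or_one (l' * (k : ℤ) + d') with h' | h' <;>
      rw [h, h'] at hc ⊢ <;> exfalso <;> rw [mul_assoc] at hc <;>
      generalize ((k : ℤ) + 2) * c = z at hc <;> omega
    rw [hp] at hc
    have hd : d - d' = 2 * ((k : ℤ) + 2) * c := by linarith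
    have h2 : (l * (k : ℤ) + d) - (l' * (k : ℤ) + d') =
        (l - l') + 2 * ((l - l') * j + (k + 2) * c) := by
      rw [show (l * (k : ℤ) + d) - (l' * (k : ℤ) + d') = (l - l') * k + (d - d') by ring, hd, hj']
      ring
    refine ⟨(l - l') / 2, c, ?_, hd⟩
    generalize (l - l') * j + (k + 2) * c = z at h2
    omega

theorem sc_even (k : ℕ) [NeZero (2 * (k + 2))] (hk : Even k) :
    ∃ e : (ZMod 2 × ZMod (2 * (k + 2))) ≃ ZMod 2 × ZMod (2 * (k + 2)),
      ∀ x y, e (scMul k x y) = e x + e y := by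
  obtain ⟨h, hh, h0⟩ : ∃ h : ℤ, (k : ℤ) + 2 = 2 * h ∧ 0 < h := by
    obtain ⟨r, hr⟩ := hk
    exact ⟨r + 1, by omega, by omega⟩
  have hk' : (k : ℤ) = 2 * (h - 1) := by linarith
  have hcard : Nat.card (ZMod 2 × ZMod (2 * (k + 2))) ≤ 4 * (k + 2) := by
    rw [Nat.card_prod, Nat.card_zmod, Nat.card_zmod]; omega
  have hpq : ∀ l d : ℤ, (l * (k : ℤ) + d) % 2 = d % 2 := by
    intro l d
    rw [hk', show l * (2 * (h - 1)) + d = d + 2 * (l * (h - 1)) by ring]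
    omega
  have key : ∀ l₁ d₁ l₂ d₂ : ℤ, ∃ w, 2 * ((l₁ * (k : ℤ) + d₁) * (l₂ * (k : ℤ) + d₂)) +
      (d₁ + d₂) % 2 - d₁ % 2 - d₂ % 2 = 4 * w := by
    intro l₁ d₁ l₂ d₂
    obtain ⟨w, hw⟩ := sc_par (l₁ * (k : ℤ) + d₁) (l₂ * (k : ℤ) + d₂)
    refine ⟨w, ?_⟩
    rw [hpq, hpq, Int.add_emod, hpq, hpq, ← Int.add_emod] at hw
    exact hw
  have hd2 : ∀ d : ℤ, ∃ t, d = d % 2 + 2 * t ∧ d / 2 = t := fun d => ⟨d / 2, by omega, rfl⟩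
  rcases Int.even_or_odd' h with ⟨m, hm | hm⟩
  · have hK : (k : ℤ) + 2 = 4 * m := by linarith
    apply sc_equiv k hcard (fun l d => (((l + d / 2 + (d % 2) * m : ℤ) : ZMod 2),
      ((d + 2 * m * (d % 2) : ℤ) : ZMod (2 * (k + 2)))))
    · intro l d a b
      have e1 : (d + 2 * ((k : ℤ) + 2) * b) % 2 = d % 2 := by
        rw [mul_assoc]; omega
      have e2 : (d + 2 * ((k : ℤ) + 2) * b) / 2 = d / 2 + 4 * (m * b) := by
        rw [hK, show 2 * (4 * m) * b = 8 * (m * b) by ring]; omega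
      rw [e1, e2, Prod.mk.injEq, sc_eq2, sc_eqK]
      exact ⟨⟨a + 2 * (m * b), by ring⟩, ⟨b, by ring⟩⟩
    · intro l₁ d₁ l₂ d₂
      obtain ⟨w, hw⟩ := key l₁ d₁ l₂ d₂
      generalize (l₁ * (k : ℤ) + d₁) * (l₂ * (k : ℤ) + d₂) = q at hw ⊢
      have e1 : (d₁ + d₂ + q * ((k : ℤ) + 2)) % 2 = (d₁ + d₂) % 2 := by
        rw [hK, show q * (4 * m) = 4 * (q * m) by ring]; omega
      have e2 : (d₁ + d₂ + q * ((k : ℤ) + 2)) / 2 = (d₁ + d₂) / 2 + 2 * (q * m) := by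
        rw [hK, show q * (4 * m) = 4 * (q * m) by ring]; omega
      rw [e1, e2, Prod.mk_add_mk, ← Int.cast_add, ← Int.cast_add, Prod.mk.injEq, sc_eq2, sc_eqK]
      constructor
      · have e3 : (d₁ + d₂) / 2 = d₁ / 2 + d₂ / 2 + (q - 2 * w) := by omega
        refine ⟨q - w + q * m + m * (2 * w - q), ?_⟩
        rw [e3]
        linear_combination m * hw
      · refine ⟨w, ?_⟩
        rw [hK]
        linear_combination 2 * m * hw
    · intro l d l' d' h
      rw [Prod.mk.injEq, sc_eq2, sc_eqK] at h
      obtain ⟨⟨c, hc⟩, ⟨b, hb⟩⟩ := h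
      have hp : d % 2 = d' % 2 := by
        rw [mul_assoc, mul_assoc, mul_assoc] at hb
        generalize ((k : ℤ) + 2) * b = z at hb
        generalize m * (d % 2) = z1 at hb
        generalize m * (d' % 2) = z2 at hb
        omega
      rw [hp] at hb hc
      have hd : d - d' = 2 * ((k : ℤ) + 2) * b := by linarith
      refine ⟨(l - l') / 2, b, ?_, hd⟩
      rw [hK, show 2 * (4 * m) * b = 8 * (m * b) by ring] at hd
      have e1 : l - l' = 2 * c - (d / 2 - d' / 2) := by linarith
      omega
  · have hK : (k : ℤ) + 2 = 2 * h := hh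
    have ev : ∀ d : ℤ, 2 * ((d + (d % 2) * h) / 2) = d + (d % 2) * h := by
      intro d
      rcases Int.emod_two_eq_zero_or_one d with h1 | h1 <;> rw [h1] <;> omega
    apply sc_equiv k hcard (fun l d => ((((d + (d % 2) * h) / 2 : ℤ) : ZMod 2),
      ((d + 2 * h * (l + d % 2) : ℤ) : ZMod (2 * (k + 2)))))
    · intro l d a b
      have e1 : (d + 2 * ((k : ℤ) + 2) * b) % 2 = d % 2 := by
        rw [mul_assoc]; omega
      have e2 : (d + 2 * ((k : ℤ) + 2) * b + d % 2 * h) / 2 = (d + d % 2 * h) / 2 + 2 * (h * b) := by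
        rw [hK, show 2 * (2 * h) * b = 4 * (h * b) by ring]; omega
      rw [e1, e2, Prod.mk.injEq, sc_eq2, sc_eqK, hK]
      exact ⟨⟨h * b, by ring⟩, ⟨b + a, by ring⟩⟩
    · intro l₁ d₁ l₂ d₂
      obtain ⟨w, hw⟩ := key l₁ d₁ l₂ d₂
      generalize (l₁ * (k : ℤ) + d₁) * (l₂ * (k : ℤ) + d₂) = q at hw ⊢
      have e1 : (d₁ + d₂ + q * ((k : ℤ) + 2)) % 2 = (d₁ + d₂) % 2 := by
        rw [hK, show q * (2 * h) = 2 * (q * h) by ring]; omega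
      have v := ev (d₁ + d₂ + q * ((k : ℤ) + 2))
      have v1 := ev d₁
      have v2 := ev d₂
      rw [e1] at v ⊢
      rw [Prod.mk_add_mk, ← Int.cast_add, ← Int.cast_add, Prod.mk.injEq, sc_eq2, sc_eqK]
      constructor
      · refine ⟨h * w, ?_⟩
        apply mul_left_cancel₀ (two_ne_zero (α := ℤ))
        rw [hK] at v ⊢
        linear_combination v - v1 - v2 + h * hw
      · refine ⟨2 * w, ?_⟩
        rw [hK]
        linear_combination 2 * h * hw
    · intro l d l' d' h'
      rw [Prod.mk.injEq, sc_eq2, sc_eqK] at h'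
      obtain ⟨⟨c, hc⟩, ⟨b, hb⟩⟩ := h'
      have v1 := ev d
      have v2 := ev d'
      have hp : d % 2 = d' % 2 := by
        rw [mul_assoc, mul_assoc, mul_assoc] at hb
        generalize ((k : ℤ) + 2) * b = z at hb
        generalize h * (l + d % 2) = z1 at hb
        generalize h * (l' + d' % 2) = z2 at hb
        omega
      rw [hp] at hb v1
      rw [hK] at hb ⊢
      have hd : d - d' = 2 * (h * (2 * b - (l - l'))) := by linear_combination hb
      have hc' : d - d' = 4 * c := by
        rw [hp] at hc
        linear_combination 2 * hc - v1 + v2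
      -- h odd forces l - l' even
      have hl : l - l' = 2 * (h * b - m * (l - l') - c) := by
        have : h * (2 * b - (l - l')) = 2 * c := by linarith
        rw [hm] at this ⊢
        linear_combination -this
      refine ⟨_, b - (h * b - m * (l - l') - c), hl, ?_⟩
      rw [hd]
      linear_combination (-2 * h) * hl

/-- the simple current product is well defined on integer representatives,
makes `{0,1} × ℤ/(2k̄)ℤ` a commutative group with identity `(0,0)` and the stated inverse,
and this group is `ℤ/(4k̄)ℤ` for odd `k` and `ℤ/2ℤ × ℤ/(2k̄)ℤ` for even `k`. -/
theorem simple_current_group (k : ℕ) [NeZero (2 * (k + 2))] :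
    (∀ l₁ d₁ l₂ d₂ : ℤ,
      scMul k ((l₁ : ZMod 2), (d₁ : ZMod (2 * (k + 2))))
          ((l₂ : ZMod 2), (d₂ : ZMod (2 * (k + 2))))
        = (((l₁ + l₂ + (l₁ * (k : ℤ) + d₁) * (l₂ * (k : ℤ) + d₂) : ℤ) : ZMod 2),
           ((d₁ + d₂ + (l₁ * (k : ℤ) + d₁) * (l₂ * (k : ℤ) + d₂) * ((k : ℤ) + 2) : ℤ) :
              ZMod (2 * (k + 2)))))
    ∧ (∀ x y, scMul k x y = scMul k y x)
    ∧ (∀ x y z, scMul k (scMul k x y) z = scMul k x (scMul k y z))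
    ∧ (∀ x, scMul k (0, 0) x = x)
    ∧ (∀ x, scMul k x (scInv k x) = (0, 0))
    ∧ (Odd k →
        ∃ e : (ZMod 2 × ZMod (2 * (k + 2))) ≃ ZMod (4 * (k + 2)),
          ∀ x y, e (scMul k x y) = e x + e y)
    ∧ (Even k →
        ∃ e : (ZMod 2 × ZMod (2 * (k + 2))) ≃ ZMod 2 × ZMod (2 * (k + 2)),
          ∀ x y, e (scMul k x y) = e x + e y) := by
  refine ⟨sc_wd k, ?_, ?_, ?_, ?_, sc_odd k, sc_even k⟩
  · intro x y
    rw [sc_rep k x, sc_rep k y, sc_wd, sc_wd, Prod.mk.injEq]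
    constructor <;> congr 1 <;> ring
  · intro x y z
    rw [sc_rep k x, sc_rep k y, sc_rep k z]
    generalize (x.1.val : ℤ) = a
    generalize (x.2.val : ℤ) = b
    generalize (y.1.val : ℤ) = c
    generalize (y.2.val : ℤ) = d
    generalize (z.1.val : ℤ) = e
    generalize (z.2.val : ℤ) = f
    rw [sc_wd, sc_wd, sc_wd, sc_wd, Prod.mk.injEq, sc_eq2, sc_eqK]
    refine ⟨⟨0, by ring⟩, ⟨0, by ring⟩⟩
  · intro x
    rw [sc_rep k x]
    have := sc_wd k 0 0 (x.1.val : ℤ) (x.2.val : ℤ)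
    rw [Int.cast_zero, Int.cast_zero] at this
    rw [this, Prod.mk.injEq]
    constructor <;> congr 1 <;> ring
  · intro x
    have hx := sc_rep k x
    unfold scInv
    generalize (x.1.val : ℤ) = l at hx ⊢
    generalize (x.2.val : ℤ) = d at hx ⊢
    rw [hx, sc_wd, ← Int.cast_zero (R := ZMod 2), ← Int.cast_zero (R := ZMod (2 * (k + 2))), Prod.mk.injEq, sc_eq2, sc_eqK]
    obtain ⟨r, hr⟩ := Int.even_mul_succ_self (l * (k : ℤ) + d)
    refine ⟨⟨l + r - (l * k + d) * d + (l * k + d) ^ 2 * (k + 1), ?_⟩,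
      ⟨r - (l * k + d) * d + (l * k + d) ^ 2 * (k + 1), ?_⟩⟩
    · linear_combination hr
    · linear_combination ((k : ℤ) + 2) * hr
end

section
/- Let k be an odd positive integer, k̄ = k+2, and let (v,z,n) satisfy v ∣ k̄, k̄ ∣ v², (v²/k̄) ∣ (4z²−1), and n ∈ {0,1}. Say that a quadruple of integers (a,c,a',c') with a,a' ∈ {0,…,k} satisfies condition P if: a' = J^{(a+c)n} a (where J^m a = a for m even and k−a for m odd), c' ≡ c + (a+c)n (mod 2), and c' ≡ 2cz (mod v²/k̄). Then for any two quadruples (a,c,a',c') and (d,f,d',f') satisfying P, the mutual locality exponent μ = (C'·F' − C·F)/(2k̄) + ([a+C][d+F] − [a'+C'][d'+F'])/4, where C = c·k̄/v, C' = c'·k̄/v, F = f·k̄/v, F' = f'·k̄/v, satisfies 2μ ∈ ℤ. -/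
/-- Condition `P` describing the nonzero entries of the odd-level physical
invariant `M⁰[v,z,n]`. -/
def P0 (k v z n a c a' c' : ℤ) : Prop :=
  a' = Jpow k ((a + c) * n) a ∧
  c' ≡ c + (a + c) * n [ZMOD 2] ∧
  c' ≡ 2 * c * z [ZMOD (v ^ 2 / (k + 2))]

theorem par_eq_of_P0 (k v z n w a c a' c' : ℤ) (hk : k % 2 = 1) (hw : w % 2 = 1)
    (hn : n = 0 ∨ n = 1) (h : P0 k v z n a c a' c') :
    par (a' + c' * w) = par (a + c * w) := by
  obtain ⟨h1, h2, -⟩ := h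
  obtain ⟨t, rfl⟩ : ∃ t, w = 2 * t + 1 := ⟨w / 2, by omega⟩
  have e1 : a' + c' * (2 * t + 1) = a' + c' + 2 * (c' * t) := by ring
  have e2 : a + c * (2 * t + 1) = a + c + 2 * (c * t) := by ring
  rw [e1, e2]
  unfold par
  unfold Jpow at h1
  unfold Int.ModEq at h2
  rcases hn with rfl | rfl
  · simp at h1 h2
    omega
  · simp only [mul_one] at h1 h2
    split_ifs at h1 <;> omega

/-- any two fields appearing in the physical invariant `M⁰[v,z,n]`
(for odd `k`) are mutually semi-local: twice the mutual locality exponent is an integer. -/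
theorem semilocality_M0 (k v z n : ℤ) (hk : Odd k) (hkpos : 0 < k)
    (hv1 : v ∣ k + 2) (hv2 : (k + 2) ∣ v ^ 2)
    (hz : (v ^ 2 / (k + 2)) ∣ (4 * z ^ 2 - 1)) (hn : n = 0 ∨ n = 1)
    (a c a' c' d f d' f' : ℤ)
    (ha : 0 ≤ a ∧ a ≤ k) (ha' : 0 ≤ a' ∧ a' ≤ k)
    (hd : 0 ≤ d ∧ d ≤ k) (hd' : 0 ≤ d' ∧ d' ≤ k)
    (hP1 : P0 k v z n a c a' c') (hP2 : P0 k v z n d f d' f') :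
    ∃ m : ℤ,
      2 * ((((c' * ((k + 2) / v)) * (f' * ((k + 2) / v))
              - (c * ((k + 2) / v)) * (f * ((k + 2) / v)) : ℤ) : ℚ) / (2 * ((k : ℚ) + 2))
        + ((par (a + c * ((k + 2) / v)) * par (d + f * ((k + 2) / v))
              - par (a' + c' * ((k + 2) / v)) * par (d' + f' * ((k + 2) / v)) : ℤ) : ℚ) / 4)
      = (m : ℚ) := by
  obtain ⟨w, hw⟩ := hv1
  have hv0 : v ≠ 0 := by
    rintro rfl
    simp at hw
    omega
  have hw0 : w ≠ 0 := by
    rintro rfl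
    simp at hw
    omega
  have hk2 : k % 2 = 1 := Int.odd_iff.mp hk
  have hwodd : w % 2 = 1 := by
    have h : Odd (v * w) := by
      rw [← hw, Int.odd_iff]
      omega
    exact Int.odd_iff.mp (Int.odd_mul.mp h).2
  obtain ⟨u, hu⟩ := hv2
  have hvu : v = w * u := by
    rw [hw] at hu
    apply mul_left_cancel₀ hv0
    linear_combination hu
  have hk0 : k + 2 ≠ 0 := by omega
  have hdiv : (k + 2) / v = w := by
    rw [hw]
    exact Int.mul_ediv_cancel_left _ hv0
  have hdiv2 : v ^ 2 / (k + 2) = u := by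
    rw [hu]
    exact Int.mul_ediv_cancel_left _ hk0
  have p1 := par_eq_of_P0 k v z n w a c a' c' hk2 hwodd hn hP1
  have p2 := par_eq_of_P0 k v z n w d f d' f' hk2 hwodd hn hP2
  have q1 := hP1.2.2
  have q2 := hP2.2.2
  rw [hdiv2] at hz q1 q2
  obtain ⟨x, hx⟩ := q1.symm.dvd
  obtain ⟨y, hy⟩ := q2.symm.dvd
  obtain ⟨r, hr⟩ := hz
  have key : ∃ m, c' * f' - c * f = u * m :=
    ⟨c * f * r + x * f' + 2 * c * z * y, by
      linear_combination c * f * hr + f' * hx + 2 * c * z * hy⟩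
  obtain ⟨m, hm⟩ := key
  refine ⟨m, ?_⟩
  rw [hdiv, p1, p2, sub_self]
  have e : c' * w * (f' * w) - c * w * (f * w) = (k + 2) * m := by
    rw [hw, hvu]
    linear_combination w ^ 2 * hm
  rw [e]
  have hkq : (k : ℚ) + 2 ≠ 0 := by exact_mod_cast hk0
  push_cast
  field_simp
  ring
end

section
/- Let k be a positive integer with 4 ∣ k+2, set k̄ = k+2, and let (v,z,n) satisfy 2v ∣ k̄, k̄ ∣ v², y := k̄(z²−1)/(2v²) ∈ ℤ, and n ∈ {0,1}. Say that a quadruple of integers (a,c,a',c') with a,a' ∈ {0,…,k} satisfies condition P if: a' = J^{an+cy} a (where J^m a = a for m even and k−a for m odd) and c' ≡ cz + a·y·v²/k̄ (mod 2v²/k̄). Then for any two quadruples (a,c,a',c') and (d,f,d',f') satisfying P, the mutual locality exponent μ = (C'·F' − C·F)/(2k̄) + ([a+C][d+F] − [a'+C'][d'+F'])/4, where C = c·k̄/v, C' = c'·k̄/v, F = f·k̄/v, F' = f'·k̄/v, satisfies 2μ ∈ ℤ. -/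
/-- Condition `P` describing the nonzero entries of the physical invariant
`M^{2,0}[v,z,n]` (for `4 ∣ k+2`), where `y = k̄(z²-1)/(2v²)`. -/
def P20 (k v z n a c a' c' : ℤ) : Prop :=
  a' = Jpow k (a * n + c * ((k + 2) * (z ^ 2 - 1) / (2 * v ^ 2))) a ∧
  c' ≡ c * z + a * ((k + 2) * (z ^ 2 - 1) / (2 * v ^ 2)) * (v ^ 2 / (k + 2))
    [ZMOD (2 * v ^ 2 / (k + 2))]

/-- any two fields appearing in the physical invariant `M^{2,0}[v,z,n]`
(for `4 ∣ k+2`) are mutually semi-local: twice the mutual locality exponent is an integer. -/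
theorem semilocality_M20 (k v z n : ℤ) (hk : (4 : ℤ) ∣ k + 2) (hkpos : 0 < k)
    (hv1 : 2 * v ∣ k + 2) (hv2 : (k + 2) ∣ v ^ 2)
    (hy : (2 * v ^ 2) ∣ (k + 2) * (z ^ 2 - 1)) (hn : n = 0 ∨ n = 1)
    (a c a' c' d f d' f' : ℤ)
    (ha : 0 ≤ a ∧ a ≤ k) (ha' : 0 ≤ a' ∧ a' ≤ k)
    (hd : 0 ≤ d ∧ d ≤ k) (hd' : 0 ≤ d' ∧ d' ≤ k)
    (hP1 : P20 k v z n a c a' c') (hP2 : P20 k v z n d f d' f') :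
    ∃ m : ℤ,
      2 * ((((c' * ((k + 2) / v)) * (f' * ((k + 2) / v))
              - (c * ((k + 2) / v)) * (f * ((k + 2) / v)) : ℤ) : ℚ) / (2 * ((k : ℚ) + 2))
        + ((par (a + c * ((k + 2) / v)) * par (d + f * ((k + 2) / v))
              - par (a' + c' * ((k + 2) / v)) * par (d' + f' * ((k + 2) / v)) : ℤ) : ℚ) / 4)
      = (m : ℚ) := by
  have parJ : ∀ m b : ℤ, Jpow k m b % 2 = b % 2 := by
    intro m b
    unfold Jpow
    split_ifs <;> omega
  obtain ⟨s, hs⟩ := hv1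
  obtain ⟨w, hw⟩ := hv2
  have hv0 : v ≠ 0 := by
    rintro rfl
    simp at hs
    omega
  have hK0 : k + 2 ≠ 0 := by omega
  have hvt : v = 2 * s * w := by
    apply mul_left_cancel₀ hv0
    rw [hs] at hw
    linear_combination hw
  have hw0 : w ≠ 0 := by
    rintro rfl
    simp at hvt
    exact hv0 hvt
  have hs0 : s ≠ 0 := by
    rintro rfl
    simp at hvt
    exact hv0 hvt
  have ht : (k + 2) / v = 2 * s := by
    rw [hs, show 2 * v * s = v * (2 * s) by ring, Int.mul_ediv_cancel_left _ hv0]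
  have e1 : v ^ 2 / (k + 2) = w := by
    rw [hw, Int.mul_ediv_cancel_left _ hK0]
  have e2 : 2 * v ^ 2 / (k + 2) = 2 * w := by
    rw [hw, show 2 * ((k + 2) * w) = (k + 2) * (2 * w) by ring, Int.mul_ediv_cancel_left _ hK0]
  obtain ⟨y, hy⟩ := hy
  have e3 : (k + 2) * (z ^ 2 - 1) / (2 * v ^ 2) = y := by
    rw [hy, Int.mul_ediv_cancel_left _ (by positivity)]
  have hz : z ^ 2 - 1 = 2 * w * y := by
    apply mul_left_cancel₀ hK0
    rw [hy, hw]
    ring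
  obtain ⟨hA, hC⟩ := hP1
  obtain ⟨hD, hF⟩ := hP2
  rw [e1, e2, e3] at hC hF
  obtain ⟨l, hl⟩ := hC.symm.dvd
  obtain ⟨m, hm⟩ := hF.symm.dvd
  have hc : c' = c * z + w * (a * y + 2 * l) := by linear_combination hl
  have hf : f' = f * z + w * (d * y + 2 * m) := by linear_combination hm
  have hpar : ∀ b x : ℤ, par (b + x * (2 * s)) = b % 2 := by
    intro b x
    unfold par
    rw [show b + x * (2 * s) = b + 2 * (x * s) by ring, Int.add_mul_emod_self_left]
  have hAA : a' % 2 = a % 2 := by rw [hA, parJ]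
  have hDD : d' % 2 = d % 2 := by rw [hD, parJ]
  rw [ht]
  simp only [hpar, hAA, hDD]
  have hX : c' * f' - c * f = w * (2 * y * c * f + c * z * (d * y + 2 * m)
      + f * z * (a * y + 2 * l) + w * (a * y + 2 * l) * (d * y + 2 * m)) := by
    rw [hc, hf]
    linear_combination c * f * hz
  generalize 2 * y * c * f + c * z * (d * y + 2 * m)
      + f * z * (a * y + 2 * l) + w * (a * y + 2 * l) * (d * y + 2 * m) = q at hX
  refine ⟨q, ?_⟩
  have hnum : c' * (2 * s) * (f' * (2 * s)) - c * (2 * s) * (f * (2 * s)) = (k + 2) * q := by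
    rw [hs, hvt]
    linear_combination (4 * s ^ 2) * hX
  rw [hnum]
  have hKQ : (k : ℚ) + 2 ≠ 0 := by exact_mod_cast hK0
  push_cast
  field_simp
  ring
end

section
/- Fix an integer k ≥ 0, set k̄ = k+2, and define 𝐣(a,c) = (k−a, c+k̄) on Q_k. Let M : Q_k × Q_k → ℂ be a matrix satisfying M = S·M·S^†, where S is the N=2 minimal model S-matrix. Then for all m, n ∈ {0,1} and all (r,s), (t,u) ∈ Q_k: Σ_{(a,c)∈Q_k} Σ_{(a',c')∈Q_k} S_{r,s;a,c}·M_{𝐣^n(a,c); a',c'}·conj(S_{a',c';t,u})·(−1)^{(a+c+n)m} = (−1)^{(r+s+m)n}·M_{𝐣^m(r,s); t,u}. -/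
open Matrix

/-- The index set `Q_k = {0,…,k} × ℤ/(2k̄)ℤ` of the level-`k` N=2 minimal model. -/
abbrev Qk (k : ℕ) := Fin (k + 1) × ZMod (2 * (k + 2))

/-- The N=2 minimal model S-matrix as a matrix on `Q_k`. -/
noncomputable def Smat (k : ℕ) : Matrix (Qk k) (Qk k) ℂ := fun p q =>
  Smin k ((p.1 : ℕ) : ℤ) ((p.2.val : ℕ) : ℤ) ((q.1 : ℕ) : ℤ) ((q.2.val : ℕ) : ℤ)

/-- The simple current `𝐣(a,c) = (k-a, c+k̄)` acting on `Q_k`. -/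
def jmap (k : ℕ) (p : Qk k) : Qk k :=
  (⟨k - (p.1 : ℕ), Nat.lt_succ_of_le (Nat.sub_le _ _)⟩,
    p.2 + ((k + 2 : ℕ) : ZMod (2 * (k + 2))))

lemma Ssu2_symm (k : ℕ) (a b : ℤ) : Ssu2 k a b = Ssu2 k b a := by
  unfold Ssu2
  rw [show Real.pi * ((a : ℝ) + 1) * ((b : ℝ) + 1) = Real.pi * ((b : ℝ) + 1) * ((a : ℝ) + 1) by ring]

lemma Su1_symm (k : ℕ) (a b : ℤ) : Su1 k a b = Su1 k b a := by
  unfold Su1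
  rw [show -(Real.pi : ℂ) * Complex.I * (a : ℂ) * (b : ℂ)
    = -(Real.pi : ℂ) * Complex.I * (b : ℂ) * (a : ℂ) by ring]

lemma Smat_symm (k : ℕ) (p q : Qk k) : Smat k p q = Smat k q p := by
  unfold Smat Smin
  rw [Ssu2_symm, Su1_symm 2, Su1_symm (k + 2)]

lemma Ssu2_j (k : ℕ) (a b : ℕ) : Ssu2 k a ((k : ℤ) - b) = (-1) ^ a * Ssu2 k a b := by
  unfold Ssu2
  have hk : (k : ℝ) + 2 ≠ 0 := by positivity
  have : Real.pi * (((a : ℤ) : ℝ) + 1) * ((((k : ℤ) - b : ℤ) : ℝ) + 1) / ((k : ℝ) + 2)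
      = ((a + 1 : ℕ) : ℝ) * Real.pi
        - Real.pi * (((a : ℤ) : ℝ) + 1) * (((b : ℤ) : ℝ) + 1) / ((k : ℝ) + 2) := by
    push_cast
    field_simp
    ring
  rw [this, Real.sin_nat_mul_pi_sub]
  push_cast
  ring

lemma exp_aux (c : ℕ) : Complex.exp (-(c * (Real.pi * Complex.I))) = (-1) ^ c := by
  rw [Complex.exp_neg, Complex.exp_nat_mul, Complex.exp_pi_mul_I, ← inv_pow]
  norm_num

lemma exp_aux2 (c : ℕ) : Complex.exp (c * (Real.pi * Complex.I)) = (-1) ^ c := by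
  rw [Complex.exp_nat_mul, Complex.exp_pi_mul_I]

lemma Su1_j (k : ℕ) (c d e : ℕ) (h : (e : ℤ) = d + (k + 2) ∨ (e : ℤ) = d - (k + 2)) :
    Su1 (k + 2) c e = (-1) ^ c * Su1 (k + 2) c d := by
  have hk : (k : ℂ) + 2 ≠ 0 := by exact_mod_cast (by omega : k + 2 ≠ 0)
  unfold Su1
  rcases h with h | h
  · rw [h, ← exp_aux, mul_left_comm, ← Complex.exp_add]
    congr 2
    push_cast
    field_simp
    ring
  · rw [h, ← exp_aux2, mul_left_comm, ← Complex.exp_add]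
    congr 2
    push_cast
    field_simp
    ring

lemma val_j (k : ℕ) [NeZero (2 * (k + 2))] (c : ZMod (2 * (k + 2))) :
    ((c + ((k + 2 : ℕ) : ZMod (2 * (k + 2)))).val : ℤ) = c.val + (k + 2) ∨
    ((c + ((k + 2 : ℕ) : ZMod (2 * (k + 2)))).val : ℤ) = c.val - (k + 2) := by
  have h := ZMod.val_lt c
  have hv : ((k + 2 : ℕ) : ZMod (2 * (k + 2))).val = k + 2 := by
    rw [ZMod.val_natCast, Nat.mod_eq_of_lt (by omega)]
  rw [ZMod.val_add, hv]
  rcases lt_or_ge (c.val + (k + 2)) (2 * (k + 2)) with h1 | h1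
  · rw [Nat.mod_eq_of_lt h1]; left; push_cast; rfl
  · right
    rw [Nat.mod_eq_sub_mod h1, Nat.mod_eq_of_lt (by omega)]
    omega

lemma Smat_j (k : ℕ) [NeZero (2 * (k + 2))] (p q : Qk k) :
    Smat k p (jmap k q) = (-1) ^ ((p.1 : ℕ) + p.2.val) * Smat k p q := by
  obtain ⟨b, d⟩ := q
  have hb : (b : ℕ) ≤ k := Nat.lt_succ_iff.mp b.2
  have hv := val_j k d
  unfold Smat Smin jmap
  simp only
  rw [Su1_j k _ _ _ hv, Nat.cast_sub hb, Ssu2_j]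
  have : par ((k : ℤ) - (b : ℕ) + ((d + ((k + 2 : ℕ) : ZMod (2 * (k + 2)))).val : ℤ))
      = par ((b : ℕ) + (d.val : ℤ)) := by
    unfold par
    omega
  rw [this]
  simp only [map_mul, map_pow, map_neg, map_one]
  ring

lemma sign_j (k : ℕ) [NeZero (2 * (k + 2))] (p : Qk k) :
    (-1 : ℂ) ^ (((jmap k p).1 : ℕ) + (jmap k p).2.val) = (-1) ^ ((p.1 : ℕ) + p.2.val) := by
  obtain ⟨b, d⟩ := p
  have hb : (b : ℕ) ≤ k := Nat.lt_succ_iff.mp b.2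
  have hv := val_j k d
  unfold jmap
  simp only
  rw [neg_one_pow_eq_pow_mod_two, neg_one_pow_eq_pow_mod_two (n := (b : ℕ) + d.val)]
  congr 1
  omega

lemma jmap_inv (k : ℕ) : Function.Involutive (jmap k) := by
  rintro ⟨b, d⟩
  have hb : (b : ℕ) ≤ k := Nat.lt_succ_iff.mp b.2
  have h0 : ((k + 2 : ℕ) : ZMod (2 * (k + 2))) + ((k + 2 : ℕ) : ZMod (2 * (k + 2))) = 0 := by
    rw [← two_mul]
    exact_mod_cast ZMod.natCast_self (2 * (k + 2))
  unfold jmap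
  ext1
  · ext1; simp only; omega
  · simp only; rw [add_assoc, h0, add_zero]

lemma box_sum (k : ℕ) (M : Matrix (Qk k) (Qk k) ℂ) [NeZero (2 * (k + 2))]
    (hM : M = Smat k * M * (Smat k)ᴴ) (x y : Qk k) :
    ∑ p, ∑ q, Smat k x p * M p q * (starRingEnd ℂ) (Smat k q y) = M x y := by
  conv_rhs => rw [hM]
  simp only [Matrix.mul_apply, Matrix.conjTranspose_apply, Finset.sum_mul]
  rw [Finset.sum_comm]
  refine Finset.sum_congr rfl fun q _ => Finset.sum_congr rfl fun p _ => ?_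
  rw [Smat_symm k q y]
  rfl

/-- The case `n = 0`. -/
lemma box_zero (k : ℕ) [NeZero (2 * (k + 2))]
    (M : Matrix (Qk k) (Qk k) ℂ) (hM : M = Smat k * M * (Smat k)ᴴ)
    (m : ℕ) (hm : m ≤ 1) (x y : Qk k) :
    (∑ p : Qk k, ∑ q : Qk k,
        Smat k x p * M p q * (starRingEnd ℂ) (Smat k q y) *
          (-1 : ℂ) ^ (((p.1 : ℕ) + p.2.val) * m))
      = M ((jmap k)^[m] x) y := by
  rw [← box_sum k M hM]
  refine Finset.sum_congr rfl fun p _ => Finset.sum_congr rfl fun q _ => ?_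
  interval_cases m
  · simp
  · simp only [Function.iterate_one, mul_one]
    rw [Smat_symm k (jmap k x) p, Smat_j, Smat_symm k p x]
    ring

/-- for an S-invariant matrix `M`, conjugating the `𝐣^n`-twisted
and sign-decorated matrix by `S` yields the `𝐣^m`-twisted, sign-decorated matrix. -/
theorem S_transform_of_twisted_box (k : ℕ) [NeZero (2 * (k + 2))]
    (M : Matrix (Qk k) (Qk k) ℂ) (hM : M = Smat k * M * (Smat k)ᴴ)
    (m n : ℕ) (hm : m ≤ 1) (hn : n ≤ 1)
    (r t : Fin (k + 1)) (s u : ZMod (2 * (k + 2))) :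
    (∑ p : Qk k, ∑ q : Qk k,
        Smat k (r, s) p * M ((jmap k)^[n] p) q * (starRingEnd ℂ) (Smat k q (t, u)) *
          (-1 : ℂ) ^ (((p.1 : ℕ) + p.2.val + n) * m))
      = (-1 : ℂ) ^ (((r : ℕ) + s.val + m) * n) * M ((jmap k)^[m] (r, s)) (t, u) := by
  rw [← box_zero k M hM m hm]
  interval_cases n
  · simp
  · simp only [Function.iterate_one, mul_one]
    rw [← (Equiv.sum_comp (jmap_inv k).toPerm), Finset.mul_sum]
    refine Finset.sum_congr rfl fun p _ => ?_
    rw [Finset.mul_sum]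
    refine Finset.sum_congr rfl fun q _ => ?_
    have e : (-1 : ℂ) ^ ((((jmap k p).1 : ℕ) + (jmap k p).2.val + 1) * m)
        = (-1) ^ (((p.1 : ℕ) + p.2.val) * m) * (-1) ^ m := by
      rw [add_mul, pow_add, pow_mul, sign_j, ← pow_mul, one_mul]
    rw [Function.Involutive.coe_toPerm, jmap_inv k p, Smat_j, e, pow_add _ _ m]
    ring
end

section
/- Fix an integer k ≥ 0, set k̄ = k+2, and define 𝐣(a,c) = (k−a, c+k̄) on Q_k. Let M : Q_k × Q_k → ℂ be a matrix such that M_{a,c;a',c'} ≠ 0 implies h_{a,c} − h_{a',c'} ∈ ℤ for all (a,c), (a',c') ∈ Q_k. Then for all m, n ∈ {0,1} and all (a,c), (a',c') ∈ Q_k: M_{𝐣^n(a,c); a',c'}·(−1)^{(a+c+n)m}·exp(2πi·(h_{a,c} − h_{a',c'})) = M_{𝐣^n(a,c); a',c'}·(−1)^{(a+c+n)(m+n)}. -/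
lemma hw_shift (k : ℕ) (a c s : ℤ) (hs : s = 1 ∨ s = -1) :
    hw k a c - hw k (k - a) (c + s * (k + 2)) = ((a : ℝ) + s * c + 1) / 2 := by
  have hp : par ((k : ℤ) - a + (c + s * (k + 2))) = par (a + c) := by
    unfold par
    rcases hs with rfl | rfl <;> omega
  have hk : (k : ℝ) + 2 ≠ 0 := by positivity
  have h1 : (s : ℝ) ^ 2 = 1 := by rcases hs with rfl | rfl <;> norm_num
  unfold hw
  rw [hp]
  push_cast
  field_simp
  linear_combination ((k : ℝ) + 2) ^ 2 * 16 * h1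

lemma exp_half (N : ℕ) (t : ℤ) (x : ℝ) (hx : x = (N : ℝ) / 2 + t) :
    Complex.exp ((2 : ℂ) * (Real.pi : ℂ) * Complex.I * (x : ℂ)) = (-1 : ℂ) ^ N := by
  have : (2 : ℂ) * (Real.pi : ℂ) * Complex.I * (x : ℂ)
      = (N : ℂ) * (Real.pi * Complex.I) + t * (2 * Real.pi * Complex.I) := by
    rw [hx]; push_cast; ring
  rw [this, Complex.exp_add, Complex.exp_int_mul_two_pi_mul_I, mul_one, Complex.exp_nat_mul,
    Complex.exp_pi_mul_I]

lemma jmap_shift (k : ℕ) [NeZero (2 * (k + 2))] (p : Qk k) :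
    ∃ t : ℤ, hw k ((p.1 : ℕ) : ℤ) ((p.2.val : ℕ) : ℤ)
      - hw k (((jmap k p).1 : ℕ) : ℤ) (((jmap k p).2.val : ℕ) : ℤ)
      = (((p.1 : ℕ) + p.2.val + 1 : ℕ) : ℝ) / 2 + t := by
  obtain ⟨a, c⟩ := p
  have hc : c.val < 2 * (k + 2) := ZMod.val_lt c
  have ha : (a : ℕ) ≤ k := Nat.lt_succ_iff.mp a.2
  have hk : ((k + 2 : ℕ) : ZMod (2 * (k + 2))).val = k + 2 :=
    ZMod.val_natCast_of_lt (by omega)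
  have h1 : (((jmap k (a, c)).1 : ℕ) : ℤ) = (k : ℤ) - (a : ℕ) := by
    simp only [jmap]; omega
  have h2 : (jmap k (a, c)).2.val = (c.val + (k + 2)) % (2 * (k + 2)) := by
    simp only [jmap]; rw [ZMod.val_add, hk]
  by_cases h : c.val < k + 2
  · have h3 : (((jmap k (a, c)).2.val : ℕ) : ℤ) = (c.val : ℤ) + 1 * (k + 2) := by
      rw [h2, Nat.mod_eq_of_lt (by omega)]; push_cast; ring
    refine ⟨0, ?_⟩
    rw [h1, h3, hw_shift k _ _ 1 (Or.inl rfl)]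
    push_cast; ring
  · have h3 : (((jmap k (a, c)).2.val : ℕ) : ℤ) = (c.val : ℤ) + (-1) * (k + 2) := by
      rw [h2, Nat.mod_eq_sub_mod (by omega), Nat.mod_eq_of_lt (by omega)]; omega
    refine ⟨-(c.val : ℤ), ?_⟩
    rw [h1, h3, hw_shift k _ _ (-1) (Or.inr rfl)]
    push_cast; ring

/-- if nonzero entries of `M` only couple sectors with integral spin,
then the `T`-phase acting on the `𝐣^n`-twisted, sign-decorated matrix shifts `m` to `m+n`. -/
theorem T_transform_of_twisted_box (k : ℕ) [NeZero (2 * (k + 2))]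
    (M : Matrix (Qk k) (Qk k) ℂ)
    (hM : ∀ p q : Qk k, M p q ≠ 0 →
      ∃ l : ℤ,
        hw k ((p.1 : ℕ) : ℤ) ((p.2.val : ℕ) : ℤ)
          - hw k ((q.1 : ℕ) : ℤ) ((q.2.val : ℕ) : ℤ) = (l : ℝ))
    (m n : ℕ) (hm : m ≤ 1) (hn : n ≤ 1) (p q : Qk k) :
    M ((jmap k)^[n] p) q * (-1 : ℂ) ^ (((p.1 : ℕ) + p.2.val + n) * m) *
        Complex.exp ((2 : ℂ) * (Real.pi : ℂ) * Complex.I *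
          ((hw k ((p.1 : ℕ) : ℤ) ((p.2.val : ℕ) : ℤ)
              - hw k ((q.1 : ℕ) : ℤ) ((q.2.val : ℕ) : ℤ) : ℝ) : ℂ))
      = M ((jmap k)^[n] p) q * (-1 : ℂ) ^ (((p.1 : ℕ) + p.2.val + n) * (m + n)) := by
  by_cases h0 : M ((jmap k)^[n] p) q = 0
  · simp [h0]
  obtain ⟨l, hl⟩ := hM _ _ h0
  have key : ∃ t : ℤ, hw k ((p.1 : ℕ) : ℤ) ((p.2.val : ℕ) : ℤ)
      - hw k ((q.1 : ℕ) : ℤ) ((q.2.val : ℕ) : ℤ)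
      = ((((p.1 : ℕ) + p.2.val + n) * n : ℕ) : ℝ) / 2 + t := by
    obtain rfl | rfl : n = 0 ∨ n = 1 := by omega
    · exact ⟨l, by simpa using hl⟩
    · obtain ⟨t, ht⟩ := jmap_shift k p
      simp only [Function.iterate_one] at hl
      refine ⟨t + l, ?_⟩
      rw [mul_one]
      push_cast at ht ⊢
      linarith
  obtain ⟨t, ht⟩ := key
  rw [exp_half _ t _ ht, mul_assoc, ← pow_add, ← mul_add]
end

section
/- Let k be an odd positive integer and set k̄ = k+2. Then the number of triples (v,z,n) of integers with 1 ≤ v ≤ k̄, v ∣ k̄, k̄ ∣ v², 1 ≤ z ≤ v²/k̄, (v²/k̄) ∣ (4z²−1), and n ∈ {0,1}, equals d(2k̄), where d(m) denotes the number of positive divisors of m. -/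
theorem aux_data (N v : ℕ) (hN : 0 < N) (h1 : v ∣ N) (h2 : N ∣ v ^ 2) :
    ∃ w m, 0 < w ∧ 0 < m ∧ N = m * w ^ 2 ∧ v = m * w ∧ v ^ 2 / N = m ∧ N / v = w := by
  obtain ⟨w, hw⟩ := h1
  obtain ⟨m, hm⟩ := h2
  have hv : 0 < v := Nat.pos_of_ne_zero (by rintro rfl; simp at hw; omega)
  have hw0 : 0 < w := Nat.pos_of_ne_zero (by rintro rfl; simp at hw; omega)
  have hvm : v = m * w := by
    apply Nat.eq_of_mul_eq_mul_left hv
    rw [← pow_two, hm, hw]; ring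
  have hm0 : 0 < m := Nat.pos_of_ne_zero (by rintro rfl; simp at hvm; omega)
  refine ⟨w, m, hw0, hm0, by rw [hw, hvm]; ring, hvm, ?_, ?_⟩
  · rw [hm]; exact Nat.mul_div_cancel_left _ hN
  · rw [hw]; exact Nat.mul_div_cancel_left _ hv

theorem aux_cop (z : ℕ) (hz : 1 ≤ z) : Nat.Coprime (2 * z - 1) (2 * z + 1) := by
  obtain ⟨y, rfl⟩ : ∃ y, z = y + 1 := ⟨z - 1, by omega⟩
  have e1 : 2 * (y + 1) - 1 = 2 * y + 1 := by omega
  have e2 : 2 * (y + 1) + 1 = 2 + (2 * y + 1) := by omega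
  rw [e1, e2, Nat.coprime_add_self_right]
  exact (Nat.coprime_two_right).2 ⟨y, rfl⟩

theorem aux_fac (m z : ℕ) (hz : 1 ≤ z) (h : m ∣ 4 * z ^ 2 - 1) :
    Nat.gcd (2 * z - 1) m * Nat.gcd (2 * z + 1) m = m ∧
    Nat.Coprime (Nat.gcd (2 * z - 1) m) (Nat.gcd (2 * z + 1) m) := by
  have hc := aux_cop z hz
  have e : 4 * z ^ 2 - 1 = (2 * z - 1) * (2 * z + 1) := by
    obtain ⟨y, rfl⟩ : ∃ y, z = y + 1 := ⟨z - 1, by omega⟩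
    have e1 : 2 * (y + 1) - 1 = 2 * y + 1 := by omega
    rw [e1]
    have : 4 * (y + 1) ^ 2 = (2 * y + 1) * (2 * (y + 1) + 1) + 1 := by ring
    omega
  constructor
  · rw [Nat.gcd_comm _ m, Nat.gcd_comm _ m, ← Nat.Coprime.gcd_mul m hc, ← e]
    exact Nat.gcd_eq_left h
  · exact Nat.Coprime.coprime_dvd_left (Nat.gcd_dvd_left _ _)
      (Nat.Coprime.coprime_dvd_right (Nat.gcd_dvd_left _ _) hc)

theorem aux_uniq (a b z z' : ℕ) (ha : Odd (a * b)) (hab : a.Coprime b)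
    (hz : 1 ≤ z) (hz' : 1 ≤ z') (hzm : z ≤ a * b) (hzm' : z' ≤ a * b)
    (h1 : a ∣ 2 * z - 1) (h1' : a ∣ 2 * z' - 1)
    (h2 : b ∣ 2 * z + 1) (h2' : b ∣ 2 * z' + 1) : z = z' := by
  have k1 : (a : ℤ) ∣ 2 * ((z : ℤ) - z') := by
    have x : (a : ℤ) ∣ ((2 * z - 1 : ℕ) : ℤ) := by exact_mod_cast h1
    have x' : (a : ℤ) ∣ ((2 * z' - 1 : ℕ) : ℤ) := by exact_mod_cast h1'
    have := dvd_sub x x'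
    rw [Nat.cast_sub (by omega), Nat.cast_sub (by omega)] at this
    push_cast at this
    refine this.trans (dvd_of_eq ?_); ring
  have k2 : (b : ℤ) ∣ 2 * ((z : ℤ) - z') := by
    have x : (b : ℤ) ∣ ((2 * z + 1 : ℕ) : ℤ) := by exact_mod_cast h2
    have x' : (b : ℤ) ∣ ((2 * z' + 1 : ℕ) : ℤ) := by exact_mod_cast h2'
    have := dvd_sub x x'
    push_cast at this
    refine this.trans (dvd_of_eq ?_); ring
  have k3 : ((a * b : ℕ) : ℤ) ∣ 2 * ((z : ℤ) - z') := by
    push_cast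
    exact IsCoprime.mul_dvd (Nat.isCoprime_iff_coprime.2 hab) k1 k2
  have k4 : ((a * b : ℕ) : ℤ) ∣ ((z : ℤ) - z') := by
    refine IsCoprime.dvd_of_dvd_mul_left ?_ k3
    exact_mod_cast Nat.isCoprime_iff_coprime.2 (Nat.coprime_two_right.2 ha)
  have := Int.eq_zero_of_abs_lt_dvd k4 (by rw [abs_lt]; constructor <;> omega)
  omega

theorem aux_exists (a b : ℕ) (ho : Odd (a * b)) (hab : a.Coprime b) :
    ∃ z, 1 ≤ z ∧ z ≤ a * b ∧ a ∣ 2 * z - 1 ∧ b ∣ 2 * z + 1 := by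
  obtain ⟨hao, hbo⟩ := Nat.odd_mul.1 ho
  obtain ⟨s, hs⟩ := hao
  obtain ⟨t, ht⟩ := hbo
  obtain ⟨y, hy1, hy2⟩ := Nat.chineseRemainder hab (s + 1) t
  have hpos : 0 < a * b := ho.pos
  -- representative in [1, a*b]
  obtain ⟨z, hz1, hz2, hz⟩ : ∃ z, 1 ≤ z ∧ z ≤ a * b ∧ z ≡ y [MOD a * b] := by
    by_cases h0 : y % (a * b) = 0
    · refine ⟨a * b, hpos, le_rfl, ?_⟩
      simp [Nat.ModEq, h0]
    · exact ⟨y % (a * b), by omega, (Nat.mod_lt _ hpos).le, Nat.mod_modEq _ _⟩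
  have c1 : z ≡ s + 1 [MOD a] := (hz.of_mul_right b).trans hy1
  have c2 : z ≡ t [MOD b] := (hz.of_mul_left a).trans hy2
  refine ⟨z, hz1, hz2, ?_, ?_⟩
  · have h : 1 ≡ 2 * z [MOD a] := by
      refine Nat.ModEq.trans ?_ (c1.mul_left 2).symm
      have : 2 * (s + 1) = 1 + a := by omega
      rw [this]; simp [Nat.ModEq]
    exact (Nat.modEq_iff_dvd' (by omega)).1 h
  · have h : 2 * z + 1 ≡ 2 * t + 1 [MOD b] := (c2.mul_left 2).add_right 1
    rw [← ht] at h
    exact (Nat.modEq_zero_iff_dvd).1 (h.trans (by simp [Nat.ModEq]))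

theorem aux_gcd (a b z : ℕ) (hz : 1 ≤ z) (h1 : a ∣ 2 * z - 1) (h2 : b ∣ 2 * z + 1) :
    Nat.gcd (2 * z - 1) (a * b) = a := by
  have hc : Nat.Coprime (2 * z - 1) b := Nat.Coprime.coprime_dvd_right h2 (aux_cop z hz)
  rw [Nat.Coprime.gcd_mul_right_cancel_right a hc.symm]
  exact Nat.gcd_eq_right h1

theorem aux_wab (a b w a' b' w' : ℕ) (hw : 0 < w) (hab : a.Coprime b) (hab' : a'.Coprime b')
    (ha : 0 < a) (h1 : a * w = a' * w') (h2 : a * b * w ^ 2 = a' * b' * w' ^ 2) :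
    w = w' ∧ a = a' ∧ b = b' := by
  have h3 : b * w = b' * w' := by
    apply Nat.eq_of_mul_eq_mul_left (Nat.mul_pos ha hw)
    calc a * w * (b * w) = a * b * w ^ 2 := by ring
      _ = a' * b' * w' ^ 2 := h2
      _ = (a' * w') * (b' * w') := by ring
      _ = _ := by rw [h1]
  have g : Nat.gcd (a * w) (b * w) = w := by rw [Nat.gcd_mul_right, hab]; simp
  have g' : Nat.gcd (a' * w') (b' * w') = w' := by rw [Nat.gcd_mul_right, hab']; simp
  have e : w = w' := by rw [← g, ← g', h1, h3]
  subst e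
  exact ⟨rfl, Nat.eq_of_mul_eq_mul_right hw h1, Nat.eq_of_mul_eq_mul_right hw h3⟩

/-- for odd `k`, the number of triples `(v,z,n)` parametrising the
physical invariants `M⁰[v,z,n]` equals the number of divisors of `2k̄`. -/
theorem count_M0 (k : ℕ) (hk : Odd k) (hk0 : 0 < k) :
    Nat.card {t : ℕ × ℕ × ℕ //
        1 ≤ t.1 ∧ t.1 ≤ k + 2 ∧ t.1 ∣ (k + 2) ∧ (k + 2) ∣ t.1 ^ 2 ∧
        1 ≤ t.2.1 ∧ t.2.1 ≤ t.1 ^ 2 / (k + 2) ∧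
        (t.1 ^ 2 / (k + 2)) ∣ (4 * t.2.1 ^ 2 - 1) ∧
        t.2.2 ≤ 1}
      = (2 * (k + 2)).divisors.card := by
  have hN : 0 < k + 2 := by omega
  have hNo : Odd (k + 2) := by rcases hk with ⟨j, rfl⟩; exact ⟨j + 1, by ring⟩
  generalize k + 2 = N at hN hNo
  have hcard : (2 * N).divisors.card = (N.divisors ×ˢ Finset.range 2).card := by
    rw [Nat.Coprime.card_divisors_mul (Nat.coprime_two_left.2 hNo), Finset.card_product,
      Nat.Prime.divisors Nat.prime_two]
    simp [mul_comm]
  rw [hcard, ← Nat.card_eq_finsetCard]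
  refine Nat.card_eq_of_bijective (fun t => ⟨(Nat.gcd (2 * t.1.2.1 - 1) (t.1.1 ^ 2 / N)
      * (N / t.1.1), t.1.2.2), ?_⟩) ⟨?_, ?_⟩
  · obtain ⟨⟨v, z, n⟩, h1, h2, h3, h4, h5, h6, h7, h8⟩ := t
    dsimp only at *
    obtain ⟨w, m, hw, hm, eN, ev, em, ew⟩ := aux_data N v hN h3 h4
    rw [em, ew]
    simp only [Finset.mem_product, Nat.mem_divisors, Finset.mem_range]
    refine ⟨⟨?_, hN.ne'⟩, Nat.lt_succ_of_le h8⟩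
    rw [eN, pow_two]
    exact mul_dvd_mul (Nat.gcd_dvd_right _ _) (Dvd.intro _ rfl)
  · rintro ⟨⟨v, z, n⟩, h1, h2, h3, h4, h5, h6, h7, h8⟩
      ⟨⟨v', z', n'⟩, h1', h2', h3', h4', h5', h6', h7', h8'⟩ h
    dsimp only at *
    obtain ⟨w, m, hw, hm, eN, ev, em, ew⟩ := aux_data N v hN h3 h4
    obtain ⟨w', m', hw', hm', eN', ev', em', ew'⟩ := aux_data N v' hN h3' h4'
    rw [em] at h6 h7
    rw [em'] at h6' h7'
    simp only [Subtype.mk.injEq, Prod.mk.injEq, em, ew, em', ew'] at h ⊢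
    obtain ⟨hd, hn⟩ := h
    obtain ⟨f1, f2⟩ := aux_fac m z h5 h7
    obtain ⟨f1', f2'⟩ := aux_fac m' z' h5' h7'
    obtain ⟨r1, r2, r3⟩ := aux_wab _ _ w _ _ w' hw f2 f2' (Nat.gcd_pos_of_pos_right _ hm) hd
      (by rw [f1, f1', ← eN, ← eN'])
    have hmm : m = m' := by rw [← f1, ← f1', r2, r3]
    refine ⟨by rw [ev, ev', hmm, r1], ?_, hn⟩
    have hmo : Odd m := by rw [eN] at hNo; exact (Nat.odd_mul.1 hNo).1
    refine aux_uniq _ _ z z' (by rw [f1]; exact hmo) f2 h5 h5' (by rw [f1]; exact h6)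
      (by rw [f1, hmm]; exact h6') (Nat.gcd_dvd_left _ _) ?_ (Nat.gcd_dvd_left _ _) ?_
    · rw [r2]; exact Nat.gcd_dvd_left _ _
    · rw [r3]; exact Nat.gcd_dvd_left _ _
  · rintro ⟨⟨d, n⟩, h⟩
    simp only [Finset.mem_product, Nat.mem_divisors, Finset.mem_range] at h
    obtain ⟨⟨⟨e, he⟩, -⟩, hn⟩ := h
    have hd0 : 0 < d := Nat.pos_of_ne_zero (by rintro rfl; simp at he; omega)
    obtain ⟨a, b, hab, ha, hb⟩ := Nat.exists_coprime d e
    have hw : 0 < Nat.gcd d e := Nat.gcd_pos_of_pos_left _ hd0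
    generalize Nat.gcd d e = w at ha hb hw
    have eN : N = a * b * w ^ 2 := by rw [he, ha, hb]; ring
    have hmo : Odd (a * b) := by rw [eN] at hNo; exact (Nat.odd_mul.1 hNo).1
    have hm0 : 0 < a * b := hmo.pos
    obtain ⟨z, z1, z2, z3, z4⟩ := aux_exists a b hmo hab
    have em : (a * b * w) ^ 2 / N = a * b := by
      apply Nat.div_eq_of_eq_mul_right hN; rw [eN]; ring
    have ew : N / (a * b * w) = w := by
      apply Nat.div_eq_of_eq_mul_right (Nat.mul_pos hm0 hw); rw [eN]; ring
    have hvN : a * b * w ∣ N := ⟨w, by rw [eN]; ring⟩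
    have hz4 : a * b ∣ 4 * z ^ 2 - 1 := by
      have : 4 * z ^ 2 - 1 = (2 * z - 1) * (2 * z + 1) := by
        rw [mul_comm (2 * z - 1), ← Nat.sq_sub_sq (2 * z) 1]; congr 1; ring
      rw [this]; exact mul_dvd_mul z3 z4
    refine ⟨⟨(a * b * w, z, n), Nat.mul_pos hm0 hw, Nat.le_of_dvd hN hvN, hvN,
      ⟨a * b, by rw [eN]; ring⟩, z1, ?_, ?_, ?_⟩, ?_⟩
    · dsimp only; rw [em]; exact z2
    · dsimp only; rw [em]; exact hz4
    · dsimp only; omega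
    · simp only [Subtype.mk.injEq, Prod.mk.injEq, em, ew, and_true]
      rw [aux_gcd a b z z1 z3 z4, ← ha]
end

section
/- Let k be a positive integer with 8 ∣ k+4 and set k̄ = k+2. Then the number of quadruples (v,z,n,m) of integers with 1 ≤ v ≤ k̄/2, 2v ∣ k̄, k̄ ∣ 2v², 1 ≤ z ≤ 2v²/k̄, (2v²/k̄) ∣ (z²−1), and n, m ∈ {0,1}, equals 2·d(k̄), where d(m) denotes the number of positive divisors of m. -/
theorem aux_split (w z : ℕ) (hw : ¬ 2 ∣ w) (hz : 1 ≤ z) (h : w ∣ z ^ 2 - 1) :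
    ∃ x y, Nat.gcd (z - 1) w = x ∧ w = x * y ∧ Nat.Coprime x y ∧ x ∣ z - 1 ∧ y ∣ z + 1 := by
  have hw0 : 0 < w := by
    rcases Nat.eq_zero_or_pos w with h0 | h0
    · subst h0; simp at hw
    · exact h0
  have hx0 : 0 < Nat.gcd (z - 1) w := Nat.gcd_pos_of_pos_right _ hw0
  obtain ⟨u, hu⟩ := Nat.gcd_dvd_left (z - 1) w
  obtain ⟨y, hy⟩ := Nat.gcd_dvd_right (z - 1) w
  have hcop : Nat.Coprime y u := by
    have := Nat.coprime_div_gcd_div_gcd hx0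
    rw [Nat.div_eq_of_eq_mul_right hx0 hu, Nat.div_eq_of_eq_mul_right hx0 hy] at this
    exact this.symm
  have hyz : y ∣ z + 1 := by
    have e : z ^ 2 - 1 = (z - 1) * (z + 1) := by
      obtain ⟨t, rfl⟩ : ∃ t, z = t + 1 := ⟨z - 1, by omega⟩
      have : (t + 1) ^ 2 = t * (t + 1 + 1) + 1 := by ring
      rw [this]; simp
    rw [e] at h
    have h2 : Nat.gcd (z - 1) w * y ∣ Nat.gcd (z - 1) w * (u * (z + 1)) := by
      rw [← mul_assoc, ← hu, ← hy]; exact h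
    exact hcop.dvd_of_dvd_mul_left (Nat.dvd_of_mul_dvd_mul_left hx0 h2)
  refine ⟨_, y, rfl, hy, ?_, Nat.gcd_dvd_left _ _, hyz⟩
  set x := Nat.gcd (z - 1) w with hx
  have h1 : Nat.gcd x y ∣ z - 1 := (Nat.gcd_dvd_left x y).trans (Nat.gcd_dvd_left _ _)
  have h2 : Nat.gcd x y ∣ z + 1 := (Nat.gcd_dvd_right x y).trans hyz
  have h3 : Nat.gcd x y ∣ 2 := by
    have := Nat.dvd_sub h2 h1
    rwa [show z + 1 - (z - 1) = 2 by omega] at this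
  rcases (Nat.dvd_prime Nat.prime_two).1 h3 with h4 | h4
  · exact h4
  · exact absurd (h4 ▸ (Nat.gcd_dvd_left x y).trans (Nat.gcd_dvd_right _ _)) hw

theorem aux_crt (x y : ℕ) (hodd : ¬ 2 ∣ x * y) (hc : Nat.Coprime x y) :
    ∃ z, 1 ≤ z ∧ z ≤ x * y ∧ x * y ∣ z ^ 2 - 1 ∧ Nat.gcd (z - 1) (x * y) = x := by
  have hx : x ≠ 0 := by rintro rfl; simp at hodd
  have hy : y ≠ 0 := by rintro rfl; simp at hodd
  obtain ⟨t, ht1, ht2⟩ := Nat.chineseRemainder hc 1 (y - 1)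
  obtain ⟨z, hz1, hz2, hz3⟩ : ∃ z, 1 ≤ z ∧ z ≤ x * y ∧ z ≡ t [MOD x * y] := by
    have hp : 0 < x * y := Nat.pos_of_ne_zero (mul_ne_zero hx hy)
    rcases Nat.eq_zero_or_pos (t % (x * y)) with h | h
    · exact ⟨x * y, hp, le_rfl, by simp [Nat.ModEq, h]⟩
    · exact ⟨t % (x * y), h, (Nat.mod_lt _ hp).le, Nat.mod_modEq _ _⟩
  have hzx : z ≡ 1 [MOD x] := (hz3.of_mul_right y).trans ht1
  have hzy : z ≡ y - 1 [MOD y] := (hz3.of_mul_left x).trans ht2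
  have dx : x ∣ z - 1 := (Nat.modEq_iff_dvd' hz1).1 hzx.symm
  have dy : y ∣ z + 1 := by
    have := hzy.add_right 1
    rw [show y - 1 + 1 = y by omega] at this
    exact (Nat.modEq_zero_iff_dvd).1 (this.trans (by simp [Nat.ModEq]))
  have e : z ^ 2 - 1 = (z - 1) * (z + 1) := by
    obtain ⟨t, rfl⟩ : ∃ t, z = t + 1 := ⟨z - 1, by omega⟩
    have : (t + 1) ^ 2 = t * (t + 1 + 1) + 1 := by ring
    rw [this]; simp
  refine ⟨z, hz1, hz2, e ▸ mul_dvd_mul dx dy, ?_⟩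
  have hcy : Nat.Coprime (z - 1) y := by
    have h3 : Nat.gcd (z - 1) y ∣ 2 := by
      have := Nat.dvd_sub ((Nat.gcd_dvd_right (z - 1) y).trans dy) (Nat.gcd_dvd_left (z - 1) y)
      rwa [show z + 1 - (z - 1) = 2 by omega] at this
    rcases (Nat.dvd_prime Nat.prime_two).1 h3 with h4 | h4
    · exact h4
    · exact absurd ((h4 ▸ Nat.gcd_dvd_right (z - 1) y).trans (Dvd.intro_left x rfl)) hodd
  rw [Nat.Coprime.gcd_mul_right_cancel_right x hcy.symm]
  exact Nat.gcd_eq_right dx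

/-- Structure of `v`. -/
theorem aux_v (N v : ℕ) (hN : 0 < N) (h1 : v ∣ N) (h2 : N ∣ v ^ 2) :
    ∃ a w, 0 < a ∧ 0 < w ∧ v = a * w ∧ N = a * a * w ∧ N / v = a ∧ v ^ 2 / N = w := by
  obtain ⟨a, rfl⟩ := h1
  have hv : 0 < v := Nat.pos_of_mul_pos_right hN
  have ha : 0 < a := Nat.pos_of_mul_pos_left hN
  rw [sq] at h2
  obtain ⟨w, rfl⟩ := Nat.dvd_of_mul_dvd_mul_left hv h2
  have hw : 0 < w := Nat.pos_of_mul_pos_left hv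
  refine ⟨a, w, ha, hw, rfl, by ring, Nat.mul_div_cancel_left _ hv, ?_⟩
  exact Nat.div_eq_of_eq_mul_right hN (by ring)

def auxMap (N v z : ℕ) : ℕ := N / v * Nat.gcd (z - 1) (v ^ 2 / N)

theorem aux_maps (N v z : ℕ) (hN : 0 < N) (h1 : v ∣ N) (h2 : N ∣ v ^ 2) : auxMap N v z ∣ N := by
  obtain ⟨a, w, ha, hw, hv, hNa, e1, e2⟩ := aux_v N v hN h1 h2
  rw [auxMap, e1, e2]
  rw [hNa]
  exact mul_dvd_mul (Dvd.intro_left a rfl) (Nat.gcd_dvd_right _ _)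

theorem aux_inj (N v z v' z' : ℕ) (hodd : ¬ 2 ∣ N) (h1 : v ∣ N) (h2 : N ∣ v ^ 2)
    (hz : 1 ≤ z) (hz2 : z ≤ v ^ 2 / N) (hz3 : v ^ 2 / N ∣ z ^ 2 - 1)
    (h1' : v' ∣ N) (h2' : N ∣ v' ^ 2)
    (hz' : 1 ≤ z') (hz2' : z' ≤ v' ^ 2 / N) (hz3' : v' ^ 2 / N ∣ z' ^ 2 - 1)
    (h : auxMap N v z = auxMap N v' z') : v = v' ∧ z = z' := by
  have hN : 0 < N := Nat.pos_of_ne_zero (by rintro rfl; simp at hodd)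
  obtain ⟨a, w, ha, hw, hv, hNa, e1, e2⟩ := aux_v N v hN h1 h2
  obtain ⟨a', w', ha', hw', hv', hNa', e1', e2'⟩ := aux_v N v' hN h1' h2'
  rw [auxMap, auxMap, e1, e2, e1', e2'] at h
  rw [e2] at hz2 hz3
  rw [e2'] at hz2' hz3'
  have ow : ¬ 2 ∣ w := fun hh => hodd (hNa ▸ hh.mul_left _)
  have ow' : ¬ 2 ∣ w' := fun hh => hodd (hNa' ▸ hh.mul_left _)
  obtain ⟨x, y, hx, hxy, hc, dx, dy⟩ := aux_split w z ow hz hz3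
  obtain ⟨x', y', hx', hxy', hc', dx', dy'⟩ := aux_split w' z' ow' hz' hz3'
  rw [hx, hx'] at h
  have hx0 : 0 < x := Nat.pos_of_mul_pos_right (hxy ▸ hw)
  have hay : a * y = a' * y' := by
    apply Nat.eq_of_mul_eq_mul_left (Nat.mul_pos ha hx0)
    calc a * x * (a * y) = a * a * w := by rw [hxy]; ring
      _ = a' * a' * w' := by rw [← hNa, hNa']
      _ = a' * x' * (a' * y') := by rw [hxy']; ring
      _ = a * x * (a' * y') := by rw [h]
  have haa : a = a' := by
    have g1 : Nat.gcd (a * x) (a * y) = a := by rw [Nat.gcd_mul_left, hc.gcd_eq_one, mul_one]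
    have g2 : Nat.gcd (a' * x') (a' * y') = a' := by rw [Nat.gcd_mul_left, hc'.gcd_eq_one, mul_one]
    rw [← g1, ← g2, h, hay]
  subst haa
  have hxx := Nat.eq_of_mul_eq_mul_left ha h
  have hyy := Nat.eq_of_mul_eq_mul_left ha hay
  subst hxx hyy
  have hww : w = w' := by rw [hxy, hxy']
  subst hww
  refine ⟨by rw [hv, hv'], ?_⟩
  have mx : z ≡ z' [MOD x] :=
    ((Nat.modEq_iff_dvd' hz).2 dx).symm.trans ((Nat.modEq_iff_dvd' hz').2 dx')
  have my : z ≡ z' [MOD y] :=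
    Nat.ModEq.add_right_cancel' 1
      (((Nat.modEq_zero_iff_dvd).2 dy).trans ((Nat.modEq_zero_iff_dvd).2 dy').symm)
  have m : z ≡ z' [MOD w] := hxy ▸ (Nat.modEq_and_modEq_iff_modEq_mul hc).1 ⟨mx, my⟩
  rcases le_total z z' with hl | hl
  · have := (Nat.modEq_iff_dvd' hl).1 m
    have := Nat.eq_zero_of_dvd_of_lt this (by omega)
    omega
  · have := (Nat.modEq_iff_dvd' hl).1 m.symm
    have := Nat.eq_zero_of_dvd_of_lt this (by omega)
    omega

theorem aux_surj (N d : ℕ) (hodd : ¬ 2 ∣ N) (hd : d ∣ N) :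
    ∃ v z, v ∣ N ∧ N ∣ v ^ 2 ∧ 1 ≤ z ∧ z ≤ v ^ 2 / N ∧ v ^ 2 / N ∣ z ^ 2 - 1 ∧
      auxMap N v z = d := by
  have hN : 0 < N := Nat.pos_of_ne_zero (by rintro rfl; simp at hodd)
  obtain ⟨e, he⟩ := hd
  have hd0 : 0 < d := Nat.pos_of_mul_pos_right (he ▸ hN)
  obtain ⟨g, x, y, hg, hc, hdx, hey⟩ : ∃ g x y, 0 < g ∧ Nat.Coprime x y ∧ d = x * g ∧ e = y * g := by
    obtain ⟨x, y, hc, h1, h2⟩ := Nat.exists_coprime d e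
    exact ⟨_, x, y, Nat.gcd_pos_of_pos_left _ hd0, hc, h1, h2⟩
  have hNg : N = g * g * (x * y) := by rw [he, hdx, hey]; ring
  obtain ⟨z, hz1, hz2, hz3, hz4⟩ := aux_crt x y (fun hh => hodd (hNg ▸ hh.mul_left _)) hc
  have hxy : 0 < x * y := by omega
  have q1 : (g * (x * y)) ^ 2 / N = x * y := Nat.div_eq_of_eq_mul_right hN (by rw [hNg]; ring)
  have q2 : N / (g * (x * y)) = g :=
    Nat.div_eq_of_eq_mul_right (Nat.mul_pos hg hxy) (by rw [hNg]; ring)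
  refine ⟨g * (x * y), z, ⟨g, by rw [hNg]; ring⟩, ⟨x * y, by rw [hNg]; ring⟩, hz1, ?_, ?_, ?_⟩
  · rw [q1]; exact hz2
  · rw [q1]; exact hz3
  · rw [auxMap, q1, q2, hz4, hdx, mul_comm]

/-- for `8 ∣ k+4`, the number of quadruples `(v,z,n,m)` parametrising the
physical invariants `M^{4,0}[v,z,n,m]` equals `2·d(k̄)`. -/
theorem count_M40 (k : ℕ) (hk : 8 ∣ k + 4) (hk0 : 0 < k) :
    Nat.card {t : ℕ × ℕ × ℕ × ℕ //
        1 ≤ t.1 ∧ t.1 ≤ (k + 2) / 2 ∧ 2 * t.1 ∣ (k + 2) ∧ (k + 2) ∣ 2 * t.1 ^ 2 ∧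
        1 ≤ t.2.1 ∧ t.2.1 ≤ 2 * t.1 ^ 2 / (k + 2) ∧
        (2 * t.1 ^ 2 / (k + 2)) ∣ (t.2.1 ^ 2 - 1) ∧
        t.2.2.1 ≤ 1 ∧ t.2.2.2 ≤ 1}
      = 2 * (k + 2).divisors.card := by
  obtain ⟨N, hN, hodd⟩ : ∃ N, k + 2 = 2 * N ∧ ¬ 2 ∣ N := ⟨(k + 2) / 2, by omega, by omega⟩
  have hN0 : 0 < N := by omega
  rw [hN]
  have hdiv : ∀ v : ℕ, 2 * v ^ 2 / (2 * N) = v ^ 2 / N :=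
    fun v => Nat.mul_div_mul_left _ _ (by norm_num)
  have hd1 : ∀ v : ℕ, 2 * v ∣ 2 * N ↔ v ∣ N := fun v => Nat.mul_dvd_mul_iff_left (by norm_num)
  have hd2 : ∀ v : ℕ, 2 * N ∣ 2 * v ^ 2 ↔ N ∣ v ^ 2 :=
    fun v => Nat.mul_dvd_mul_iff_left (by norm_num)
  have hcard : (2 * N).divisors.card = 2 * N.divisors.card := by
    rw [Nat.Coprime.card_divisors_mul ((Nat.Prime.coprime_iff_not_dvd Nat.prime_two).2 hodd),
      Nat.Prime.divisors Nat.prime_two]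
    rfl
  simp only [hdiv, hd1, hd2, hcard, Nat.mul_div_cancel_left N (show 0 < 2 by norm_num)]
  have hT : 2 * (2 * N.divisors.card) =
      Nat.card (N.divisors ×ˢ (Finset.range 2 ×ˢ Finset.range 2) : Finset (ℕ × ℕ × ℕ)) := by
    rw [Nat.card_eq_fintype_card, Fintype.card_coe, Finset.card_product, Finset.card_product,
      Finset.card_range]
    ring
  rw [hT]
  refine Nat.card_eq_of_bijective (fun t => ⟨(auxMap N t.1.1 t.1.2.1, t.1.2.2), ?_⟩) ⟨?_, ?_⟩
  · obtain ⟨⟨v, z, n, m⟩, h1, h2, h3, h4, h5, h6, h7, h8, h9⟩ := t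
    simp only [Finset.mem_product, Nat.mem_divisors, Finset.mem_range] at *
    exact ⟨⟨aux_maps N v z hN0 h3 h4, hN0.ne'⟩, Nat.lt_succ_of_le h8, Nat.lt_succ_of_le h9⟩
  · rintro ⟨⟨v, z, n, m⟩, h1, h2, h3, h4, h5, h6, h7, h8, h9⟩
      ⟨⟨v', z', n', m'⟩, h1', h2', h3', h4', h5', h6', h7', h8', h9'⟩ h
    simp only [Subtype.mk.injEq, Prod.mk.injEq] at *
    obtain ⟨r1, r2⟩ := aux_inj N v z v' z' hodd h3 h4 h5 h6 h7 h3' h4' h5' h6' h7' h.1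
    exact ⟨r1, r2, h.2⟩
  · rintro ⟨⟨d, n, m⟩, hd⟩
    simp only [Finset.mem_product, Nat.mem_divisors, Finset.mem_range] at hd
    obtain ⟨⟨hd, -⟩, hn, hm⟩ := hd
    obtain ⟨v, z, h3, h4, h5, h6, h7, h8⟩ := aux_surj N d hodd hd
    refine ⟨⟨(v, z, n, m), Nat.pos_of_dvd_of_pos h3 hN0, Nat.le_of_dvd hN0 h3, h3, h4, h5, h6, h7,
      by simp only; omega, by simp only; omega⟩, ?_⟩
    simp only [h8]
end

section
/- Let k be a positive integer with 8 ∣ k and set k̄ = k+2. Then the number of quadruples (v,z,x,y) of integers with 1 ≤ v ≤ k̄, v ∣ k̄, k̄ ∣ v², 1 ≤ z ≤ v²/k̄, z ≡ k/8 (mod 2), v² ∣ 2k̄(4z²−1), and x, y ∈ {1,3}, equals 2·d(k̄), where d(m) denotes the number of positive divisors of m. -/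
/-- The conditions on `(v, z)`. -/
def M41Cond (k v z : ℕ) : Prop :=
  1 ≤ v ∧ v ≤ k + 2 ∧ v ∣ (k + 2) ∧ (k + 2) ∣ v ^ 2 ∧
    1 ≤ z ∧ z ≤ v ^ 2 / (k + 2) ∧ z ≡ k / 8 [MOD 2] ∧
    v ^ 2 ∣ 2 * (k + 2) * (4 * z ^ 2 - 1)

/-- The divisor of `k̄ / 2` attached to `(v, z)`. -/
def M41Div (k v z : ℕ) : ℕ := ((k + 2) / v) * Nat.gcd (v ^ 2 / (k + 2) / 2) (2 * z - 1)

/-- The parametrised form of the conditions. -/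
def M41Par (j v z g A B : ℕ) : Prop :=
  0 < g ∧ 0 < A ∧ 0 < B ∧ Nat.Coprime A B ∧ 4 * j + 1 = g * g * A * B ∧ v = 2 * (g * A * B) ∧
    1 ≤ z ∧ z ≤ 2 * (A * B) ∧ z ≡ j [MOD 2] ∧ A ∣ 2 * z - 1 ∧ B ∣ 2 * z + 1

lemma M41_aux_div (j v g A B : ℕ) (hg : 0 < g) (hA : 0 < A) (hB : 0 < B)
    (hm : 4 * j + 1 = g * g * A * B) (hv : v = 2 * (g * A * B)) :
    (8 * j + 2) / v = g ∧ v ^ 2 / (8 * j + 2) = 2 * (A * B) := by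
  have hn : 8 * j + 2 = 2 * (g * g * A * B) := by omega
  have h0 : 0 < g * A * B := by positivity
  constructor
  · apply Nat.div_eq_of_eq_mul_left
    · omega
    · rw [hn, hv]; ring
  · apply Nat.div_eq_of_eq_mul_left
    · omega
    · rw [hn, hv]; ring

lemma M41_odd (j g A B : ℕ) (hm : 4 * j + 1 = g * g * A * B) : Odd A ∧ Odd B := by
  have h : Odd (g * g * A * B) := by rw [← hm]; exact ⟨2 * j, by ring⟩
  rw [Nat.odd_mul, Nat.odd_mul] at h
  exact ⟨h.1.2, h.2⟩

lemma M41_four (z : ℕ) (hz : 1 ≤ z) : 4 * z ^ 2 - 1 = (2 * z - 1) * (2 * z + 1) := by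
  obtain ⟨y, rfl⟩ : ∃ y, z = y + 1 := ⟨z - 1, by omega⟩
  have h1 : 2 * (y + 1) - 1 = 2 * y + 1 := by omega
  rw [h1]
  apply Nat.sub_eq_of_eq_add
  ring

lemma M41_cop (z c : ℕ) (hz : 1 ≤ z) (hc : Odd c) (h1 : c ∣ 2 * z - 1) (h2 : c ∣ 2 * z + 1) :
    c = 1 := by
  have h : c ∣ (2 * z + 1) - (2 * z - 1) := Nat.dvd_sub h2 h1
  have h3 : (2 * z + 1) - (2 * z - 1) = 2 := by omega
  rw [h3] at h
  rcases (Nat.dvd_prime Nat.prime_two).1 h with h | h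
  · exact h
  · subst h; exact absurd hc (by decide)

lemma M41_gcd (z A B : ℕ) (hz : 1 ≤ z) (hB : Odd B) 
    (h1 : A ∣ 2 * z - 1) (h2 : B ∣ 2 * z + 1) : Nat.gcd (A * B) (2 * z - 1) = A := by
  have hc : Nat.Coprime (2 * z - 1) B := by
    have hd := Nat.gcd_dvd_right (2 * z - 1) B
    exact M41_cop z _ hz (hB.of_dvd_nat hd) (Nat.gcd_dvd_left _ _) (hd.trans h2)
  apply Nat.dvd_antisymm
  · have : Nat.Coprime (Nat.gcd (A * B) (2 * z - 1)) B :=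
      Nat.Coprime.coprime_dvd_left (Nat.gcd_dvd_right _ _) hc
    exact this.dvd_of_dvd_mul_right (Nat.gcd_dvd_left _ _)
  · exact Nat.dvd_gcd (Dvd.intro _ rfl) h1

lemma M41_par_cond (j v z g A B : ℕ) (h : M41Par j v z g A B) :
    M41Cond (8 * j) v z ∧ M41Div (8 * j) v z = g * A := by
  obtain ⟨hg, hA, hB, hAB, hm, hv, hz, hz2, hzj, h1, h2⟩ := h
  obtain ⟨e1, e2⟩ := M41_aux_div j v g A B hg hA hB hm hv
  obtain ⟨oA, oB⟩ := M41_odd j g A B hm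
  have hn : 8 * j + 2 = 2 * (g * g * A * B) := by omega
  have h0 : 0 < g * A * B := by positivity
  have hvd : v ∣ 8 * j + 2 := ⟨g, by rw [hn, hv]; ring⟩
  refine ⟨⟨by omega, Nat.le_of_dvd (by omega) hvd, hvd, ⟨2 * (A * B), by rw [hn, hv]; ring⟩, hz,
    by rw [e2]; exact hz2, ?_, ?_⟩, ?_⟩
  · have : 8 * j / 8 = j := by omega
    rw [this]; exact hzj
  · rw [M41_four z hz]
    obtain ⟨a, ha⟩ := h1
    obtain ⟨b, hb⟩ := h2
    rw [ha, hb, hn, hv]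
    exact ⟨a * b, by ring⟩
  · unfold M41Div
    rw [e1, e2, Nat.mul_div_cancel_left _ (by norm_num), M41_gcd z A B hz oB h1 h2]

lemma M41_cond_par (j v z : ℕ) (h : M41Cond (8 * j) v z) : ∃ g A B, M41Par j v z g A B := by
  obtain ⟨hv1, -, hvd, hdv, hz, hz2, hzj, hd⟩ := h
  have hev : 2 ∣ v := by
    have : 2 ∣ v ^ 2 := (show 2 ∣ 8 * j + 2 by omega).trans hdv
    exact Nat.prime_two.dvd_of_dvd_pow this
  obtain ⟨w, rfl⟩ := hev
  obtain ⟨g, hg⟩ := hvd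
  have hm : 4 * j + 1 = w * g := by
    have : 2 * w * g = 2 * (w * g) := by ring
    omega
  have hw0 : 0 < w := by omega
  have hg0 : 0 < g := by
    rcases Nat.eq_zero_or_pos g with h | h
    · subst h; omega
    · exact h
  have og : Odd g ∧ Odd w := by
    have h : Odd (w * g) := by rw [← hm]; exact ⟨2 * j, by ring⟩
    rw [Nat.odd_mul] at h
    exact h.symm
  have hgw : g ∣ w := by
    rw [hg] at hdv
    have h3 : 2 * w * g ∣ 2 * w * (2 * w) := by rw [← sq]; exact hdv
    have h4 := Nat.dvd_of_mul_dvd_mul_left (by omega) h3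
    exact (Nat.Coprime.dvd_of_dvd_mul_left (Nat.Coprime.symm (by simpa using og.1)) h4)
  obtain ⟨c, rfl⟩ := hgw
  have oc : Odd c := (Nat.odd_mul.1 og.2).2
  have hc0 : 0 < c := oc.pos
  have hcd : c ∣ (2 * z - 1) * (2 * z + 1) := by
    rw [M41_four z hz, hg] at hd
    have e1 : (2 * (g * c)) ^ 2 = (4 * g * g * c) * c := by ring
    have e2 : 2 * (2 * (g * c) * g) * ((2 * z - 1) * (2 * z + 1))
      = (4 * g * g * c) * ((2 * z - 1) * (2 * z + 1)) := by ring
    rw [e1, e2] at hd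
    exact Nat.dvd_of_mul_dvd_mul_left (by positivity) hd
  have hcop : Nat.Coprime (Nat.gcd c (2 * z - 1)) (Nat.gcd c (2 * z + 1)) := by
    apply M41_cop z _ hz
    · exact oc.of_dvd_nat ((Nat.gcd_dvd_left _ _).trans (Nat.gcd_dvd_left _ _))
    · exact (Nat.gcd_dvd_left _ _).trans (Nat.gcd_dvd_right _ _)
    · exact (Nat.gcd_dvd_right _ _).trans (Nat.gcd_dvd_right _ _)
  have hprod : Nat.gcd c (2 * z - 1) * Nat.gcd c (2 * z + 1) = c := by
    apply Nat.dvd_antisymm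
    · exact hcop.mul_dvd_of_dvd_of_dvd (Nat.gcd_dvd_left _ _) (Nat.gcd_dvd_left _ _)
    · have h5 : c ∣ Nat.gcd c ((2 * z - 1) * (2 * z + 1)) := Nat.dvd_gcd dvd_rfl hcd
      exact h5.trans (Nat.gcd_mul_right_dvd_mul_gcd _ _ _)
  have hA : 0 < Nat.gcd c (2 * z - 1) := Nat.gcd_pos_of_pos_left _ hc0
  have hB : 0 < Nat.gcd c (2 * z + 1) := Nat.gcd_pos_of_pos_left _ hc0
  have hm' : 4 * j + 1 = g * g * Nat.gcd c (2 * z - 1) * Nat.gcd c (2 * z + 1) := by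
    rw [mul_assoc, hprod, hm]; ring
  have hv' : 2 * (g * c) = 2 * (g * Nat.gcd c (2 * z - 1) * Nat.gcd c (2 * z + 1)) := by
    rw [mul_assoc g, hprod]
  obtain ⟨-, e2⟩ := M41_aux_div j _ g _ _ hg0 hA hB hm' hv'
  refine ⟨g, _, _, hg0, hA, hB, hcop, hm', hv', hz, ?_, ?_, Nat.gcd_dvd_right _ _,
    Nat.gcd_dvd_right _ _⟩
  · rw [← e2]; exact hz2
  · have : 8 * j / 8 = j := by omega
    rw [this] at hzj; exact hzj

lemma M41_uniq (j z z' A B : ℕ) (oA : Odd A) (oB : Odd B) (hAB : Nat.Coprime A B)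
    (hz : 1 ≤ z) (hz2 : z ≤ 2 * (A * B)) (hzj : z ≡ j [MOD 2]) (h1 : A ∣ 2 * z - 1)
    (h2 : B ∣ 2 * z + 1)
    (hz' : 1 ≤ z') (hz2' : z' ≤ 2 * (A * B)) (hzj' : z' ≡ j [MOD 2]) (h1' : A ∣ 2 * z' - 1)
    (h2' : B ∣ 2 * z' + 1) : z = z' := by
  wlog hle : z ≤ z' generalizing z z'
  · exact (this z' z hz' hz2' hzj' h1' h2' hz hz2 hzj h1 h2 (by omega)).symm
  have a : A ∣ 2 * (z' - z) := by
    have := Nat.dvd_sub h1' h1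
    rwa [show 2 * z' - 1 - (2 * z - 1) = 2 * (z' - z) by omega] at this
  have b : B ∣ 2 * (z' - z) := by
    have := Nat.dvd_sub h2' h2
    rwa [show 2 * z' + 1 - (2 * z + 1) = 2 * (z' - z) by omega] at this
  have cAB : Nat.Coprime (A * B) 2 := by
    rw [Nat.coprime_two_right]; exact oA.mul oB
  have c := cAB.dvd_of_dvd_mul_left (hAB.mul_dvd_of_dvd_of_dvd a b)
  have d : 2 ∣ z' - z := (Nat.modEq_iff_dvd' hle).1 (hzj.trans hzj'.symm)
  have e := cAB.symm.mul_dvd_of_dvd_of_dvd d c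
  have := Nat.eq_zero_of_dvd_of_lt e (by omega)
  omega

lemma M41_inj (j v z v' z' : ℕ) (h : M41Cond (8 * j) v z) (h' : M41Cond (8 * j) v' z')
    (e : M41Div (8 * j) v z = M41Div (8 * j) v' z') : v = v' ∧ z = z' := by
  obtain ⟨g, A, B, hp⟩ := M41_cond_par j v z h
  obtain ⟨g', A', B', hp'⟩ := M41_cond_par j v' z' h'
  rw [(M41_par_cond _ _ _ _ _ _ hp).2, (M41_par_cond _ _ _ _ _ _ hp').2] at e
  obtain ⟨hg, hA, hB, hAB, hm, hv, hz, hz2, hzj, h1, h2⟩ := hp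
  obtain ⟨hg', hA', hB', hAB', hm', hv', hz', hz2', hzj', h1', h2'⟩ := hp'
  have f : g * B = g' * B' := by
    have : (g * A) * (g * B) = (g * A) * (g' * B') := by
      calc (g * A) * (g * B) = g * g * A * B := by ring
        _ = g' * g' * A' * B' := by rw [← hm, ← hm']
        _ = (g' * A') * (g' * B') := by ring
        _ = _ := by rw [e]
    exact Nat.eq_of_mul_eq_mul_left (by positivity) this
  have gg : g = g' := by
    have a : Nat.gcd (g * A) (g * B) = g := by rw [Nat.gcd_mul_left, hAB, mul_one]
    have b : Nat.gcd (g' * A') (g' * B') = g' := by rw [Nat.gcd_mul_left, hAB', mul_one]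
    rw [← a, ← b, e, f]
  subst gg
  have eA := Nat.eq_of_mul_eq_mul_left hg e
  have eB := Nat.eq_of_mul_eq_mul_left hg f
  subst eA eB
  obtain ⟨oA, oB⟩ := M41_odd j g A B hm
  exact ⟨hv.trans hv'.symm,
    M41_uniq j z z' A B oA oB hAB hz hz2 hzj h1 h2 hz' hz2' hzj' h1' h2'⟩

lemma M41_exz (j A B : ℕ) (oA : Odd A) (oB : Odd B) (hAB : Nat.Coprime A B) :
    ∃ z, 1 ≤ z ∧ z ≤ 2 * (A * B) ∧ z ≡ j [MOD 2] ∧ A ∣ 2 * z - 1 ∧ B ∣ 2 * z + 1 := by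
  have cAB : Nat.Coprime 2 (A * B) := by
    rw [Nat.coprime_two_left]; exact oA.mul oB
  have hpos : 0 < A * B := (oA.mul oB).pos
  obtain ⟨a, rfl⟩ := oA
  obtain ⟨b, rfl⟩ := oB
  obtain ⟨x, hx1, hx2⟩ := Nat.chineseRemainder hAB (a + 1) b
  obtain ⟨y, hy1, hy2⟩ := Nat.chineseRemainder cAB j x
  set N := 2 * ((2 * a + 1) * (2 * b + 1)) with hN
  obtain ⟨z, hz1, hz2, hz3⟩ : ∃ z, 1 ≤ z ∧ z ≤ N ∧ z ≡ y [MOD N] := by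
    rcases Nat.eq_zero_or_pos (y % N) with h | h
    · exact ⟨N, by omega, le_rfl, by simp [Nat.ModEq, h]⟩
    · exact ⟨y % N, h, (Nat.mod_lt _ (by omega)).le, Nat.mod_modEq _ _⟩
  have dA : (2 * a + 1) ∣ N := ⟨2 * (2 * b + 1), by rw [hN]; ring⟩
  have dB : (2 * b + 1) ∣ N := ⟨2 * (2 * a + 1), by rw [hN]; ring⟩
  have zA : z ≡ a + 1 [MOD 2 * a + 1] :=
    ((hz3.of_dvd dA).trans (hy2.of_dvd (Dvd.intro _ rfl))).trans hx1
  have zB : z ≡ b [MOD 2 * b + 1] :=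
    ((hz3.of_dvd dB).trans (hy2.of_dvd (Dvd.intro_left _ rfl))).trans hx2
  refine ⟨z, hz1, hz2, (hz3.of_dvd ⟨_, hN⟩).trans hy1, ?_, ?_⟩
  · have h := zA.mul_left 2
    have h' : 2 * (a + 1) ≡ 1 [MOD 2 * a + 1] := by
      rw [show 2 * (a + 1) = 1 + (2 * a + 1) by ring]; simp [Nat.ModEq]
    exact (Nat.modEq_iff_dvd' (by omega)).1 (h.trans h').symm
  · have h := (zB.mul_left 2).add_right 1
    exact (Nat.modEq_zero_iff_dvd).1 (h.trans (by simp [Nat.ModEq]))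

lemma M41_surj (j d : ℕ) (hd : d ∣ 4 * j + 1) :
    ∃ v z, M41Cond (8 * j) v z ∧ M41Div (8 * j) v z = d := by
  obtain ⟨e, he⟩ := hd
  have hd0 : 0 < d := by
    rcases Nat.eq_zero_or_pos d with h | h
    · subst h; omega
    · exact h
  obtain ⟨g, A, B, hg, hAB, hA, hB⟩ := Nat.exists_coprime' (m := d) (n := e)
    (Nat.gcd_pos_of_pos_left _ hd0)
  have hm : 4 * j + 1 = g * g * A * B := by rw [he, hA, hB]; ring
  obtain ⟨oA, oB⟩ := M41_odd j g A B hm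
  obtain ⟨z, hz1, hz2, hz3, hz4, hz5⟩ := M41_exz j A B oA oB hAB
  have := M41_par_cond j _ z g A B ⟨hg, oA.pos, oB.pos, hAB, hm, rfl, hz1, hz2, hz3, hz4, hz5⟩
  exact ⟨_, z, this.1, this.2.trans (by rw [hA]; ring)⟩

lemma M41_mem (j v z : ℕ) (h : M41Cond (8 * j) v z) :
    M41Div (8 * j) v z ∈ (4 * j + 1).divisors := by
  obtain ⟨g, A, B, hp⟩ := M41_cond_par j v z h
  rw [(M41_par_cond _ _ _ _ _ _ hp).2, Nat.mem_divisors]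
  obtain ⟨hg, hA, hB, hAB, hm, -⟩ := hp
  exact ⟨⟨g * B, by rw [hm]; ring⟩, by omega⟩

/-- for `8 ∣ k`, the number of quadruples `(v,z,x,y)` parametrising the
physical invariants `M^{4,1}[v,z,x,y]` equals `2·d(k̄)`. -/
theorem count_M41 (k : ℕ) (hk : 8 ∣ k) (hk0 : 0 < k) :
    Nat.card {t : ℕ × ℕ × ℕ × ℕ //
        1 ≤ t.1 ∧ t.1 ≤ k + 2 ∧ t.1 ∣ (k + 2) ∧ (k + 2) ∣ t.1 ^ 2 ∧
        1 ≤ t.2.1 ∧ t.2.1 ≤ t.1 ^ 2 / (k + 2) ∧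
        t.2.1 ≡ k / 8 [MOD 2] ∧
        t.1 ^ 2 ∣ 2 * (k + 2) * (4 * t.2.1 ^ 2 - 1) ∧
        (t.2.2.1 = 1 ∨ t.2.2.1 = 3) ∧ (t.2.2.2 = 1 ∨ t.2.2.2 = 3)}
      = 2 * (k + 2).divisors.card := by
  obtain ⟨j, rfl⟩ := hk
  have hcard : (8 * j + 2).divisors.card = 2 * (4 * j + 1).divisors.card := by
    rw [show 8 * j + 2 = 2 * (4 * j + 1) by ring, Nat.Coprime.card_divisors_mul]
    · rw [Nat.Prime.divisors Nat.prime_two]; rfl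
    · rw [Nat.coprime_two_left]; exact ⟨2 * j, by ring⟩
  rw [hcard]
  let F : Finset (ℕ × ℕ × ℕ) :=
    (4 * j + 1).divisors ×ˢ (({1, 3} : Finset ℕ) ×ˢ ({1, 3} : Finset ℕ))
  have hF : F.card = 2 * (2 * (4 * j + 1).divisors.card) := by
    simp only [F, Finset.card_product]
    rw [show ({1, 3} : Finset ℕ).card = 2 from rfl]; ring
  rw [← hF, ← Nat.card_eq_finsetCard F]
  refine Nat.card_eq_of_bijective (fun t => ⟨(M41Div (8 * j) t.1.1 t.1.2.1, t.1.2.2), ?_⟩) ⟨?_, ?_⟩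
  · obtain ⟨⟨v, z, x, y⟩, h1, h2, h3, h4, h5, h6, h7, h8, hx, hy⟩ := t
    simp only [F, Finset.mem_product, Finset.mem_insert, Finset.mem_singleton]
    exact ⟨M41_mem j v z ⟨h1, h2, h3, h4, h5, h6, h7, h8⟩, hx, hy⟩
  · rintro ⟨⟨v, z, p⟩, h1, h2, h3, h4, h5, h6, h7, h8, hq⟩
      ⟨⟨v', z', p'⟩, h1', h2', h3', h4', h5', h6', h7', h8', hq'⟩ e
    have e' := congrArg Subtype.val e
    simp only [Prod.mk.injEq] at e'
    obtain ⟨a, b⟩ := M41_inj j v z v' z' ⟨h1, h2, h3, h4, h5, h6, h7, h8⟩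
      ⟨h1', h2', h3', h4', h5', h6', h7', h8'⟩ e'.1
    have c := e'.2
    subst a b c
    rfl
  · rintro ⟨⟨d, x, y⟩, h⟩
    have h' := h
    simp only [F, Finset.mem_product, Finset.mem_insert, Finset.mem_singleton] at h'
    obtain ⟨hd, hx, hy⟩ := h'
    obtain ⟨v, z, ⟨h1, h2, h3, h4, h5, h6, h7, h8⟩, e⟩ := M41_surj j d (Nat.dvd_of_mem_divisors hd)
    refine ⟨⟨(v, z, x, y), h1, h2, h3, h4, h5, h6, h7, h8, hx, hy⟩, ?_⟩
    apply Subtype.ext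
    simp only [e]
end

section
/- Let k be a positive integer with 4 ∣ k and set k̄ = k+2. Then the number of triples (v,z,x) of integers with 1 ≤ v ≤ k̄/2, 2v ∣ k̄, k̄ ∣ 2v², 1 ≤ z ≤ 2v²/k̄, (2v²/k̄) ∣ (z²−1), and x ∈ {1,3}, equals d(k̄), where d(m) denotes the number of positive divisors of m. -/
lemma m42_key (n v z : ℕ) (hn : Odd n) (h1 : v ∣ n) (h2 : n ∣ v ^ 2) (hz : 1 ≤ z)
    (hd : v ^ 2 / n ∣ z ^ 2 - 1) :
    ∃ w a b, 0 < w ∧ 0 < a ∧ 0 < b ∧ n = w * w * (a * b) ∧ v = w * (a * b) ∧ v ^ 2 / n = a * b ∧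
      Nat.Coprime a b ∧ n / v = w ∧ a = Nat.gcd (v ^ 2 / n) (z - 1) ∧ a ∣ z - 1 ∧ b ∣ z + 1 := by
  have hn0 : 0 < n := hn.pos
  obtain ⟨w, rfl⟩ := h1
  have hv0 : 0 < v := Nat.pos_of_mul_pos_right hn0
  have hw0 : 0 < w := Nat.pos_of_mul_pos_left hn0
  have hwv : w ∣ v := by
    rw [pow_two] at h2
    exact Nat.dvd_of_mul_dvd_mul_left hv0 h2
  obtain ⟨m, rfl⟩ := hwv
  have hm0 : 0 < m := Nat.pos_of_mul_pos_left hv0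
  have hq : (w * m) ^ 2 / (w * m * w) = m := by
    apply Nat.div_eq_of_eq_mul_right hn0
    ring
  rw [hq] at hd ⊢
  have hmo : Odd m := by
    rw [Nat.odd_mul, Nat.odd_mul] at hn
    exact hn.1.2
  obtain ⟨y, rfl⟩ : ∃ y, z = y + 1 := ⟨z - 1, by omega⟩
  have hs : (y + 1) ^ 2 - 1 = y * (y + 2) := by
    have : (y + 1) ^ 2 = y * (y + 2) + 1 := by ring
    omega
  rw [hs] at hd
  have hc : Nat.Coprime (m.gcd y) (m.gcd (y + 2)) := by
    set g := Nat.gcd (m.gcd y) (m.gcd (y + 2)) with hg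
    have g1 : g ∣ m := (Nat.gcd_dvd_left _ _).trans (Nat.gcd_dvd_left _ _)
    have g2 : g ∣ y := (Nat.gcd_dvd_left _ _).trans (Nat.gcd_dvd_right _ _)
    have g3 : g ∣ y + 2 := (Nat.gcd_dvd_right _ _).trans (Nat.gcd_dvd_right _ _)
    have g4 : g ∣ 2 := (Nat.dvd_add_right g2).1 g3
    have h5 : Nat.Coprime m 2 := hmo.coprime_two_right
    exact Nat.eq_one_of_dvd_coprimes h5 g1 g4
  have hab : m.gcd y * m.gcd (y + 2) = m := by
    apply Nat.dvd_antisymm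
    · exact hc.mul_dvd_of_dvd_of_dvd (Nat.gcd_dvd_left _ _) (Nat.gcd_dvd_left _ _)
    · have := Nat.gcd_mul_right_dvd_mul_gcd m y (y + 2)
      rwa [Nat.gcd_eq_left hd] at this
  refine ⟨w, m.gcd y, m.gcd (y + 2), hw0, Nat.gcd_pos_of_pos_left _ hm0,
    Nat.gcd_pos_of_pos_left _ hm0, ?_, ?_, hab.symm, hc, ?_, ?_, ?_, ?_⟩
  · rw [hab]; ring
  · rw [hab]
  · exact Nat.mul_div_cancel_left _ hv0
  · simp
  · simpa using Nat.gcd_dvd_right m y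
  · exact Nat.gcd_dvd_right m (y + 2)

lemma m42_inj (n v z v' z' : ℕ) (hn : Odd n) (h1 : v ∣ n) (h2 : n ∣ v ^ 2) (hz : 1 ≤ z)
    (hzl : z ≤ v ^ 2 / n) (hd : v ^ 2 / n ∣ z ^ 2 - 1)
    (h1' : v' ∣ n) (h2' : n ∣ v' ^ 2) (hz' : 1 ≤ z')
    (hzl' : z' ≤ v' ^ 2 / n) (hd' : v' ^ 2 / n ∣ z' ^ 2 - 1)
    (he : n / v * Nat.gcd (v ^ 2 / n) (z - 1) = n / v' * Nat.gcd (v' ^ 2 / n) (z' - 1)) :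
    v = v' ∧ z = z' := by
  obtain ⟨w, a, b, w0, a0, b0, e1, e2, e3, c, e4, e5, da, db⟩ := m42_key n v z hn h1 h2 hz hd
  obtain ⟨w', a', b', w0', a0', b0', e1', e2', e3', c', e4', e5', da', db'⟩ :=
    m42_key n v' z' hn h1' h2' hz' hd'
  rw [← e5, ← e5', e4, e4'] at he
  have hb : w * b = w' * b' := by
    have : (w * a) * (w * b) = (w * a) * (w' * b') := by
      calc (w * a) * (w * b) = n := by rw [e1]; ring
        _ = (w' * a') * (w' * b') := by rw [e1']; ring
        _ = _ := by rw [he]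
    exact Nat.eq_of_mul_eq_mul_left (by positivity) this
  have hw : w = w' := by
    have t1 : Nat.gcd (w * a) (w * b) = w := by rw [Nat.gcd_mul_left, c, mul_one]
    have t2 : Nat.gcd (w' * a') (w' * b') = w' := by rw [Nat.gcd_mul_left, c', mul_one]
    rw [← t1, he, hb, t2]
  subst hw
  have ha := Nat.eq_of_mul_eq_mul_left w0 he
  have hb := Nat.eq_of_mul_eq_mul_left w0 hb
  subst ha hb
  refine ⟨by rw [e2, e2'], ?_⟩
  rw [e3] at hzl
  rw [e3'] at hzl'
  have k1 : (a : ℤ) ∣ z - z' := by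
    have p : (a : ℤ) ∣ ((z - 1 : ℕ) : ℤ) := by exact_mod_cast da
    have q : (a : ℤ) ∣ ((z' - 1 : ℕ) : ℤ) := by exact_mod_cast da'
    have := dvd_sub p q
    push_cast [hz, hz'] at this
    simpa using this
  have k2 : (b : ℤ) ∣ z - z' := by
    have p : (b : ℤ) ∣ ((z + 1 : ℕ) : ℤ) := by exact_mod_cast db
    have q : (b : ℤ) ∣ ((z' + 1 : ℕ) : ℤ) := by exact_mod_cast db'
    have := dvd_sub p q
    push_cast at this
    simpa using this
  have k3 : ((a : ℤ) * b) ∣ z - z' :=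
    IsCoprime.mul_dvd (Nat.isCoprime_iff_coprime.2 c) k1 k2
  have k4 : (z : ℤ) - z' = 0 := by
    apply Int.eq_zero_of_abs_lt_dvd k3
    have : (z : ℤ) ≤ a * b := by exact_mod_cast hzl
    have : (z' : ℤ) ≤ a * b := by exact_mod_cast hzl'
    rw [abs_lt]; constructor <;> omega
  omega

lemma m42_surj (n d : ℕ) (hn : Odd n) (hd : d ∣ n) : ∃ v z, v ∣ n ∧ n ∣ v ^ 2 ∧ 1 ≤ z ∧
    z ≤ v ^ 2 / n ∧ v ^ 2 / n ∣ z ^ 2 - 1 ∧ 1 ≤ v ∧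
    n / v * Nat.gcd (v ^ 2 / n) (z - 1) = d := by
  have hn0 := hn.pos
  obtain ⟨e, rfl⟩ := hd
  have d0 : 0 < d := Nat.pos_of_mul_pos_right hn0
  obtain ⟨w, a, b, w0, c, rfl, rfl⟩ : ∃ w a b, 0 < w ∧ Nat.Coprime a b ∧ d = a * w ∧ e = b * w := by
    obtain ⟨a, b, h⟩ := Nat.exists_coprime d e
    exact ⟨d.gcd e, a, b, Nat.gcd_pos_of_pos_left _ d0, h⟩
  have a0 : 0 < a := Nat.pos_of_mul_pos_right d0
  have hbw : 0 < b * w := Nat.pos_of_mul_pos_left hn0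
  have b0 : 0 < b := Nat.pos_of_mul_pos_right hbw
  have hbo : Odd b := by
    rw [Nat.odd_mul, Nat.odd_mul, Nat.odd_mul] at hn
    exact hn.2.1
  have ab0 : 0 < a * b := by positivity
  -- y = z - 1
  obtain ⟨y0, y1, y2⟩ := Nat.chineseRemainder c 0 (2 * b - 2)
  set y := y0 % (a * b) with hy
  have hya : a ∣ y := by
    rw [hy, Nat.dvd_mod_iff (Dvd.intro _ rfl)]
    exact (Nat.modEq_zero_iff_dvd).1 y1
  have hyb : b ∣ y + 2 := by
    have t : y ≡ y0 [MOD b] := (Nat.mod_modEq y0 (a * b)).of_mul_left a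
    have t2 := (t.trans y2).add_right 2
    have t3 : 2 * b - 2 + 2 = 2 * b := by omega
    rw [t3] at t2
    exact (Nat.modEq_zero_iff_dvd).1 (t2.trans (Nat.modEq_zero_iff_dvd.2 (Dvd.intro_left _ rfl)))
  have hyl : y < a * b := Nat.mod_lt _ ab0
  have hq : (w * (a * b)) ^ 2 / (a * w * (b * w)) = a * b := by
    apply Nat.div_eq_of_eq_mul_right hn0
    ring
  have hq2 : a * w * (b * w) / (w * (a * b)) = w := by
    apply Nat.div_eq_of_eq_mul_right (by positivity)
    ring
  refine ⟨w * (a * b), y + 1, ⟨w, by ring⟩, ⟨a * b, by ring⟩, by omega, ?_, ?_, by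
    have : 0 < w * (a * b) := by positivity
    omega, ?_⟩
  · rw [hq]; omega
  · rw [hq]
    have : (y + 1) ^ 2 = y * (y + 2) + 1 := by ring
    rw [this, Nat.add_sub_cancel]
    exact mul_dvd_mul hya hyb
  · rw [hq, hq2, Nat.add_sub_cancel, mul_comm a w]
    congr 1
    apply Nat.dvd_antisymm
    · have hcb : Nat.Coprime ((a * b).gcd y) b := by
        set g := Nat.gcd ((a * b).gcd y) b with hg
        have g2 : g ∣ y := (Nat.gcd_dvd_left _ _).trans (Nat.gcd_dvd_right _ _)
        have g3 : g ∣ b := Nat.gcd_dvd_right _ _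
        have g4 : g ∣ 2 := (Nat.dvd_add_right g2).1 (g3.trans hyb)
        exact Nat.eq_one_of_dvd_coprimes hbo.coprime_two_right g3 g4
      exact hcb.dvd_of_dvd_mul_right (Nat.gcd_dvd_left _ _)
    · exact Nat.dvd_gcd (Dvd.intro _ rfl) hya

/-- for `4 ∣ k`, the number of triples `(v,z,x)` parametrising the
physical invariants `M^{4,2}[v,z,x]` equals `d(k̄)`. -/
theorem count_M42 (k : ℕ) (hk : 4 ∣ k) (hk0 : 0 < k) :
    Nat.card {t : ℕ × ℕ × ℕ //
        1 ≤ t.1 ∧ t.1 ≤ (k + 2) / 2 ∧ 2 * t.1 ∣ (k + 2) ∧ (k + 2) ∣ 2 * t.1 ^ 2 ∧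
        1 ≤ t.2.1 ∧ t.2.1 ≤ 2 * t.1 ^ 2 / (k + 2) ∧
        (2 * t.1 ^ 2 / (k + 2)) ∣ (t.2.1 ^ 2 - 1) ∧
        (t.2.2 = 1 ∨ t.2.2 = 3)}
      = (k + 2).divisors.card := by
  obtain ⟨j, rfl⟩ := hk
  obtain ⟨n, hn, hno⟩ : ∃ n, 4 * j + 2 = 2 * n ∧ Odd n := ⟨2 * j + 1, by ring, by simp⟩
  rw [hn]
  have n0 := hno.pos
  have hr : (2 * n).divisors.card = Nat.card (n.divisors ×ˢ ({1, 3} : Finset ℕ) : Finset (ℕ × ℕ)) := by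
    rw [Nat.Coprime.card_divisors_mul hno.coprime_two_left, Nat.card_eq_fintype_card,
      Fintype.card_coe, Finset.card_product, mul_comm]
    rfl
  rw [hr]
  simp only [Nat.mul_div_mul_left _ _ (Nat.zero_lt_two), Nat.mul_dvd_mul_iff_left (Nat.zero_lt_two)]
  refine Nat.card_eq_of_bijective (fun t => ⟨(n / t.1.1 * Nat.gcd (t.1.1 ^ 2 / n) (t.1.2.1 - 1),
    t.1.2.2), ?_⟩) ⟨?_, ?_⟩
  · obtain ⟨⟨v, z, x⟩, h0, -, h1, h2, hz, hzl, hd, hx⟩ := t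
    obtain ⟨w, a, b, w0, a0, b0, e1, e2, e3, c, e4, e5, da, db⟩ := m42_key n v z hno h1 h2 hz hd
    simp only [Finset.mem_product, Nat.mem_divisors, Finset.mem_insert, Finset.mem_singleton]
    refine ⟨⟨?_, n0.ne'⟩, hx⟩
    try simp only
    rw [← e5, e4]
    exact ⟨w * b, by rw [e1]; ring⟩
  · rintro ⟨⟨v, z, x⟩, h0, h0l, h1, h2, hz, hzl, hd, hx⟩
      ⟨⟨v', z', x'⟩, h0', h0l', h1', h2', hz', hzl', hd', hx'⟩ h
    simp only [Subtype.mk.injEq, Prod.mk.injEq] at h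
    obtain ⟨rfl, rfl⟩ := m42_inj n v z v' z' hno h1 h2 hz hzl hd h1' h2' hz' hzl' hd' h.1
    simp [h.2]
  · rintro ⟨⟨d, x⟩, h⟩
    simp only [Finset.mem_product, Nat.mem_divisors, Finset.mem_insert,
      Finset.mem_singleton] at h
    obtain ⟨v, z, h1, h2, hz, hzl, hd, h0, he⟩ := m42_surj n d hno h.1.1
    refine ⟨⟨(v, z, x), h0, ?_, h1, h2, hz, hzl, hd, h.2⟩, ?_⟩
    · have := Nat.le_of_dvd n0 h1
      try simp only
      omega
    · simp [he]
end

section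
/- Let k be a positive integer with 4 ∣ k and set k̄ = k+2. Then the number of triples (v,z,n) of integers with 1 ≤ v ≤ k̄/2, 2v ∣ k̄, k̄ ∣ 2v², 1 ≤ z ≤ 8v²/k̄, (4v²/k̄) ∣ (z²−1), and n ∈ {0,1}, equals 2·d(k̄), where d(m) denotes the number of positive divisors of m. (Note that 4v²/k̄ ∈ ℤ follows from k̄ ∣ 2v².) -/
def UU (N : ℕ) : Finset ℕ := N.divisors.filter (fun a => Nat.Coprime a (N / a))

lemma count_x (N : ℕ) (hN : 0 < N) :
    ((Finset.Ico 0 (2 * N)).filter (fun x => N ∣ x * (x + 1))).card = 2 * (UU N).card := by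
  have key : ∀ x, N ∣ x * (x + 1) → Nat.gcd N x * Nat.gcd N (x + 1) = N := by
    intro x hx
    have hc : Nat.Coprime x (x + 1) := by simp
    rw [← Nat.Coprime.gcd_mul N hc]
    exact Nat.gcd_eq_left hx
  rw [Finset.card_eq_sum_card_fiberwise (f := fun x => Nat.gcd N x) (t := UU N)]
  · rw [Finset.sum_const_nat (m := 2), mul_comm]
    intro a ha
    simp only [UU, Finset.mem_filter, Nat.mem_divisors] at ha
    obtain ⟨⟨⟨b, rfl⟩, -⟩, hc⟩ := ha
    have ha0 : 0 < a := Nat.pos_of_mul_pos_right hN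
    have hb0 : 0 < b := Nat.pos_of_mul_pos_left hN
    rw [Nat.mul_div_cancel_left _ ha0] at hc
    obtain ⟨c, hca, hcb⟩ := Nat.chineseRemainder hc 0 (b - 1)
    have hcb' : b ∣ c + 1 := by
      have := hcb.add_right 1
      rw [Nat.sub_add_cancel hb0] at this
      exact (Nat.modEq_zero_iff_dvd).1 (this.trans (by simp [Nat.ModEq]))
    have hca' : a ∣ c := (Nat.modEq_zero_iff_dvd).1 hca
    have : (((Finset.Ico 0 (2 * (a * b))).filter (fun x => a * b ∣ x * (x + 1))).filter
        (fun x => Nat.gcd (a * b) x = a)) =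
        (Finset.Ico 0 (2 * (a * b))).filter (fun x => x ≡ c [MOD (a * b)]) := by
      rw [Finset.filter_filter]
      apply Finset.filter_congr
      intro x _
      constructor
      · rintro ⟨h1, h2⟩
        have h3 := key x h1
        rw [h2] at h3
        have h4 : Nat.gcd (a * b) (x + 1) = b := Nat.eq_of_mul_eq_mul_left ha0 h3
        have h5 : a ∣ x := h2 ▸ Nat.gcd_dvd_right _ _
        have h6 : b ∣ x + 1 := by
          have := Nat.gcd_dvd_right (a * b) (x + 1)
          rwa [h4] at this
        rw [← Nat.modEq_and_modEq_iff_modEq_mul hc]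
        refine ⟨?_, ?_⟩
        · exact ((Nat.modEq_zero_iff_dvd).2 h5).trans ((Nat.modEq_zero_iff_dvd).2 hca').symm
        · exact Nat.ModEq.add_right_cancel' 1
            (((Nat.modEq_zero_iff_dvd).2 h6).trans ((Nat.modEq_zero_iff_dvd).2 hcb').symm)
      · intro h
        rw [← Nat.modEq_and_modEq_iff_modEq_mul hc] at h
        have h5 : a ∣ x := (h.1.dvd_iff dvd_rfl).2 hca'
        have h6 : b ∣ x + 1 := ((h.2.add_right 1).dvd_iff dvd_rfl).2 hcb'
        refine ⟨mul_dvd_mul h5 h6, ?_⟩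
        have hbx : Nat.Coprime b x := by
          have : Nat.Coprime (x + 1) x := by simp
          exact Nat.Coprime.coprime_dvd_left h6 this
        rw [Nat.Coprime.gcd_mul_right_cancel a hbx]
        exact Nat.gcd_eq_left h5
    rw [this]
    have h := Nat.count_modEq_card (2 * (a * b)) hN c
    rw [Nat.count_eq_card_filter_range, ← Nat.Ico_zero_eq_range, Nat.mul_div_cancel _ hN,
      Nat.mul_mod_left] at h
    simpa using h
  · intro x hx
    simp only [Finset.coe_filter, Set.mem_setOf_eq] at hx
    have h := key x hx.2
    simp only [UU, Finset.coe_filter, Set.mem_setOf_eq, Nat.mem_divisors]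
    have h1 : N / Nat.gcd N x = Nat.gcd N (x + 1) := by
      apply Nat.div_eq_of_eq_mul_right
      · exact Nat.gcd_pos_of_pos_left _ hN
      · exact h.symm
    refine ⟨⟨Nat.gcd_dvd_left _ _, hN.ne'⟩, ?_⟩
    rw [h1]
    have hc : Nat.Coprime x (x + 1) := by simp
    exact Nat.Coprime.coprime_dvd_left (Nat.gcd_dvd_right _ _)
      (Nat.Coprime.coprime_dvd_right (Nat.gcd_dvd_right _ _) hc)

lemma count_z (N : ℕ) (hN : Odd N) :
    ((Finset.Icc 1 (4 * N)).filter (fun z => 2 * N ∣ z ^ 2 - 1)).card = 2 * (UU N).card := by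
  rw [← count_x N hN.pos]
  symm
  have hsq : ∀ x, (2 * x + 1) ^ 2 - 1 = 2 * (2 * (x * (x + 1))) := by
    intro x
    have : (2 * x + 1) ^ 2 = 2 * (2 * (x * (x + 1))) + 1 := by ring
    omega
  have hiff : ∀ x, 2 * N ∣ (2 * x + 1) ^ 2 - 1 ↔ N ∣ x * (x + 1) := by
    intro x
    rw [hsq, Nat.mul_dvd_mul_iff_left (by norm_num)]
    exact (Nat.Coprime.dvd_mul_left (Nat.coprime_two_right.2 hN))
  apply Finset.card_bij (fun x _ => 2 * x + 1)
  · intro x hx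
    simp only [Finset.mem_filter, Finset.mem_Ico, Finset.mem_Icc] at hx ⊢
    exact ⟨by omega, (hiff x).2 hx.2⟩
  · intro x _ y _ h
    simpa using h
  · intro z hz
    simp only [Finset.mem_filter, Finset.mem_Ico, Finset.mem_Icc] at hz
    have hodd : Odd z := by
      by_contra h
      rw [Nat.not_odd_iff_even] at h
      obtain ⟨y, rfl⟩ := h
      have h2 : 2 ∣ (y + y) ^ 2 - 1 := dvd_trans (Dvd.intro _ rfl) hz.2
      have h3 : (y + y) ^ 2 = 2 * (2 * y ^ 2) := by ring
      have h4 : 0 < (y + y) ^ 2 := by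
        apply Nat.pow_pos; omega
      omega
    obtain ⟨x, rfl⟩ := hodd
    refine ⟨x, ?_, rfl⟩
    simp only [Finset.mem_filter, Finset.mem_Ico]
    exact ⟨by omega, (hiff x).1 hz.2⟩

lemma sum_U (m : ℕ) (hm : 0 < m) :
    ∑ v ∈ m.divisors.filter (fun v => m ∣ v ^ 2), (UU (v ^ 2 / m)).card = m.divisors.card := by
  symm
  have key : ∀ d ∈ m.divisors, ∃ e a b, 0 < e ∧ 0 < a ∧ 0 < b ∧ Nat.Coprime a b ∧ d = e * a ∧
      m = e * a * (e * b) ∧ Nat.gcd d (m / d) = e := by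
    intro d hd
    obtain ⟨⟨c, rfl⟩, -⟩ := Nat.mem_divisors.1 hd
    have hd0 : 0 < d := Nat.pos_of_mul_pos_right hm
    have hc0 : 0 < c := Nat.pos_of_mul_pos_left hm
    have hg : 0 < Nat.gcd d c := Nat.gcd_pos_of_pos_left _ hd0
    have h1 := Nat.mul_div_cancel' (Nat.gcd_dvd_left d c)
    have h2 := Nat.mul_div_cancel' (Nat.gcd_dvd_right d c)
    refine ⟨Nat.gcd d c, d / Nat.gcd d c, c / Nat.gcd d c, hg,
      Nat.div_pos (Nat.gcd_le_left _ hd0) hg, Nat.div_pos (Nat.gcd_le_right _ hc0) hg,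
      Nat.coprime_div_gcd_div_gcd hg, h1.symm, by rw [h1, h2], ?_⟩
    rw [Nat.mul_div_cancel_left _ hd0]
  rw [Finset.card_eq_sum_card_fiberwise (f := fun d => m / Nat.gcd d (m / d))
    (t := m.divisors.filter (fun v => m ∣ v ^ 2))]
  · apply Finset.sum_congr rfl
    intro v hv
    simp only [Finset.mem_filter, Nat.mem_divisors] at hv
    obtain ⟨⟨⟨e, hme⟩, -⟩, N, hN⟩ := hv
    have hv0 : 0 < v := Nat.pos_of_mul_pos_right (hme ▸ hm)
    have he0 : 0 < e := Nat.pos_of_mul_pos_left (hme ▸ hm)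
    have hvN : v = e * N := by
      apply Nat.eq_of_mul_eq_mul_left hv0
      rw [← pow_two, hN, hme]; ring
    have hN0 : 0 < N := Nat.pos_of_mul_pos_left (hvN ▸ hv0)
    have hdiv : v ^ 2 / m = N := by rw [hN, Nat.mul_div_cancel_left _ hm]
    rw [hdiv]
    symm
    apply Finset.card_bij (fun a _ => e * a)
    · intro a ha
      simp only [UU, Finset.mem_filter, Nat.mem_divisors] at ha
      obtain ⟨⟨⟨b, rfl⟩, -⟩, hc⟩ := ha
      have ha0 : 0 < a := Nat.pos_of_mul_pos_right hN0
      rw [Nat.mul_div_cancel_left _ ha0] at hc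
      have hm' : m = e * a * (e * b) := by rw [hme, hvN]; ring
      simp only [Finset.mem_filter, Nat.mem_divisors]
      refine ⟨⟨Dvd.intro _ hm'.symm, hm.ne'⟩, ?_⟩
      have : m / (e * a) = e * b := by
        rw [hm', Nat.mul_div_cancel_left _ (Nat.mul_pos he0 ha0)]
      rw [this, Nat.gcd_mul_left, hc.gcd_eq_one, mul_one, hme, Nat.mul_div_cancel _ he0]
    · intro a _ b _ h
      exact Nat.eq_of_mul_eq_mul_left he0 h
    · intro d hd
      simp only [Finset.mem_filter] at hd
      obtain ⟨e', a, b, he', ha, hb, hc, hd1, hm', hg⟩ := key d hd.1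
      have h2 := hd.2
      rw [hg] at h2
      have hem : m = v * e' := by
        rw [← h2, Nat.div_mul_cancel]
        rw [hm', mul_assoc]; exact Dvd.intro _ rfl
      have hee : e' = e := by
        apply Nat.eq_of_mul_eq_mul_left hv0
        rw [← hem, hme]
      subst hee
      have hNab : N = a * b := by
        have : e' * e' * N = e' * e' * (a * b) := by
          calc e' * e' * N = e' * N * e' := by ring
            _ = m := by rw [← hvN, ← hem]
            _ = _ := by rw [hm']; ring
        exact Nat.eq_of_mul_eq_mul_left (Nat.mul_pos he0 he0) this
      refine ⟨a, ?_, hd1.symm⟩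
      simp only [UU, Finset.mem_filter, Nat.mem_divisors]
      refine ⟨⟨Dvd.intro _ hNab.symm, hN0.ne'⟩, ?_⟩
      rw [hNab, Nat.mul_div_cancel_left _ ha]
      exact hc
  · intro d hd
    obtain ⟨e, a, b, he, ha, hb, hc, hd1, hm', hg⟩ := key d hd
    simp only [Finset.coe_filter, Set.mem_setOf_eq, Nat.mem_divisors]
    rw [hg]
    have : m / e = e * a * b := by
      rw [hm']
      apply Nat.div_eq_of_eq_mul_right he
      ring
    rw [this]
    refine ⟨⟨⟨e, by rw [hm']; ring⟩, hm.ne'⟩, ⟨a * b, by rw [hm']; ring⟩⟩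

/-- for `4 ∣ k`, the number of triples `(v,z,n)` parametrising the
physical invariants `M^{4,3}[v,z,n]` equals `2·d(k̄)`. -/
theorem count_M43 (k : ℕ) (hk : 4 ∣ k) (hk0 : 0 < k) :
    Nat.card {t : ℕ × ℕ × ℕ //
        1 ≤ t.1 ∧ t.1 ≤ (k + 2) / 2 ∧ 2 * t.1 ∣ (k + 2) ∧ (k + 2) ∣ 2 * t.1 ^ 2 ∧
        1 ≤ t.2.1 ∧ t.2.1 ≤ 8 * t.1 ^ 2 / (k + 2) ∧
        (4 * t.1 ^ 2 / (k + 2)) ∣ (t.2.1 ^ 2 - 1) ∧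
        t.2.2 ≤ 1}
      = 2 * (k + 2).divisors.card := by
  obtain ⟨m, hm, hmo⟩ : ∃ m, k + 2 = 2 * m ∧ Odd m := by
    obtain ⟨j, rfl⟩ := hk
    exact ⟨2 * j + 1, by ring, by simp⟩
  have hm0 : 0 < m := hmo.pos
  rw [hm]
  have hd : (2 * m).divisors.card = 2 * m.divisors.card := by
    rw [Nat.Coprime.card_divisors_mul (Nat.coprime_two_left.2 hmo)]
    rw [Nat.Prime.divisors Nat.prime_two]
    rfl
  rw [hd, ← sum_U m hm0]
  let V := m.divisors.filter (fun v => m ∣ v ^ 2)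
  let Z : ℕ → Finset ℕ := fun v =>
    (Finset.Icc 1 (4 * (v ^ 2 / m))).filter (fun z => 2 * (v ^ 2 / m) ∣ z ^ 2 - 1)
  let S : Finset (ℕ × ℕ × ℕ) := V.biUnion (fun v => {v} ×ˢ (Z v ×ˢ Finset.range 2))
  have hS : S.card = 2 * (2 * ∑ v ∈ V, (UU (v ^ 2 / m)).card) := by
    rw [Finset.card_biUnion, Finset.mul_sum, Finset.mul_sum]
    · apply Finset.sum_congr rfl
      intro v hv
      simp only [V, Finset.mem_filter, Nat.mem_divisors] at hv
      obtain ⟨⟨hvm, -⟩, N, hN⟩ := hv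
      have hNo : Odd (v ^ 2 / m) := by
        have : Odd (v ^ 2) := (Odd.of_dvd_nat hmo hvm).pow
        exact Odd.of_dvd_nat this (Nat.div_dvd_of_dvd ⟨N, hN⟩)
      rw [Finset.card_product, Finset.card_product, Finset.card_singleton, Finset.card_range,
        count_z _ hNo]
      ring
    · intro v _ w _ hvw
      rw [Function.onFun, Finset.disjoint_left]
      rintro ⟨a, b⟩ h1 h2
      simp only [Finset.mem_product, Finset.mem_singleton] at h1 h2
      exact hvw (h1.1.symm.trans h2.1)
  rw [← hS]
  refine Nat.subtype_card S ?_
  rintro ⟨v, z, n⟩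
  simp only [S, V, Z, Finset.mem_biUnion, Finset.mem_filter, Nat.mem_divisors,
    Finset.mem_product, Finset.mem_singleton, Finset.mem_Icc, Finset.mem_range]
  have h8 : m ∣ v ^ 2 → 8 * v ^ 2 / (2 * m) = 4 * (v ^ 2 / m) := by
    rintro ⟨N, hN⟩
    rw [hN, Nat.mul_div_cancel_left _ hm0]
    apply Nat.div_eq_of_eq_mul_right (by omega)
    ring
  have h4 : m ∣ v ^ 2 → 4 * v ^ 2 / (2 * m) = 2 * (v ^ 2 / m) := by
    rintro ⟨N, hN⟩
    rw [hN, Nat.mul_div_cancel_left _ hm0]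
    apply Nat.div_eq_of_eq_mul_right (by omega)
    ring
  rw [Nat.mul_dvd_mul_iff_left (by norm_num), Nat.mul_dvd_mul_iff_left (by norm_num)]
  constructor
  · rintro ⟨w, ⟨⟨h1, -⟩, h2⟩, rfl, ⟨h3, h5⟩, h6⟩
    rw [h8 h2, h4 h2]
    have := Nat.le_of_dvd hm0 h1
    exact ⟨Nat.pos_of_dvd_of_pos h1 hm0, by omega, h1, h2, h3.1, h3.2, h5, by omega⟩
  · rintro ⟨_, _, h1, h2, h3, h5, h6, h7⟩
    rw [h8 h2] at h5
    rw [h4 h2] at h6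
    exact ⟨v, ⟨⟨h1, hm0.ne'⟩, h2⟩, rfl, ⟨⟨h3, h5⟩, h6⟩, by omega⟩
end

section
/- Let k be a positive integer with 4 ∣ k+2, set k̄ = k+2, and write k̄ = 2^{2r+ε}·p with p odd, ε ∈ {0,1}, and r ≥ 1. Then the number of triples (v,z,n) of integers with 1 ≤ v ≤ k̄/2, 2v ∣ k̄, k̄ ∣ v², 1 ≤ z ≤ 2v²/k̄, (2v²/k̄) ∣ (z²−1), and n ∈ {0,1}, equals 2·(4r−3+ε)·d(p), where d(m) denotes the number of positive divisors of m. -/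
open Finset

/-- number of square roots of one modulo `N` -/
noncomputable def sqc (N : ℕ) : ℕ := Nat.card {x : ZMod N // x ^ 2 = 1}

theorem sqc_mul {a b : ℕ} (h : a.Coprime b) : sqc (a * b) = sqc a * sqc b := by
  unfold sqc
  rw [← Nat.card_prod]
  have e := ZMod.chineseRemainder h
  refine Nat.card_congr ?_
  refine (e.toEquiv.subtypeEquiv (q := fun y : ZMod a × ZMod b => y.1 ^ 2 = 1 ∧ y.2 ^ 2 = 1) ?_).trans
    (Equiv.subtypeProdEquivProd (p := fun x : ZMod a => x ^ 2 = 1) (q := fun x : ZMod b => x ^ 2 = 1))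
  intro x
  rw [← e.injective.eq_iff, map_pow, map_one, Prod.ext_iff]
  rfl

theorem sqc_one : sqc 1 = 1 := by
  unfold sqc
  rw [Nat.card_eq_fintype_card]; decide
theorem sqc_two : sqc 2 = 1 := by
  unfold sqc
  rw [Nat.card_eq_fintype_card]; decide
theorem sqc_four : sqc 4 = 2 := by
  unfold sqc
  rw [Nat.card_eq_fintype_card]; decide

theorem sqc_of_finset {N : ℕ} (s : Finset (ZMod N)) (h : ∀ x, x ^ 2 = 1 ↔ x ∈ s) : sqc N = #s := by
  unfold sqc
  rw [← Nat.card_eq_finsetCard]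
  exact Nat.card_congr (Equiv.subtypeEquivRight h)

theorem sqc_prime_pow {q b : ℕ} (hq : q.Prime) (h2 : q ≠ 2) (hb : b ≠ 0) : sqc (q ^ b) = 2 := by
  have hq2 : 2 < q := lt_of_le_of_ne hq.two_le (Ne.symm h2)
  have hqb : q ≤ q ^ b := Nat.le_self_pow hb q
  have two : ((2 : ℕ) : ZMod (q ^ b)) ≠ 0 := by
    intro h
    rw [ZMod.natCast_eq_zero_iff] at h
    have := Nat.le_of_dvd (by norm_num) h
    omega
  rw [sqc_of_finset ({1, -1} : Finset (ZMod (q ^ b))), Finset.card_pair]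
  · intro h
    apply two
    push_cast
    linear_combination h
  · intro x
    simp only [mem_insert, mem_singleton]
    constructor
    · intro hx
      obtain ⟨a, rfl⟩ := ZMod.intCast_surjective x
      have h1 : ((q ^ b : ℕ) : ℤ) ∣ (a - 1) * (a + 1) := by
        rw [← ZMod.intCast_zmod_eq_zero_iff_dvd]
        push_cast
        linear_combination hx
      have hqi : Prime (q : ℤ) := Nat.prime_iff_prime_int.mp hq
      push_cast at h1
      by_cases hd : (q : ℤ) ∣ a - 1
      · have hd' : ¬ (q : ℤ) ∣ a + 1 := by
          intro hd'
          have := dvd_sub hd' hd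
          have := Int.le_of_dvd (by ring_nf; norm_num) this
          ring_nf at this
          omega
        left
        have := hqi.pow_dvd_of_dvd_mul_right b hd' h1
        have h3 : ((a - 1 : ℤ) : ZMod (q ^ b)) = 0 := by
          rw [ZMod.intCast_zmod_eq_zero_iff_dvd]; exact_mod_cast this
        push_cast at h3
        linear_combination h3
      · right
        have := hqi.pow_dvd_of_dvd_mul_left b hd h1
        have h3 : ((a + 1 : ℤ) : ZMod (q ^ b)) = 0 := by
          rw [ZMod.intCast_zmod_eq_zero_iff_dvd]; exact_mod_cast this
        push_cast at h3
        linear_combination h3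
    · rintro (rfl | rfl) <;> ring

theorem sqc_two_pow (e : ℕ) : sqc (2 ^ (e + 3)) = 4 := by
  have hpos : 1 ≤ 2 ^ e := Nat.one_le_two_pow
  have key : ∀ n : ℕ, 0 < n → n < 2 ^ (e + 3) → ((n : ℕ) : ZMod (2 ^ (e + 3))) ≠ 0 := by
    intro n h0 h1 h
    rw [ZMod.natCast_eq_zero_iff] at h
    exact absurd (Nat.le_of_dvd h0 h) (by omega)
  have z2 := key 2 (by norm_num) (by rw [pow_add]; omega)
  have zh := key (2 ^ (e + 2)) (by positivity) (by rw [pow_add, pow_add]; omega)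
  have zh2 := key (2 ^ (e + 2) - 2) (by rw [pow_add]; omega) (by rw [pow_add, pow_add]; omega)
  rw [Nat.cast_sub (by rw [pow_add]; omega)] at zh2
  have zh3 := key (2 ^ (e + 2) + 2) (by positivity) (by rw [pow_add, pow_add]; omega)
  have hh : ((2 ^ (e + 3) : ℕ) : ZMod (2 ^ (e + 3))) = 0 := ZMod.natCast_self _
  have hsq : ((2 ^ (e + 2) : ℕ) : ZMod (2 ^ (e + 3))) ^ 2 = 0 := by
    have : ((2 ^ (e + 2) : ℕ) : ZMod (2 ^ (e + 3))) ^ 2 = ((2 ^ (e + 3) : ℕ) : ZMod (2 ^ (e + 3))) * 2 ^ (e + 1) := by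
      push_cast; ring
    rw [this, hh, zero_mul]
  have hdb : 2 * ((2 ^ (e + 2) : ℕ) : ZMod (2 ^ (e + 3))) = 0 := by
    rw [← hh]; push_cast; ring
  generalize hhd : ((2 ^ (e + 2) : ℕ) : ZMod (2 ^ (e + 3))) = h at *
  rw [Nat.cast_add, hhd] at zh3
  push_cast at z2 zh2 zh3
  rw [sqc_of_finset ({1, -1, 1 + h, -1 + h} : Finset (ZMod (2 ^ (e + 3)))),
    card_insert_of_notMem, card_insert_of_notMem, card_pair]
  · intro E; apply z2; linear_combination E
  · simp only [mem_insert, mem_singleton, not_or]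
    constructor
    · intro E; apply zh3; linear_combination -E
    · intro E; apply zh; linear_combination -E
  · simp only [mem_insert, mem_singleton, not_or]
    refine ⟨?_, ?_, ?_⟩
    · intro E; apply z2; linear_combination E
    · intro E; apply zh; linear_combination -E
    · intro E; apply zh2; linear_combination -E
  · intro x
    simp only [mem_insert, mem_singleton]
    constructor
    · intro hx
      obtain ⟨a, rfl⟩ := ZMod.intCast_surjective x
      have h1 : ((2 ^ (e + 3) : ℕ) : ℤ) ∣ a ^ 2 - 1 := by
        rw [← ZMod.intCast_zmod_eq_zero_iff_dvd]
        push_cast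
        linear_combination hx
      have ho : Odd a := by
        by_contra hne
        rw [Int.not_odd_iff_even] at hne
        obtain ⟨c, rfl⟩ := hne
        have h4 : (2 : ℤ) ∣ ((2 ^ (e + 3) : ℕ) : ℤ) := ⟨2 ^ (e + 2), by push_cast; ring⟩
        obtain ⟨d, hd⟩ := h4.trans h1
        ring_nf at hd
        omega
      obtain ⟨b, rfl⟩ := ho
      have h2 : (2 : ℤ) ^ (e + 1) ∣ b * (b + 1) := by
        have : (4 : ℤ) * 2 ^ (e + 1) ∣ 4 * (b * (b + 1)) := by
          convert h1 using 1
          · push_cast; ring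
          · ring
        exact (mul_dvd_mul_iff_left (by norm_num)).mp this
      have hlast : ∀ c : ℤ, (2 : ℤ) * (2 ^ (e + 1) * c) = 2 ^ (e + 2) * c := by intro c; ring
      have hpar : ∀ c : ℤ, h * (c : ZMod (2 ^ (e + 3))) = 0 ∨ h * (c : ZMod (2 ^ (e + 3))) = h := by
        intro c
        rcases Int.even_or_odd c with ⟨d, rfl⟩ | ⟨d, rfl⟩
        · left; push_cast; linear_combination (d : ZMod (2 ^ (e + 3))) * hdb
        · right; push_cast; linear_combination (d : ZMod (2 ^ (e + 3))) * hdb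
      push_cast at hhd
      rcases Int.even_or_odd b with hb | hb
      · have hodd : ¬ (2 : ℤ) ∣ b + 1 := by rw [← even_iff_two_dvd]; simpa [parity_simps] using hb
        obtain ⟨c, rfl⟩ := Int.prime_two.pow_dvd_of_dvd_mul_right _ hodd h2
        rw [hlast]
        push_cast
        rw [hhd]
        rcases hpar c with E | E <;> rw [E]
        · left; ring
        · right; right; left; ring
      · have hodd : ¬ (2 : ℤ) ∣ b := by rw [← even_iff_two_dvd]; simpa [parity_simps] using hb
        obtain ⟨c, hc⟩ := Int.prime_two.pow_dvd_of_dvd_mul_left _ hodd h2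
        have : 2 * b + 1 = 2 ^ (e + 2) * c - 1 := by rw [← hlast, ← hc]; ring
        rw [this]
        push_cast
        rw [hhd]
        rcases hpar c with E | E <;> rw [E]
        · right; left; ring
        · right; right; right; ring
    · rintro (rfl | rfl | rfl | rfl)
      · ring
      · ring
      · linear_combination hsq + hdb
      · linear_combination hsq - hdb

theorem sqc_two_mul_odd {b : ℕ} (h : Odd b) : sqc (2 * b) = sqc b := by
  rw [sqc_mul (Nat.coprime_two_left.mpr h), sqc_two, one_mul]

/-- `w ↦ sqc (2 w)` as an arithmetic function -/
noncomputable def ff : ArithmeticFunction ℕ := ⟨fun n => if n = 0 then 0 else sqc (2 * n), by simp⟩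

theorem ff_apply {n : ℕ} (h : n ≠ 0) : ff n = sqc (2 * n) := by
  show (if n = 0 then 0 else sqc (2 * n)) = _
  rw [if_neg h]

/-- indicator of nonzero squares -/
noncomputable def ss : ArithmeticFunction ℕ :=
  ⟨fun n => open Classical in if n ≠ 0 ∧ IsSquare n then 1 else 0, by simp⟩

open Classical in
theorem ss_apply {n : ℕ} (h : n ≠ 0) : ss n = if IsSquare n then 1 else 0 := by
  show (if n ≠ 0 ∧ IsSquare n then 1 else 0) = _
  simp [h]

theorem ff_mult : ff.IsMultiplicative := by
  rw [ArithmeticFunction.IsMultiplicative.iff_ne_zero]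
  refine ⟨by rw [ff_apply one_ne_zero, mul_one, sqc_two], ?_⟩
  intro m n hm hn h
  rw [ff_apply hm, ff_apply hn, ff_apply (mul_ne_zero hm hn)]
  rcases Nat.even_or_odd n with he | ho
  · have ho : Odd m := by
      by_contra hc
      rw [Nat.not_odd_iff_even] at hc
      have := Nat.dvd_gcd hc.two_dvd he.two_dvd
      rw [h.gcd_eq_one] at this
      omega
    rw [sqc_two_mul_odd ho, mul_left_comm, sqc_mul]
    exact Nat.Coprime.mul_right (Nat.coprime_two_right.mpr ho) h
  · rw [sqc_two_mul_odd ho, ← mul_assoc, sqc_mul]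
    exact Nat.Coprime.mul_left (Nat.coprime_two_left.mpr ho) h

theorem ss_mult : ss.IsMultiplicative := by
  rw [ArithmeticFunction.IsMultiplicative.iff_ne_zero]
  refine ⟨by rw [ss_apply one_ne_zero]; simp, ?_⟩
  intro m n hm hn h
  rw [ss_apply hm, ss_apply hn, ss_apply (mul_ne_zero hm hn)]
  have : IsSquare (m * n) ↔ IsSquare m ∧ IsSquare n := by
    constructor
    · rintro ⟨c, hc⟩
      rw [← pow_two] at hc
      constructor
      · obtain ⟨d, hd⟩ := exists_associated_pow_of_mul_eq_pow (by rw [Nat.isUnit_iff]; exact h) hc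
        exact ⟨d, by rw [← pow_two]; exact (associated_iff_eq.mp hd).symm⟩
      · rw [mul_comm] at hc
        obtain ⟨d, hd⟩ := exists_associated_pow_of_mul_eq_pow (by rw [Nat.isUnit_iff]; exact h.symm) hc
        exact ⟨d, by rw [← pow_two]; exact (associated_iff_eq.mp hd).symm⟩
    · rintro ⟨h1, h2⟩; exact h1.mul h2
  by_cases h1 : IsSquare m <;> by_cases h2 : IsSquare n <;> simp [this, h1, h2]

/-- the counting function -/
noncomputable def cc : ArithmeticFunction ℕ := ss * ff

theorem cc_mult : cc.IsMultiplicative := ss_mult.mul ff_mult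

theorem ss_pow {q : ℕ} (hq : q.Prime) (i : ℕ) : ss (q ^ i) = if Even i then 1 else 0 := by
  rw [ss_apply (pow_ne_zero _ hq.ne_zero)]
  have : IsSquare (q ^ i) ↔ Even i := by
    constructor
    · rintro ⟨c, hc⟩
      obtain ⟨j, -, rfl⟩ := (Nat.dvd_prime_pow hq).mp ⟨c, hc⟩
      rw [← pow_add] at hc
      exact ⟨j, Nat.pow_right_injective hq.two_le hc⟩
    · intro h; exact h.isSquare_pow q
  simp [this]

theorem cc_pow {q : ℕ} (hq : q.Prime) (b : ℕ) :
    cc (q ^ b) = ∑ i ∈ range (b + 1), (if Even i then 1 else 0) * ff (q ^ (b - i)) := by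
  rw [cc, ArithmeticFunction.mul_apply, Nat.sum_divisorsAntidiagonal (f := fun x y => ss x * ff y),
    Nat.sum_divisors_prime_pow hq]
  refine sum_congr rfl fun i hi => ?_
  rw [ss_pow hq, Nat.pow_div (by simpa [Nat.lt_succ_iff] using hi) hq.pos]

theorem cc_pow_step {q : ℕ} (hq : q.Prime) (b : ℕ) :
    cc (q ^ (b + 2)) = cc (q ^ b) + ff (q ^ (b + 2)) := by
  rw [cc_pow hq, cc_pow hq, sum_range_succ', sum_range_succ']
  simp [Nat.even_add_one, Nat.add_sub_add_right]

theorem cc_odd_pow {q : ℕ} (hq : q.Prime) (h2 : q ≠ 2) (b : ℕ) : cc (q ^ b) = b + 1 := by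
  have hf : ∀ j, ff (q ^ (j + 1)) = 2 := fun j => by
    rw [ff_apply (pow_ne_zero _ hq.ne_zero), sqc_two_mul_odd (hq.odd_of_ne_two h2).pow,
      sqc_prime_pow hq h2 (by omega)]
  induction b using Nat.twoStepInduction with
  | zero => simp [cc_mult.1]
  | one => rw [cc_pow hq]; have := hf 0; simp at this; simp [sum_range_succ, this]
  | more n ih _ => rw [cc_pow_step hq, ih, hf]

theorem cc_odd {p : ℕ} (hp : Odd p) : cc p = #p.divisors := by
  induction p using Nat.recOnPosPrimePosCoprime with
  | zero => simp at hp
  | one => simp [cc_mult.1]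
  | prime_pow q n hq hn =>
    have : q ≠ 2 := by
      rintro rfl
      rw [Nat.odd_pow_iff hn.ne'] at hp
      exact absurd hp (by decide)
    rw [cc_odd_pow hq this, Nat.divisors_prime_pow hq]; simp
  | coprime a b _ _ hab iha ihb =>
    rw [Nat.odd_mul] at hp
    rw [cc_mult.2 hab, iha hp.1, ihb hp.2, hab.card_divisors_mul]

theorem cc_two_pow (r ε : ℕ) (hε : ε ≤ 1) : cc (2 ^ (2 * r + ε)) = 4 * r + 1 + ε := by
  induction r with
  | zero =>
    interval_cases ε
    · simp [cc_mult.1]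
    · have h2 : ff 2 = 2 := by rw [ff_apply two_ne_zero]; exact sqc_four
      rw [cc_pow Nat.prime_two]; simp [sum_range_succ, h2]
  | succ r ih =>
    have : 2 * (r + 1) + ε = 2 * r + ε + 2 := by ring
    rw [this, cc_pow_step Nat.prime_two, ih, ff_apply (by positivity), ← pow_succ', sqc_two_pow]
    ring

theorem sqc_eq (N : ℕ) (hN : 0 < N) : #{z ∈ Icc 1 N | N ∣ z ^ 2 - 1} = sqc N := by
  have : NeZero N := ⟨hN.ne'⟩
  rw [sqc_of_finset ({x | x ^ 2 = 1} : Finset (ZMod N)) (by simp)]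
  have hiff : ∀ z : ℕ, 1 ≤ z → (N ∣ z ^ 2 - 1 ↔ (z : ZMod N) ^ 2 = 1) := by
    intro z hz
    rw [← ZMod.natCast_eq_zero_iff, Nat.cast_sub (Nat.one_le_pow _ _ hz), sub_eq_zero]
    push_cast; rfl
  refine card_bij (fun z _ => (z : ZMod N)) ?_ ?_ ?_
  · intro z hz
    simp only [mem_filter, mem_Icc] at hz
    simpa using (hiff z hz.1.1).mp hz.2
  · intro a ha b hb hab
    simp only [mem_filter, mem_Icc] at ha hb
    rw [ZMod.natCast_eq_natCast_iff] at hab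
    rcases le_total a b with h | h
    · have := (Nat.modEq_iff_dvd' h).mp hab
      have := Nat.eq_zero_of_dvd_of_lt this (by omega)
      omega
    · have := (Nat.modEq_iff_dvd' h).mp hab.symm
      have := Nat.eq_zero_of_dvd_of_lt this (by omega)
      omega
  · intro x hx
    simp only [mem_filter, mem_univ, true_and] at hx
    have hlt := ZMod.val_lt x
    have hv : ((x.val : ℕ) : ZMod N) = x := ZMod.natCast_zmod_val x
    by_cases h0 : x.val = 0
    · have hN0 : ((N : ℕ) : ZMod N) = x := by rw [← hv, h0]; simp
      exact ⟨N, by simp only [mem_filter, mem_Icc]; refine ⟨⟨hN, le_rfl⟩, (hiff N hN).mpr (by rw [hN0, hx])⟩, hN0⟩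
    · exact ⟨x.val, by
        simp only [mem_filter, mem_Icc]
        exact ⟨⟨by omega, hlt.le⟩, (hiff _ (by omega)).mpr (by rw [hv, hx])⟩, hv⟩

theorem cc_eq_sum (K : ℕ) (hK : 0 < K) :
    ∑ v ∈ K.divisors with K ∣ v ^ 2, sqc (2 * (v ^ 2 / K)) = cc K := by
  classical
  have hr : cc K = ∑ x ∈ K.divisorsAntidiagonal with IsSquare x.1, sqc (2 * x.2) := by
    rw [cc, ArithmeticFunction.mul_apply, sum_filter]
    refine sum_congr rfl fun x hx => ?_
    have h := Nat.mem_divisorsAntidiagonal.mp hx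
    have h1 : x.1 ≠ 0 := by rintro h1; rw [h1] at h; omega
    have h2 : x.2 ≠ 0 := by rintro h2; rw [h2] at h; omega
    rw [ss_apply h1, ff_apply h2]
    split_ifs <;> simp
  rw [hr]
  -- for `v ∣ K ∣ v²` write `v = s w`, `K = s² w`
  have hform : ∀ v, v ∣ K → K ∣ v ^ 2 → ∃ s w, 0 < s ∧ 0 < w ∧ v = s * w ∧ K = s * w * s := by
    rintro v ⟨s, hs⟩ h
    have hv : 0 < v := Nat.pos_of_ne_zero (by rintro rfl; omega)
    have hs0 : 0 < s := Nat.pos_of_ne_zero (by rintro rfl; omega)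
    rw [hs, pow_two] at h
    obtain ⟨w, rfl⟩ := Nat.dvd_of_mul_dvd_mul_left hv h
    exact ⟨s, w, hs0, Nat.pos_of_mul_pos_left hv, rfl, hs⟩
  have hcalc : ∀ s w, 0 < s → 0 < w → (s * w * s) / (s * w) = s ∧ (s * w) ^ 2 / (s * w * s) = w := by
    intro s w hs hw
    refine ⟨Nat.mul_div_cancel_left _ (by positivity), ?_⟩
    rw [show (s * w) ^ 2 = s * w * s * w by ring]
    exact Nat.mul_div_cancel_left _ (by positivity)
  refine sum_bij (fun v _ => ((K / v) ^ 2, v ^ 2 / K)) ?_ ?_ ?_ ?_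
  · intro v hv
    simp only [mem_filter, Nat.mem_divisors] at hv
    obtain ⟨s, w, hs, hw, rfl, rfl⟩ := hform v hv.1.1 hv.2
    obtain ⟨e1, e2⟩ := hcalc s w hs hw
    simp only [mem_filter, Nat.mem_divisorsAntidiagonal, e1, e2]
    exact ⟨⟨by ring, hK.ne'⟩, ⟨s, by ring⟩⟩
  · intro v hv v' hv' h
    simp only [mem_filter, Nat.mem_divisors] at hv hv'
    simp only [Prod.mk.injEq] at h
    have h1 : K / v = K / v' := Nat.pow_left_injective two_ne_zero h.1
    have e1 := Nat.div_mul_cancel hv.1.1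
    have e2 := Nat.div_mul_cancel hv'.1.1
    rw [h1] at e1
    exact Nat.eq_of_mul_eq_mul_left (Nat.div_pos (Nat.le_of_dvd hK hv'.1.1) (Nat.pos_of_dvd_of_pos hv'.1.1 hK)) (e1.trans e2.symm)
  · rintro ⟨a, w⟩ h
    simp only [mem_filter, Nat.mem_divisorsAntidiagonal] at h
    obtain ⟨⟨h1, -⟩, s, rfl⟩ := h
    have hw : 0 < w := Nat.pos_of_ne_zero (by rintro rfl; omega)
    have hs : 0 < s := Nat.pos_of_ne_zero (by rintro rfl; omega)
    obtain rfl : s * w * s = K := by rw [← h1]; ring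
    obtain ⟨e1, e2⟩ := hcalc s w hs hw
    refine ⟨s * w, ?_, ?_⟩
    · simp only [mem_filter, Nat.mem_divisors]
      exact ⟨⟨⟨s, rfl⟩, hK.ne'⟩, ⟨w, by ring⟩⟩
    · rw [e1, e2, pow_two]
  · intro v hv; rfl

theorem count_M20 (k p r ε : ℕ) (hk : 4 ∣ k + 2) (hk0 : 0 < k)
    (hp : Odd p) (hr : 1 ≤ r) (hε : ε ≤ 1) (hdec : k + 2 = 2 ^ (2 * r + ε) * p) :
    Nat.card {t : ℕ × ℕ × ℕ //
        1 ≤ t.1 ∧ t.1 ≤ (k + 2) / 2 ∧ 2 * t.1 ∣ (k + 2) ∧ (k + 2) ∣ t.1 ^ 2 ∧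
        1 ≤ t.2.1 ∧ t.2.1 ≤ 2 * t.1 ^ 2 / (k + 2) ∧
        (2 * t.1 ^ 2 / (k + 2)) ∣ (t.2.1 ^ 2 - 1) ∧
        t.2.2 ≤ 1}
      = 2 * (4 * r - 3 + ε) * p.divisors.card := by
  obtain ⟨K, hK⟩ := hk
  have hKpos : 0 < K := by omega
  obtain ⟨r, rfl⟩ : ∃ r', r = r' + 1 := ⟨r - 1, by omega⟩
  have hKdec : K = 2 ^ (2 * r + ε) * p := by
    have : 4 * K = 4 * (2 ^ (2 * r + ε) * p) := by rw [← hK, hdec]; ring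
    omega
  have hcc : cc K = (4 * (r + 1) - 3 + ε) * #p.divisors := by
    rw [hKdec, cc_mult.2 (Nat.Coprime.pow_left _ (Nat.coprime_two_left.mpr hp)), cc_two_pow r ε hε,
      cc_odd hp]
    congr 1
  rw [mul_assoc, ← hcc, ← cc_eq_sum K hKpos]
  have hN : ∀ v ∈ ({v ∈ K.divisors | K ∣ v ^ 2} : Finset ℕ), sqc (2 * (v ^ 2 / K)) =
      #{z ∈ Icc 1 (2 * (v ^ 2 / K)) | 2 * (v ^ 2 / K) ∣ z ^ 2 - 1} := by
    intro v hv
    simp only [mem_filter, Nat.mem_divisors] at hv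
    have hv0 : 0 < v := Nat.pos_of_dvd_of_pos hv.1.1 hKpos
    rw [sqc_eq]
    have := Nat.div_pos (Nat.le_of_dvd (by positivity) hv.2) hKpos
    omega
  rw [sum_congr rfl hN, ← card_sigma]
  have h2 : ∀ m, 2 * m = m * #(range 2) := by intro m; rw [card_range, mul_comm]
  rw [h2 (#_), ← card_product, ← Nat.card_eq_finsetCard]
  have hdiv : ∀ v, K ∣ v ^ 2 → 2 * (2 * v) ^ 2 / (4 * K) = 2 * (v ^ 2 / K) := by
    rintro v ⟨c, hc⟩
    rw [hc, Nat.mul_div_cancel_left _ hKpos, mul_pow, hc,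
      show 2 * (2 ^ 2 * (K * c)) = 4 * K * (2 * c) by ring]
    exact Nat.mul_div_cancel_left _ (by omega)
  rw [hK]
  symm
  refine Nat.card_congr (Equiv.ofBijective
    (fun x => ⟨(2 * x.1.1.1, x.1.1.2, x.1.2), ?_⟩) ⟨?_, ?_⟩)
  · obtain ⟨⟨⟨v, z⟩, n⟩, hx⟩ := x
    simp only [mem_product, mem_sigma, mem_filter, Nat.mem_divisors, mem_Icc, mem_range] at hx
    obtain ⟨⟨⟨⟨h1, -⟩, h2⟩, ⟨h3, h4⟩, h5⟩, h6⟩ := hx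
    have hv0 : 0 < v := Nat.pos_of_dvd_of_pos h1 hKpos
    have hle := Nat.le_of_dvd hKpos h1
    simp only [hdiv v h2]
    refine ⟨by omega, by omega, ?_, ?_, h3, h4, h5, by omega⟩
    · rw [← mul_assoc]; exact mul_dvd_mul_left 4 h1
    · rw [mul_pow]; exact mul_dvd_mul_left 4 h2
  · rintro ⟨⟨⟨v, z⟩, n⟩, hx⟩ ⟨⟨⟨v', z'⟩, n'⟩, hx'⟩ h
    simp only [Subtype.mk.injEq, Prod.mk.injEq] at h
    obtain ⟨h1, rfl, rfl⟩ := h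
    obtain rfl : v = v' := by omega
    rfl
  · rintro ⟨⟨v, z, n⟩, h1, h2, h3, h4, h5, h6, h7, h8⟩
    dsimp only at h1 h2 h3 h4 h5 h6 h7 h8
    have hev : Even v := by
      have : Even (v ^ 2) := even_iff_two_dvd.mpr (dvd_trans ⟨2 * K, by ring⟩ h4)
      exact (Nat.even_pow.mp this).1
    obtain ⟨w, hw⟩ := hev
    obtain rfl : v = 2 * w := by omega
    have h3' : w ∣ K := by
      rw [← mul_assoc] at h3; exact Nat.dvd_of_mul_dvd_mul_left (k := 4) (by norm_num) h3
    have h4' : K ∣ w ^ 2 := by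
      rw [mul_pow] at h4; exact Nat.dvd_of_mul_dvd_mul_left (k := 4) (by norm_num) h4
    rw [hdiv w h4'] at h6 h7
    refine ⟨⟨(⟨w, z⟩, n), ?_⟩, rfl⟩
    simp only [mem_product, mem_sigma, mem_filter, Nat.mem_divisors, mem_Icc, mem_range]
    exact ⟨⟨⟨⟨h3', hKpos.ne'⟩, h4'⟩, ⟨h5, h6⟩, h7⟩, by omega⟩
end
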